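/- Let Q be an extended Dynkin quiver with minimal positive imaginary root δ, let λ ∈ K^I satisfy λ·δ = 0, and let 0 be an extending vertex (so δ_0 = 1). Then the ring of invariants K[μ_δ^{-1}(λ)]^{G(δ)} is generated, as a K-algebra, by the trace functions tr_p for oriented cycles p in Q̄ which start and end at the vertex 0. -/

import Mathlib

open scoped BigOperators

noncomputable section

/-- A quiver with a finite vertex set `I` and a finite arrow set `A`;
`h a` and `t a` are the head and the tail of the arrow `a`. -/
structure FinQuiver where
  I : Type
  [fintypeI : Fintype I]
  [decEqI : DecidableEq I]
  A : Type
  [fintypeA : Fintype A]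
  h : A → I
  t : A → I

attribute [instance] FinQuiver.fintypeI FinQuiver.decEqI FinQuiver.fintypeA

namespace FinQuiver

variable (Q : FinQuiver)

/-- Arrows of the double quiver `Q̄` : every arrow `a : i → j` of `Q` (as `Sum.inl a`)
together with a reverse arrow `a* : j → i` (as `Sum.inr a`). -/
@[reducible] def DA : Type := Q.A ⊕ Q.A

instance : Fintype Q.DA := inferInstanceAs (Fintype (Q.A ⊕ Q.A))

/-- Head of an arrow of the double quiver. -/
@[reducible] def dh : Q.DA → Q.I := fun a => match a with
  | Sum.inl a => Q.h a
  | Sum.inr a => Q.t a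

/-- Tail of an arrow of the double quiver. -/
@[reducible] def dt : Q.DA → Q.I := fun a => match a with
  | Sum.inl a => Q.t a
  | Sum.inr a => Q.h a

/-- The symmetric bilinear form
`(α,β) = ∑_{i∈I} 2 α_i β_i − ∑_{a∈Q̄} α_{h(a)} β_{t(a)}` on `ℤ^I`. -/
def bil (α β : Q.I → ℤ) : ℤ :=
  (∑ i, 2 * α i * β i) - ∑ a : Q.DA, α (Q.dh a) * β (Q.dt a)

/-- `p(α) = 1 − q(α) = 1 − α·α + ∑_{a ∈ Q} α_{t(a)} α_{h(a)}`. -/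
def pp (α : Q.I → ℤ) : ℤ :=
  1 - (∑ i, α i * α i) + ∑ a : Q.A, α (Q.t a) * α (Q.h a)

/-- The coordinate vector `ε_i` at a vertex `i`. -/
def ev (i : Q.I) : Q.I → ℤ := fun j => if j = i then 1 else 0

/-- The coordinate vector of a vertex, as a vector of natural numbers. -/
def evN (i : Q.I) : Q.I → ℕ := fun j => if j = i then 1 else 0

/-- A vertex is loopfree if no arrow has both its head and its tail there. -/
def Loopfree (i : Q.I) : Prop := ∀ a : Q.A, ¬ (Q.h a = i ∧ Q.t a = i)

/-- The reflection `s_i(α) = α − (α,ε_i) ε_i` at a (loopfree) vertex `i`. -/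
def refl (i : Q.I) (α : Q.I → ℤ) : Q.I → ℤ := α - Q.bil α (Q.ev i) • Q.ev i

/-- Two vertices are joined by some arrow. -/
def Adj (i j : Q.I) : Prop :=
  ∃ a : Q.A, (Q.h a = i ∧ Q.t a = j) ∨ (Q.h a = j ∧ Q.t a = i)

/-- The quiver is connected. -/
def Connected : Prop := ∀ i j : Q.I, Relation.ReflTransGen Q.Adj i j

/-- The support of the vector `α` is connected in `Q`. -/
def SuppConnected (α : Q.I → ℤ) : Prop :=
  ∀ i j : Q.I, α i ≠ 0 → α j ≠ 0 →
    Relation.ReflTransGen (fun x y => α x ≠ 0 ∧ α y ≠ 0 ∧ Q.Adj x y) i j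

/-- The fundamental region: nonzero nonnegative vectors with connected support
such that `(α, ε_i) ≤ 0` for every vertex `i`. -/
def InFund (α : Q.I → ℤ) : Prop :=
  α ≠ 0 ∧ (∀ i, 0 ≤ α i) ∧ Q.SuppConnected α ∧ ∀ i, Q.bil α (Q.ev i) ≤ 0

/-- The roots of the Kac root system attached to `Q` : the real roots form the orbit
of the simple roots (coordinate vectors at loopfree vertices) under the reflections at
loopfree vertices, and the imaginary roots form the orbit of `±(fundamental region)`
under these reflections. -/
inductive IsRoot : (Q.I → ℤ) → Prop
  | simple (i : Q.I) (hi : Q.Loopfree i) : IsRoot (Q.ev i)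
  | fund (α : Q.I → ℤ) (hα : Q.InFund α) : IsRoot α
  | neg_fund (α : Q.I → ℤ) (hα : Q.InFund α) : IsRoot (-α)
  | reflect (i : Q.I) (hi : Q.Loopfree i) (α : Q.I → ℤ) (hα : IsRoot α) :
      IsRoot (Q.refl i α)

/-- Positive roots: roots all of whose components are nonnegative. -/
def IsPosRoot (α : Q.I → ℤ) : Prop := Q.IsRoot α ∧ (∀ i, 0 ≤ α i) ∧ α ≠ 0

/-- The Tits form is positive semidefinite. -/
def PosSemidef : Prop := ∀ α : Q.I → ℤ, 0 ≤ Q.bil α α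

/-- The Tits form is positive definite. -/
def PosDef : Prop := Q.PosSemidef ∧ ∀ α : Q.I → ℤ, Q.bil α α = 0 → α = 0

/-- Dynkin quivers: connected, with positive definite Tits form. -/
def IsDynkin : Prop := Q.Connected ∧ Q.PosDef

/-- Extended Dynkin quivers: connected, with positive semidefinite but not
positive definite Tits form. -/
def IsExtDynkin : Prop := Q.Connected ∧ Q.PosSemidef ∧ ¬ Q.PosDef

/-- `δ` is the minimal positive imaginary root of an extended Dynkin quiver:
the minimal nonzero nonnegative vector in the radical of the Tits form. -/
def IsMinImag (δ : Q.I → ℤ) : Prop :=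
  (∀ i, 0 ≤ δ i) ∧ δ ≠ 0 ∧ (∀ i, Q.bil δ (Q.ev i) = 0) ∧
    ∀ β : Q.I → ℤ, (∀ i, 0 ≤ β i) → β ≠ 0 → (∀ i, Q.bil β (Q.ev i) = 0) →
      ∀ i, δ i ≤ β i

/-- The subquiver of `Q` on a subset `S` of vertices and a subset `B` of arrows. -/
def restrict (S : Set Q.I) (B : Set Q.A) (hh : ∀ a ∈ B, Q.h a ∈ S)
    (ht : ∀ a ∈ B, Q.t a ∈ S) : FinQuiver :=
  { I := S
    fintypeI := Fintype.ofFinite S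
    decEqI := Classical.decEq _
    A := B
    fintypeA := Fintype.ofFinite B
    h := fun a => ⟨Q.h a.1, hh a.1 a.2⟩
    t := fun a => ⟨Q.t a.1, ht a.1 a.2⟩ }

/-- The support quiver of a vector: the full subquiver on the support of `β`. -/
def suppQuiver (β : Q.I → ℤ) : FinQuiver :=
  Q.restrict {i | β i ≠ 0} {a | β (Q.h a) ≠ 0 ∧ β (Q.t a) ≠ 0}
    (fun _ ha => ha.1) (fun _ ha => ha.2)

/-- A dimension vector (of natural numbers), viewed in `ℤ^I`. -/
def toZ (α : Q.I → ℕ) : Q.I → ℤ := fun i => (α i : ℤ)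

/-- An oriented cycle in the double quiver `Q̄`, consisting of `n+1` arrows,
the tail of each arrow being the head of the (cyclically) next one. -/
structure Cyc (Q' : FinQuiver) where
  n : ℕ
  ar : Fin (n + 1) → Q'.DA
  compat : ∀ i : Fin (n + 1), Q'.dt (ar i) = Q'.dh (ar (i + 1))

section WithField

variable (K : Type) [Field K]

/-- `λ·α = ∑_i λ_i α_i`. -/
def pair (l : Q.I → K) (α : Q.I → ℤ) : K := ∑ i, l i * (α i : K)

/-- `R_λ^+`, the set of positive roots `α` with `λ·α = 0`. -/
def Rplus (l : Q.I → K) : Set (Q.I → ℤ) :=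
  {α | Q.IsPosRoot α ∧ Q.pair K l α = 0}

/-- `ℕ R_λ^+`, the set of sums (including the empty sum `0`) of elements of `R_λ^+`. -/
def NRplus (l : Q.I → K) : Set (Q.I → ℤ) :=
  (AddSubmonoid.closure (Q.Rplus K l) : AddSubmonoid (Q.I → ℤ))

/-- `Σ_λ` : the elements `α ∈ R_λ^+` with `p(α) > ∑ p(β⁽ᵗ⁾)` for every decomposition
of `α` as a sum of at least two elements `β⁽ᵗ⁾` of `R_λ^+`. -/
def SigmaSet (l : Q.I → K) : Set (Q.I → ℤ) :=
  {α | α ∈ Q.Rplus K l ∧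
    ∀ (n : ℕ) (β : Fin n → (Q.I → ℤ)), 2 ≤ n → (∀ j, β j ∈ Q.Rplus K l) →
      α = ∑ j, β j → (∑ j, Q.pp (β j)) < Q.pp α}

/-- The dual reflection `r_i(λ)_j = λ_j − (ε_i,ε_j) λ_i`. -/
def coRefl (i : Q.I) (l : Q.I → K) : Q.I → K :=
  fun j => l j - (Q.bil (Q.ev i) (Q.ev j) : ℤ) * l i

/-- A single admissible reflection applied to the pair `(λ, α)`:
a reflection at a loopfree vertex `i` with `λ_i ≠ 0`. -/
def AdmStep (x y : (Q.I → K) × (Q.I → ℤ)) : Prop :=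
  ∃ i : Q.I, Q.Loopfree i ∧ x.1 i ≠ 0 ∧ y.1 = Q.coRefl K i x.1 ∧ y.2 = Q.refl i x.2

/-- `(ν,β)` is obtained from `(λ,α)` by a sequence of admissible reflections:
the two pairs lie in the same class of the equivalence relation generated by
admissible reflections. -/
def AdmEquiv (x y : (Q.I → K) × (Q.I → ℤ)) : Prop :=
  Relation.EqvGen (Q.AdmStep K) x y

/-- The space `Rep(Q̄,α)` of representations of the double quiver. -/
def Rep (α : Q.I → ℕ) : Type :=
  ∀ a : Q.DA, Matrix (Fin (α (Q.dh a))) (Fin (α (Q.dt a))) K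

/-- The moment map
`μ_α(x)_i = ∑_{a∈Q, h(a)=i} x_a x_{a*} − ∑_{a∈Q, t(a)=i} x_{a*} x_a`. -/
def moment (α : Q.I → ℕ) (x : Q.Rep K α) (i : Q.I) :
    Matrix (Fin (α i)) (Fin (α i)) K :=
  (∑ a : Q.A, if h : Q.h a = i then
      (x (Sum.inl a) * x (Sum.inr a)).submatrix
        (Fin.cast (congrArg α h).symm) (Fin.cast (congrArg α h).symm)
    else 0)
  - ∑ a : Q.A, if h : Q.t a = i then
      (x (Sum.inr a) * x (Sum.inl a)).submatrix
        (Fin.cast (congrArg α h).symm) (Fin.cast (congrArg α h).symm)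
    else 0

/-- The fibre `μ_α^{-1}(λ)` of the moment map over (the central element
corresponding to) `λ`. -/
def MomentFiber (l : Q.I → K) (α : Q.I → ℕ) : Set (Q.Rep K α) :=
  {x | ∀ i : Q.I, Q.moment K α x i = l i • (1 : Matrix (Fin (α i)) (Fin (α i)) K)}

/-- The group `∏_i GL(α_i,K)`; it acts on `Rep(Q̄,α)` by conjugation, with the same
orbits and the same invariant functions as `G(α) = (∏_i GL(α_i,K))/K^*`. -/
def Gl (α : Q.I → ℕ) : Type := ∀ i : Q.I, Matrix.GeneralLinearGroup (Fin (α i)) K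

/-- The conjugation action of `∏_i GL(α_i,K)` on `Rep(Q̄,α)`. -/
def glAct (α : Q.I → ℕ) (g : Q.Gl K α) (x : Q.Rep K α) : Q.Rep K α :=
  fun a => (g (Q.dh a) : Matrix (Fin (α (Q.dh a))) (Fin (α (Q.dh a))) K) * x a *
    (((g (Q.dt a))⁻¹ : Matrix.GeneralLinearGroup (Fin (α (Q.dt a))) K) :
      Matrix (Fin (α (Q.dt a))) (Fin (α (Q.dt a))) K)

/-- Coordinates on `Rep(Q̄,α)`: matrix entries. -/
def Coords (α : Q.I → ℕ) : Type :=
  Σ a : Q.DA, Fin (α (Q.dh a)) × Fin (α (Q.dt a))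

/-- The coordinate ring `K[V]` of a subset `V` of `Rep(Q̄,α)` : the algebra of
`K`-valued functions on `V` which are restrictions of polynomial functions. -/
def fnRing (α : Q.I → ℕ) (V : Set (Q.Rep K α)) : Subalgebra K (↥V → K) :=
  (MvPolynomial.aeval
    (fun c : Q.Coords α => fun v : ↥V => v.1 c.1 c.2.1 c.2.2) :
    MvPolynomial (Q.Coords α) K →ₐ[K] (↥V → K)).range

end WithField

end FinQuiver

/-- The subalgebra of functions invariant under a relation (e.g. the orbit
relation of a group action). -/
def relInv (K : Type) [Field K] {V : Type} (R : V → V → Prop) :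
    Subalgebra K (V → K) where
  carrier := {f | ∀ x y : V, R x y → f x = f y}
  mul_mem' := by
    intro f g hf hg x y hxy
    simp only [Pi.mul_apply, hf x y hxy, hg x y hxy]
  one_mem' := fun x y _ => rfl
  add_mem' := by
    intro f g hf hg x y hxy
    simp only [Pi.add_apply, hf x y hxy, hg x y hxy]
  zero_mem' := fun x y _ => rfl
  algebraMap_mem' := fun c x y _ => rfl

namespace FinQuiver

variable (Q : FinQuiver) (K : Type) [Field K]

/-- The coordinate ring of the Marsden–Weinstein reduction
`N(λ,α) = μ_α^{-1}(λ) ⫽ G(α)` : the `G(α)`-invariant functions in the coordinate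
ring of `μ_α^{-1}(λ)`.  Two such reductions are isomorphic as (affine) varieties
exactly when these `K`-algebras are isomorphic. -/
def InvRing (l : Q.I → K) (α : Q.I → ℕ) :
    Subalgebra K (↥(Q.MomentFiber K l α) → K) :=
  Q.fnRing K α (Q.MomentFiber K l α) ⊓
    relInv K (fun x y : ↥(Q.MomentFiber K l α) =>
      ∃ g : Q.Gl K α, y.1 = Q.glAct K α g x.1)

/-- Index type for a product `∏_t X_t^{m_t}`. -/
@[reducible] def SymIdx (s : ℕ) (m : Fin s → ℕ) : Type := Σ t : Fin s, Fin (m t)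

/-- The product `∏_{t} Rep(Q̄, d_t)^{m_t}` of representation spaces. -/
def SymRep (s : ℕ) (m : Fin s → ℕ) (d : Fin s → (Q.I → ℕ)) : Type :=
  ∀ p : SymIdx s m, Q.Rep K (d p.1)

/-- The product `∏_t μ_{d_t}^{-1}(λ)^{m_t}` of moment map fibres. -/
def SymFiber (s : ℕ) (m : Fin s → ℕ) (d : Fin s → (Q.I → ℕ)) (l : Q.I → K) :
    Set (Q.SymRep K s m d) :=
  {x | ∀ p : SymIdx s m, x p ∈ Q.MomentFiber K l (d p.1)}

/-- Polynomial functions on the product of fibres. -/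
def symFnRing (s : ℕ) (m : Fin s → ℕ) (d : Fin s → (Q.I → ℕ)) (l : Q.I → K) :
    Subalgebra K (↥(Q.SymFiber K s m d l) → K) :=
  (MvPolynomial.aeval
    (fun c : Σ p : SymIdx s m, Q.Coords (d p.1) =>
      fun v : ↥(Q.SymFiber K s m d l) => v.1 c.1 c.2.1 c.2.2.1 c.2.2.2) :
    MvPolynomial (Σ p : SymIdx s m, Q.Coords (d p.1)) K →ₐ[K]
      (↥(Q.SymFiber K s m d l) → K)).range

/-- The componentwise action of the product of the groups `∏ GL(d_t)^{m_t}`. -/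
def symGlAct (s : ℕ) (m : Fin s → ℕ) (d : Fin s → (Q.I → ℕ))
    (g : ∀ p : SymIdx s m, Q.Gl K (d p.1)) (x : Q.SymRep K s m d) :
    Q.SymRep K s m d :=
  fun p => Q.glAct K (d p.1) (g p) (x p)

/-- The action of `∏_t S_{m_t}` permuting the factors of each `X_t^{m_t}`. -/
def symPermAct (s : ℕ) (m : Fin s → ℕ) (d : Fin s → (Q.I → ℕ))
    (π : ∀ t : Fin s, Equiv.Perm (Fin (m t))) (x : Q.SymRep K s m d) :
    Q.SymRep K s m d :=
  fun p => x ⟨p.1, π p.1 p.2⟩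

/-- The coordinate ring of the product of symmetric products
`∏_t S^{m_t} N(λ, d_t)` of Marsden–Weinstein reductions: functions on
`∏_t μ_{d_t}^{-1}(λ)^{m_t}` which are polynomial, invariant under all the groups
`G(d_t)` acting on the separate factors, and symmetric under permutations of the
`m_t` factors of each type `t`. -/
def SymInvRing (s : ℕ) (m : Fin s → ℕ) (d : Fin s → (Q.I → ℕ)) (l : Q.I → K) :
    Subalgebra K (↥(Q.SymFiber K s m d l) → K) :=
  Q.symFnRing K s m d l ⊓
    relInv K (fun x y : ↥(Q.SymFiber K s m d l) =>
      ∃ g : ∀ p : SymIdx s m, Q.Gl K (d p.1), y.1 = Q.symGlAct K s m d g x.1) ⊓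
    relInv K (fun x y : ↥(Q.SymFiber K s m d l) =>
      ∃ π : ∀ t : Fin s, Equiv.Perm (Fin (m t)), y.1 = Q.symPermAct K s m d π x.1)

/-- The trace function `tr_p` of an oriented cycle `p` in `Q̄` :
`tr_p(x) = tr(x_{a_1} ⋯ x_{a_ℓ})`, written out via matrix entries. -/
def cycTr (α : Q.I → ℕ) (p : Q.Cyc) (x : Q.Rep K α) : K :=
  ∑ c : ∀ i : Fin (p.n + 1), Fin (α (Q.dh (p.ar i))),
    ∏ i : Fin (p.n + 1),
      x (p.ar i) (c i) (Fin.cast (congrArg α (p.compat i)).symm (c (i + 1)))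

/-- `U` is a subrepresentation of the `Π^λ`-module given by the point
`x ∈ Rep(Q̄,α)` : a collection of subspaces stable under all the maps `x_a`. -/
def SubRep (α : Q.I → ℕ) (x : Q.Rep K α)
    (U : ∀ i : Q.I, Submodule K (Fin (α i) → K)) : Prop :=
  ∀ a : Q.DA, ∀ v ∈ U (Q.dt a), (x a).mulVec v ∈ U (Q.dh a)

/-- The module given by `x` has the simple module `S_{i₀}` (dimension vector
`ε_{i₀}`, all arrows acting as zero) as a composition factor: it has a subquotient
of dimension vector `ε_{i₀}` on which all arrows act as zero. -/
def HasSFactor (α : Q.I → ℕ) (i0 : Q.I) (x : Q.Rep K α) : Prop :=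
  ∃ U W : ∀ i : Q.I, Submodule K (Fin (α i) → K),
    Q.SubRep K α x U ∧ Q.SubRep K α x W ∧ (∀ i, U i ≤ W i) ∧
    (∀ i, Module.finrank K (W i) =
      Module.finrank K (U i) + (if i = i0 then 1 else 0)) ∧
    (∀ a : Q.DA, Q.dh a = i0 → Q.dt a = i0 →
      ∀ v ∈ W (Q.dt a), (x a).mulVec v ∈ U (Q.dh a))

/-- `W/U` is a simple subquotient of the module given by `x`; the simple
subquotients of a module are, up to isomorphism, exactly its composition factors. -/
def SimpleSubquot (α : Q.I → ℕ) (x : Q.Rep K α)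
    (U W : ∀ i : Q.I, Submodule K (Fin (α i) → K)) : Prop :=
  Q.SubRep K α x U ∧ Q.SubRep K α x W ∧ (∀ i, U i ≤ W i) ∧ U ≠ W ∧
    ∀ V : ∀ i : Q.I, Submodule K (Fin (α i) → K),
      Q.SubRep K α x V → (∀ i, U i ≤ V i) → (∀ i, V i ≤ W i) → V = U ∨ V = W

/-- The direct sum map `∏_{j=1}^m Rep(Q̄,δ) → Rep(Q̄,mδ)` (block diagonal). -/
def dsMap (δ : Q.I → ℕ) (m : ℕ) (y : Fin m → Q.Rep K δ) :
    Q.Rep K (fun i => m * δ i) :=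
  fun a => Matrix.of fun r c =>
    if (finProdFinEquiv.symm r).1 = (finProdFinEquiv.symm c).1 then
      y (finProdFinEquiv.symm r).1 a (finProdFinEquiv.symm r).2
        (finProdFinEquiv.symm c).2
    else 0

end FinQuiver

/-!
An invariant polynomial on tuples of block matrices over `ℚ` or an extension of it is a combination
of traces of words. Its polar form may be averaged over the rational points of the group: with
respect to the anisotropic form `(A, B) ↦ tr (A Bᵀ)` the projection to the invariants is orthogonal,
and the double centralizer argument shows that the commutant of the group on tensor space is spanned
by permutations of the tensor factors combined with projections to the vertices.

It remains to reduce a word of length `n` to words through the extending vertex. Assume that shorter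
words have been treated. A functional `φ` killing the subalgebra generated by the words through the
extending vertex sends words of length `n` to the values of a tracial functional; the deformation
parameter contributes only shorter words, so that this functional lives on the undeformed
preprojective algebra, and modulo the radical of its trace form the arrows at the extending vertex
are zero. The other vertices are now eliminated one at a time. As `δ` lies in the radical of the
Euler form, some remaining vertex has at most one remaining neighbour, and the preprojective
relation transports nilpotency of loops along the arms. At an isolated vertex loops with sum zero
are left whose orders of nilpotency are those of the arms of a diagram of type `D` or `E`, and their
relations force every tracial functional vanishing on the powers of each loop to vanish on all their
products.
-/

/-! ### Tracial functionals on algebras generated by nilpotent elements -/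

section TraceFunctional

variable {K B : Type*} [Field K] [Ring B] [Algebra K B]

/-- A tracial functional: a linear form `f` with `f (a b) = f (b a)`. -/
def IsTracial (f : B →ₗ[K] K) : Prop := ∀ a b, f (a * b) = f (b * a)

/-- `f` vanishes on all nonempty products of elements of `S`, encoded by the nonunital subalgebra
which they span. -/
def VanishesOn (f : B →ₗ[K] K) (S : Set B) : Prop := ∀ b ∈ NonUnitalAlgebra.adjoin K S, f b = 0

/-- `f` vanishes on all positive powers of `x`, as the trace does for nilpotent `x`. -/
def VanishesOnPowers (f : B →ₗ[K] K) (x : B) : Prop := ∀ k ≠ 0, f (x ^ k) = 0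

theorem VanishesOnPowers.neg {f : B →ₗ[K] K} {x : B} (h : VanishesOnPowers f x) :
    VanishesOnPowers f (-x) := fun k hk => by
  rw [neg_pow]
  obtain h' | h' := neg_one_pow_eq_or B k <;> simp [h', h k hk]

theorem mem_of_mem_adjoin_of_mul_mem {S : Set B} (N : Submodule K B) (hS : S ⊆ N)
    (hN : ∀ n ∈ N, ∀ s ∈ S, n * s ∈ N) {b : B} (hb : b ∈ NonUnitalAlgebra.adjoin K S) : b ∈ N := by
  suffices h : b ∈ N ∧ ∀ n ∈ N, n * b ∈ N from h.1
  induction hb using NonUnitalAlgebra.adjoin_induction with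
  | mem s hs => exact ⟨hS hs, fun n hn => hN n hn s hs⟩
  | add a b _ _ ha hb =>
    refine ⟨add_mem ha.1 hb.1, fun n hn => ?_⟩
    simpa only [mul_add] using add_mem (ha.2 n hn) (hb.2 n hn)
  | zero => exact ⟨zero_mem N, fun n _ => by simp⟩
  | mul a b _ _ ha hb =>
    exact ⟨hb.2 a ha.1, fun n hn => by simpa only [mul_assoc] using hb.2 _ (ha.2 n hn)⟩
  | smul c a _ ha =>
    exact ⟨N.smul_mem c ha.1, fun n hn => by
      simpa only [mul_smul_comm] using N.smul_mem c (ha.2 n hn)⟩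

theorem mul_eq_zero_of_mem_adjoin {S : Set B} {p : B} (h : ∀ s ∈ S, p * s = 0) {b : B}
    (hb : b ∈ NonUnitalAlgebra.adjoin K S) : p * b = 0 :=
  mem_of_mem_adjoin_of_mul_mem (LinearMap.ker (LinearMap.mulLeft K p)) h
    (fun n hn s _ => by simp_all [← mul_assoc]) hb

theorem mul_eq_zero_of_mem_adjoin' {S : Set B} {q : B} (h : ∀ s ∈ S, s * q = 0) {b : B}
    (hb : b ∈ NonUnitalAlgebra.adjoin K S) : b * q = 0 :=
  mem_of_mem_adjoin_of_mul_mem (LinearMap.ker (LinearMap.mulRight K q)) h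
    (fun n _ s hs => by simp [mul_assoc, h s hs]) hb

variable {f : B →ₗ[K] K}

namespace VanishesOn

theorem of_mul_mem_span {S T : Set B} (hS : S ⊆ Submodule.span K T)
    (hT : ∀ t ∈ T, ∀ s ∈ S, t * s ∈ Submodule.span K T) (hf : ∀ t ∈ T, f t = 0) :
    VanishesOn f S := by
  intro b hb
  have hspan : Submodule.span K T ≤ LinearMap.ker f := Submodule.span_le.2 hf
  refine hspan (mem_of_mem_adjoin_of_mul_mem _ hS (fun n hn s hs => ?_) hb)
  have : Submodule.span K T ≤ (Submodule.span K T).comap (LinearMap.mulRight K s) :=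
    Submodule.span_le.2 fun t ht => hT t ht s hs
  exact this hn

theorem of_subset_adjoin {S T : Set B} (hT : VanishesOn f T)
    (hST : S ⊆ NonUnitalAlgebra.adjoin K T) : VanishesOn f S :=
  fun b hb => hT b (NonUnitalAlgebra.adjoin_le hST hb)

theorem mono {S T : Set B} (hT : VanishesOn f T) (hST : S ⊆ T) : VanishesOn f S :=
  hT.of_subset_adjoin (hST.trans (NonUnitalAlgebra.subset_adjoin K))

theorem union {S T : Set B} (hS : VanishesOn f S) (hT : VanishesOn f T)
    (hST : ∀ s ∈ S, ∀ t ∈ T, s * t = 0) (hTS : ∀ t ∈ T, ∀ s ∈ S, t * s = 0) :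
    VanishesOn f (S ∪ T) := by
  have subS := NonUnitalAlgebra.subset_adjoin K (s := S)
  have subT := NonUnitalAlgebra.subset_adjoin K (s := T)
  refine of_mul_mem_span (T := NonUnitalAlgebra.adjoin K S ∪ NonUnitalAlgebra.adjoin K T)
    ((Set.union_subset_union subS subT).trans Submodule.subset_span) ?_ ?_
  · rintro a (ha | ha) s (hs | hs)
    · exact Submodule.subset_span (.inl (mul_mem ha (subS hs)))
    · rw [mul_eq_zero_of_mem_adjoin' (fun s' hs' => hST s' hs' s hs) ha]; exact zero_mem _
    · rw [mul_eq_zero_of_mem_adjoin' (fun t ht => hTS t ht s hs) ha]; exact zero_mem _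
    · exact Submodule.subset_span (.inr (mul_mem ha (subT hs)))
  · rintro a (ha | ha)
    exacts [hS a ha, hT a ha]

end VanishesOn

section Leaf

/-- The products of elements of `S ∪ {p, q}`, up to scalars, when `p q` is a multiple of an element
of `S` and `p s = s q = p p = q q = 0` for `s ∈ S`. -/
def leafProducts (K : Type*) {B : Type*} [Field K] [Ring B] [Algebra K B] (S : Set B) (p q : B) :
    Set B :=
  NonUnitalAlgebra.adjoin K S ∪ {b | ∃ a ∈ insert 1 (NonUnitalAlgebra.adjoin K S : Set B),
    b = q * a ∨ b = a * p ∨ b = q * a * p}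

variable {S : Set B} {p q y : B} {c : K}

theorem mul_mem_adjoin_of_mem_insert_one {a s : B}
    (ha : a ∈ insert 1 (NonUnitalAlgebra.adjoin K S : Set B)) (hs : s ∈ S) :
    a * s ∈ NonUnitalAlgebra.adjoin K S := by
  have hs' := NonUnitalAlgebra.subset_adjoin K hs
  obtain rfl | ha := ha
  exacts [by simpa using hs', mul_mem ha hs']

theorem mul_mem_span_leafProducts (hy : y ∈ S) (hpq : p * q = c • y) (pS : ∀ s ∈ S, p * s = 0)
    (Sq : ∀ s ∈ S, s * q = 0) (hpp : p * p = 0) (hqq : q * q = 0) {t s : B}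
    (ht : t ∈ leafProducts K S p q) (hs : s ∈ S ∪ {p, q}) :
    t * s ∈ Submodule.span K (leafProducts K S p q) := by
  have mem {b : B} (hb : b ∈ leafProducts K S p q) := Submodule.subset_span (R := K) hb
  have mul_S {a s} := mul_mem_adjoin_of_mem_insert_one (K := K) (S := S) (a := a) (s := s)
  have hAq : ∀ a ∈ NonUnitalAlgebra.adjoin K S, a * q = 0 := fun a =>
    mul_eq_zero_of_mem_adjoin' Sq
  obtain ht | ⟨a, ha, rfl | rfl | rfl⟩ := ht <;> obtain hs | rfl | rfl := hs
  · exact mem (.inl (mul_S (.inr ht) hs))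
  · exact mem (.inr ⟨t, .inr ht, .inr (.inl rfl)⟩)
  · simp [hAq t ht]
  · exact mem (.inr ⟨a * s, .inr (mul_S ha hs), .inl (mul_assoc _ _ _)⟩)
  · exact mem (.inr ⟨a, ha, .inr (.inr rfl)⟩)
  · obtain rfl | ha := ha
    exacts [by simp [hqq], by simp [mul_assoc, hAq a ha]]
  · simp [mul_assoc, pS s hs]
  · simp [mul_assoc, hpp]
  · rw [mul_assoc, hpq, mul_smul_comm]
    exact Submodule.smul_mem _ _ (mem (.inl (mul_S ha hy)))
  · simp [mul_assoc, pS s hs]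
  · simp [mul_assoc, hpp]
  · rw [mul_assoc, hpq, mul_smul_comm, mul_assoc]
    exact Submodule.smul_mem _ _ (mem (.inr ⟨a * y, .inr (mul_S ha hy), .inl rfl⟩))

theorem VanishesOn.union_pair (hf : IsTracial f) (hS : VanishesOn f S) (hy : y ∈ S)
    (hpq : p * q = c • y) (pS : ∀ s ∈ S, p * s = 0) (Sq : ∀ s ∈ S, s * q = 0) (hpp : p * p = 0)
    (hqq : q * q = 0) (hfp : f p = 0) (hfq : f q = 0) : VanishesOn f (S ∪ {p, q}) := by
  have mem {b : B} (hb : b ∈ leafProducts K S p q) := Submodule.subset_span (R := K) hb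
  refine of_mul_mem_span (T := leafProducts K S p q) ?_
    (fun t ht s hs => mul_mem_span_leafProducts hy hpq pS Sq hpp hqq ht hs) ?_
  · rintro s (hs | rfl | rfl)
    · exact mem (.inl (NonUnitalAlgebra.subset_adjoin K hs))
    · exact mem (.inr ⟨1, .inl rfl, .inr (.inl (one_mul _).symm)⟩)
    · exact mem (.inr ⟨1, .inl rfl, .inl (mul_one _).symm⟩)
  · rintro b (hb | ⟨a, ha, rfl | rfl | rfl⟩)
    · exact hS b hb
    · obtain rfl | ha := ha
      exacts [by simpa using hfq, by rw [hf, mul_eq_zero_of_mem_adjoin' Sq ha, map_zero]]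
    · obtain rfl | ha := ha
      exacts [by simpa using hfp, by rw [hf, mul_eq_zero_of_mem_adjoin pS ha, map_zero]]
    · rw [mul_assoc, hf, mul_assoc, hpq, mul_smul_comm, map_smul,
        hS _ (mul_mem_adjoin_of_mem_insert_one ha hy), smul_zero]

end Leaf

section Blocks

/-- The blocks `x y ^ j` with `0 < j < m`: if `x ^ 2 = 0` and `y ^ m = 0`, every nonzero word in
`x` and `y` in which both occur is, up to rotation, a product of blocks. -/
def blocks (x y : B) (m : ℕ) : Set B := {b | ∃ j, j ≠ 0 ∧ j < m ∧ b = x * y ^ j}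

variable {x y : B} {m : ℕ}

theorem mul_pow_mem_adjoin_blocks (hy : y ^ m = 0) {j : ℕ} (hj : j ≠ 0) :
    x * y ^ j ∈ NonUnitalAlgebra.adjoin K (blocks x y m) := by
  rcases lt_or_ge j m with hjm | hjm
  · exact NonUnitalAlgebra.subset_adjoin K ⟨j, hj, hjm, rfl⟩
  · rw [pow_eq_zero_of_le hjm hy, mul_zero]; exact zero_mem _

theorem mul_mem_adjoin_blocks (hy : y ^ m = 0) {a : B}
    (ha : a ∈ NonUnitalAlgebra.adjoin K (blocks x y m)) :
    a * y ∈ NonUnitalAlgebra.adjoin K (blocks x y m) := by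
  induction ha using NonUnitalAlgebra.adjoin_induction with
  | mem s hs =>
    obtain ⟨j, -, -, rfl⟩ := hs
    rw [mul_assoc, ← pow_succ]
    exact mul_pow_mem_adjoin_blocks hy j.succ_ne_zero
  | add a b _ _ ha hb => rw [add_mul]; exact add_mem ha hb
  | zero => rw [zero_mul]; exact zero_mem _
  | mul a b ha _ _ hb => rw [mul_assoc]; exact mul_mem ha hb
  | smul c a _ ha => rw [smul_mul_assoc]; exact SMulMemClass.smul_mem c ha

theorem VanishesOn.pair_of_blocks (hf : IsTracial f) (hx : x * x = 0) (hy : y ^ m = 0)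
    (hfx : f x = 0) (hfy : VanishesOnPowers f y) (h : VanishesOn f (blocks x y m)) :
    VanishesOn f {x, y} := by
  set A := NonUnitalAlgebra.adjoin K (blocks x y m)
  have mul_y {a} : a ∈ A → a * y ∈ A := mul_mem_adjoin_blocks hy
  have block {j} : j ≠ 0 → x * y ^ j ∈ A := mul_pow_mem_adjoin_blocks hy
  have mul_pow_y {a} (ha : a ∈ A) (i : ℕ) : a * y ^ i ∈ A := by
    induction i with
    | zero => simpa using ha
    | succ i ih => rw [pow_succ, ← mul_assoc]; exact mul_y ih
  have x_mul {a} : a ∈ A → x * a = 0 := mul_eq_zero_of_mem_adjoin (by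
    rintro _ ⟨j, -, -, rfl⟩; rw [← mul_assoc, hx, zero_mul])
  have xy : x * y ∈ A := by simpa using block one_ne_zero
  let T : Set B :=
    {b | ∃ i, b = y ^ (i + 1) ∨ b = y ^ i * x ∨ ∃ a ∈ A, b = y ^ i * a ∨ b = y ^ i * (a * x)}
  have mem {b : B} (hb : b ∈ T) : b ∈ Submodule.span K T := Submodule.subset_span hb
  refine of_mul_mem_span (T := T) ?_ ?_ ?_
  · rintro s (rfl | rfl)
    exacts [mem ⟨0, .inr (.inl (by simp))⟩, mem ⟨0, .inl (by simp)⟩]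
  · rintro t ⟨i, rfl | rfl | ⟨a, ha, rfl | rfl⟩⟩ s (rfl | rfl)
    · exact mem ⟨i + 1, .inr (.inl rfl)⟩
    · exact mem ⟨i + 1, .inl (pow_succ _ _).symm⟩
    · simp [mul_assoc, hx]
    · exact mem ⟨i, .inr (.inr ⟨_, xy, .inl (mul_assoc _ _ _)⟩)⟩
    · exact mem ⟨i, .inr (.inr ⟨a, ha, .inr (mul_assoc _ _ _)⟩)⟩
    · exact mem ⟨i, .inr (.inr ⟨_, mul_y ha, .inl (mul_assoc _ _ _)⟩)⟩
    · simp [mul_assoc, hx]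
    · exact mem ⟨i, .inr (.inr ⟨_, mul_mem ha xy, .inl (by simp only [mul_assoc])⟩)⟩
  · rintro t ⟨i, rfl | rfl | ⟨a, ha, rfl | rfl⟩⟩
    · exact hfy _ i.succ_ne_zero
    · rw [hf]
      rcases eq_or_ne i 0 with rfl | hi
      exacts [by simpa using hfx, h _ (block hi)]
    · rw [hf]; exact h _ (mul_pow_y ha i)
    · rw [← mul_assoc, hf, ← mul_assoc]
      rcases eq_or_ne i 0 with rfl | hi
      · rw [pow_zero, mul_one, x_mul ha, map_zero]
      · exact h _ (mul_mem (block hi) ha)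

end Blocks

section Expansions

variable {x y : B}

theorem add_pow_three_of_sq_of_cube (hx : x * x = 0) (hy : y * (y * y) = 0) :
    (x + y) ^ 3 = x * (y * x) + x * (y * y) + y * (x * y) + y * (y * x) := by
  simp only [pow_succ, pow_zero, one_mul, mul_add, add_mul, mul_assoc, hx, hy, mul_zero, zero_mul]
  abel

theorem add_pow_four_of_sq_of_cube (hx : x * x = 0) (hy : y * (y * y) = 0) :
    (x + y) ^ 4 = x * (y * (x * y)) + x * (y * (y * x)) + y * (x * (y * x)) + y * (x * (y * y)) +
      y * (y * (x * y)) := by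
  rw [pow_succ, add_pow_three_of_sq_of_cube hx hy]
  simp only [mul_add, add_mul, mul_assoc, hx, hy, mul_zero]
  abel

theorem add_pow_five_of_sq_of_cube (hx : x * x = 0) (hy : y * (y * y) = 0) :
    (x + y) ^ 5 = x * (y * (x * (y * x))) + x * (y * (x * (y * y))) + x * (y * (y * (x * y))) +
      y * (x * (y * (x * y))) + y * (x * (y * (y * x))) + y * (y * (x * (y * x))) +
      y * (y * (x * (y * y))) := by
  rw [pow_succ, add_pow_four_of_sq_of_cube hx hy]
  simp only [mul_add, add_mul, mul_assoc, hx, hy, mul_zero]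
  abel

theorem add_pow_two_mul_of_sq_eq_zero (hx : x ^ 2 = 0) (hy : y ^ 2 = 0) (k : ℕ) :
    (x + y) ^ (2 * (k + 1)) = (x * y) ^ (k + 1) + (y * x) ^ (k + 1) := by
  have hsq : (x + y) ^ 2 = x * y + y * x := by
    rw [sq, mul_add, add_mul, add_mul, ← sq x, ← sq y, hx, hy, zero_add, add_zero, add_comm]
  rw [sq] at hx hy
  rw [pow_mul, hsq]
  induction k with
  | zero => simp
  | succ k ih =>
    have h1 : (x * y) ^ (k + 1) * (y * x) = 0 := by
      rw [pow_succ, mul_assoc, mul_assoc x, ← mul_assoc y, hy, zero_mul, mul_zero, mul_zero]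
    have h2 : (y * x) ^ (k + 1) * (x * y) = 0 := by
      rw [pow_succ, mul_assoc, mul_assoc y, ← mul_assoc x, hx, zero_mul, mul_zero, mul_zero]
    rw [pow_succ, ih, mul_add, add_mul, add_mul, h1, h2, ← pow_succ, ← pow_succ, add_zero,
      zero_add]

end Expansions

namespace VanishesOn

variable {f : B →ₗ[K] K}

section Relations

variable {a b : B}

theorem pair_of_E6_relations [CharZero K] (hf : IsTracial f) (aaa : a * a * a = 0)
    (aab : a * a * b = 0) (ba : b * a = -(a * b)) (bb : b * b = 0) (ha : f a = 0) (hb : f b = 0)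
    (haa : f (a * a) = 0) : VanishesOn f {a, b} := by
  have hab : f (a * b) = 0 := by
    have : f (a * b) = -f (a * b) := by rw [← map_neg, ← ba, hf]
    exact self_eq_neg.1 this
  have aba : a * b * a = 0 := by rw [mul_assoc, ba, mul_neg, ← mul_assoc, aab, neg_zero]
  have abb : a * b * b = 0 := by rw [mul_assoc, bb, mul_zero]
  let T : Set B := {a, b, a * a, a * b}
  have mem {t : B} (ht : t ∈ T) : t ∈ Submodule.span K T := Submodule.subset_span ht
  refine of_mul_mem_span (T := T) ?_ ?_ ?_
  · rintro s (rfl | rfl)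
    exacts [mem (by simp [T]), mem (by simp [T])]
  · rintro t (rfl | rfl | rfl | rfl) s (rfl | rfl)
    · exact mem (by simp [T])
    · exact mem (by simp [T])
    · rw [ba]; exact neg_mem (mem (by simp [T]))
    all_goals simp [*]
  · rintro t (rfl | rfl | rfl | rfl) <;> assumption

theorem pair_of_E7_relations [CharZero K] (hf : IsTracial f) (aaa : a * a * a = -(b * b))
    (aab : a * a * b = 0) (aba : a * b * a = -(b * a * a)) (bab : b * a * b = -(a * b * b))
    (bba : b * b * a = a * b * b) (bbb : b * b * b = 0) (ha : f a = 0) (hb : f b = 0)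
    (haa : f (a * a) = 0) (hab : f (a * b) = 0) (hbb : f (b * b) = 0) : VanishesOn f {a, b} := by
  have habb : f (a * b * b) = 0 := by
    have : f (a * b * b) = -f (a * b * b) := by
      rw [← map_neg, ← bab, hf (b * a) b, ← mul_assoc, bba]
    exact self_eq_neg.1 this
  have hbaa : f (b * a * a) = 0 := by rw [mul_assoc, hf, aab, map_zero]
  have hba : f (b * a) = 0 := by rw [hf, hab]
  have abba : a * b * b * a = 0 := by
    rw [mul_assoc a b b, mul_assoc a, bba, ← mul_assoc, ← mul_assoc, aab, zero_mul]
  have abbb : a * b * b * b = 0 := by rw [mul_assoc a b b, mul_assoc a, bbb, mul_zero]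
  have baaa : b * a * a * a = 0 := by
    rw [mul_assoc b a a, mul_assoc b, aaa, mul_neg, ← mul_assoc, bbb, neg_zero]
  have baab : b * a * a * b = 0 := by rw [mul_assoc b a a, mul_assoc b, aab, mul_zero]
  let T : Set B := {a, b, a * a, a * b, b * a, b * b, a * b * b, b * a * a}
  have mem {t : B} (ht : t ∈ T) : t ∈ Submodule.span K T := Submodule.subset_span ht
  refine of_mul_mem_span (T := T) ?_ ?_ ?_
  · rintro s (rfl | rfl)
    exacts [mem (by simp [T]), mem (by simp [T])]
  · rintro t (rfl | rfl | rfl | rfl | rfl | rfl | rfl | rfl) s (rfl | rfl)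
    case inr.inr.inl.inl => rw [aaa]; exact neg_mem (mem (by simp [T]))
    case inr.inr.inr.inl.inl => rw [aba]; exact neg_mem (mem (by simp [T]))
    case inr.inr.inr.inr.inl.inr => rw [bab]; exact neg_mem (mem (by simp [T]))
    case inr.inr.inr.inr.inr.inl.inl => rw [bba]; exact mem (by simp [T])
    all_goals first | (refine mem ?_; simp [T]; done) | simp [*]
  · rintro t (rfl | rfl | rfl | rfl | rfl | rfl | rfl | rfl) <;> assumption

theorem mul_mul_mul_mul_comm_of_eq_neg (h : b * a * a = -(a * a * b + a * b * a)) :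
    b * a * a * a = a * a * a * b := by
  calc b * a * a * a = -(a * a * b + a * b * a) * a := by rw [h]
    _ = -(a * a * b * a) - a * (b * a * a) := by noncomm_ring
    _ = a * a * a * b := by rw [h]; noncomm_ring

theorem pow_five_mul_eq_zero_of_eq_neg (h : b * a * a = -(a * a * b + a * b * a))
    (h' : b * a * a * a * a * a = -(a * a * a * a * b * a)) : a ^ 5 * b = 0 := by
  calc a ^ 5 * b = -(a * a * a * a * b * a) - a * a * a * (b * a * a) := by
        rw [h]; noncomm_ring
    _ = 0 := by
        rw [← h', mul_mul_mul_mul_comm_of_eq_neg h]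
        simp only [mul_assoc, sub_self]

/-- The relations between `a = x y` and `b = x y ^ 2` implied by `x ^ 2 = 0`, `y ^ 3 = 0` and
`(x + y) ^ 5 = 0`. -/
structure E8Relations (a b : B) : Prop where
  bba : b * b * a = -(a * a * a * a)
  baa : b * a * a = -(a * a * b + a * b * a)
  bab : b * a * b = -(a * b * b)
  bbb : b * b * b = -(a * a * a * b)
  baab : b * a * a * b = 0
  a5b : a ^ 5 * b = 0

namespace E8Relations

theorem trace_pow_mul_mul_self [CharZero K] (h : E8Relations a b) (hf : IsTracial f)
    (hb : f (b * b) = 0) (i : ℕ) : f (a ^ i * (b * b)) = 0 := by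
  match i with
  | 0 => simpa using hb
  | 1 =>
    have : f (a * b * b) = -f (a * b * b) := by
      calc f (a * b * b) = f (b * a * b) := by rw [mul_assoc, hf, mul_assoc, hf]
        _ = -f (a * b * b) := by rw [h.bab, map_neg]
    simpa [mul_assoc] using self_eq_neg.1 this
  | 2 =>
    calc f (a ^ 2 * (b * b)) = f (b * a * a * b) := by rw [← mul_assoc, hf]; simp [sq, mul_assoc]
      _ = 0 := by rw [h.baab, map_zero]
  | 3 =>
    calc f (a ^ 3 * (b * b)) = -f (a * a * -(a * b * b)) := by simp [pow_succ, mul_assoc]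
      _ = -f (b * a * a * b * a) := by
        rw [← h.bab, ← mul_assoc, hf]; simp only [mul_assoc]
      _ = 0 := by rw [h.baab, zero_mul, map_zero, neg_zero]
  | 4 =>
    have h7 : f (a ^ 4 * (b * b)) = -f (a ^ 7) := by
      calc f (a ^ 4 * (b * b)) = f (a ^ 3 * (b * b * a)) := by
            rw [pow_succ', mul_assoc, hf, mul_assoc]
        _ = -f (a ^ 7) := by
          rw [h.bba, mul_neg, map_neg]
          simp only [pow_succ, mul_assoc, pow_zero, one_mul]
    have h7' : f (a ^ 4 * (b * b)) = f (a ^ 7) := by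
      calc f (a ^ 4 * (b * b)) = -f (a * a * a * -(a * b * b)) := by simp [pow_succ, mul_assoc]
        _ = -f (b * a * a * a * (b * a)) := by
          rw [← h.bab, ← mul_assoc, hf]; simp only [mul_assoc]
        _ = f (a ^ 7) := by
          rw [mul_mul_mul_mul_comm_of_eq_neg h.baa, mul_assoc, ← mul_assoc b b a, h.bba]
          simp [pow_succ, mul_assoc]
    rw [← h7'] at h7
    exact self_eq_neg.1 h7
  | i + 5 =>
    rw [pow_add, mul_assoc, ← mul_assoc (a ^ 5), h.a5b, zero_mul, mul_zero, map_zero]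

theorem trace_pow_mul [CharZero K] (h : E8Relations a b) (hf : IsTracial f)
    (hb : f b = 0) (hab : f (a * b) = 0) (i : ℕ) : f (a ^ i * b) = 0 := by
  match i with
  | 0 => simpa using hb
  | 1 => simpa using hab
  | i + 2 =>
    have h1 : f (a ^ i * (a * b * a)) = f (a ^ (i + 2) * b) := by
      rw [← mul_assoc, hf, ← mul_assoc, ← mul_assoc, ← pow_succ', ← pow_succ]
    have h2 : f (a ^ i * (b * a * a)) = f (a ^ (i + 2) * b) := by
      rw [mul_assoc, ← mul_assoc, hf, ← mul_assoc, ← sq, ← pow_add, add_comm]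
    have h3 : a ^ i * (a * a * b) = a ^ (i + 2) * b := by
      rw [← mul_assoc, ← sq, ← pow_add]
    rw [h.baa, mul_neg, map_neg, mul_add, map_add, h1, h3] at h2
    have : (3 : K) * f (a ^ (i + 2) * b) = 0 := by linear_combination -h2
    exact (mul_eq_zero.1 this).resolve_left three_ne_zero

theorem vanishesOn [CharZero K] (h : E8Relations a b) (hf : IsTracial f) (ha : f a = 0)
    (hb : f b = 0) (haa : f (a * a) = 0) (hab : f (a * b) = 0) (haaa : f (a * a * a) = 0)
    (hbb : f (b * b) = 0) : VanishesOn f {a, b} := by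
  have fbb := h.trace_pow_mul_mul_self hf hbb
  have fb := h.trace_pow_mul hf hb hab
  let T : Set B :=
    {t | ∃ i, t = a ^ (i + 1) ∨ t = a ^ i * b ∨ t = a ^ i * (b * a) ∨ t = a ^ i * (b * b)}
  have mem {t : B} (ht : t ∈ T) : t ∈ Submodule.span K T := Submodule.subset_span ht
  refine of_mul_mem_span (T := T) ?_ ?_ ?_
  · rintro s (rfl | rfl)
    exacts [mem ⟨0, .inl (by simp)⟩, mem ⟨0, .inr (.inl (by simp))⟩]
  · rintro t ⟨i, rfl | rfl | rfl | rfl⟩ s (rfl | rfl)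
    · exact mem ⟨i + 1, .inl (pow_succ _ _).symm⟩
    · exact mem ⟨i + 1, .inr (.inl rfl)⟩
    · exact mem ⟨i, .inr (.inr (.inl (mul_assoc _ _ _)))⟩
    · exact mem ⟨i, .inr (.inr (.inr (mul_assoc _ _ _)))⟩
    · rw [mul_assoc, h.baa, mul_neg, mul_add]
      exact neg_mem (add_mem (mem ⟨i + 2, .inr (.inl (by simp only [pow_succ, mul_assoc]))⟩)
        (mem ⟨i + 1, .inr (.inr (.inl (by simp only [pow_succ, mul_assoc])))⟩))
    · rw [mul_assoc, h.bab, mul_neg]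
      exact neg_mem (mem ⟨i + 1, .inr (.inr (.inr (by simp only [pow_succ, mul_assoc])))⟩)
    · rw [mul_assoc, h.bba, mul_neg]
      exact neg_mem (mem ⟨i + 3, .inl (by simp only [pow_succ, mul_assoc])⟩)
    · rw [mul_assoc, h.bbb, mul_neg]
      exact neg_mem (mem ⟨i + 3, .inr (.inl (by simp only [pow_succ, mul_assoc]))⟩)
  · have shift (i : ℕ) : f (a ^ (i + 4)) = 0 := by
      have : a ^ i * (b * b) * a = -a ^ (i + 4) := by
        rw [mul_assoc, h.bba, mul_neg]; simp only [pow_succ, mul_assoc]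
      rw [← neg_eq_zero, ← map_neg, ← this, hf, ← mul_assoc, ← pow_succ', fbb]
    rintro t ⟨i, rfl | rfl | rfl | rfl⟩
    · match i with
      | 0 => simpa using ha
      | 1 => simpa [pow_succ] using haa
      | 2 => simpa [pow_succ] using haaa
      | i + 3 => exact shift i
    · exact fb i
    · rw [← mul_assoc, hf, ← mul_assoc, ← pow_succ', fb]
    · exact fbb i

end E8Relations

end Relations

theorem E8Relations.of_sq_of_cube {x y : B} (hx : x * x = 0) (hy : y * (y * y) = 0)
    (hz : (x + y) ^ 5 = 0) : E8Relations (x * y) (x * (y * y)) := by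
  have hx' (c : B) : x * (x * c) = 0 := by rw [← mul_assoc, hx, zero_mul]
  have hy' (c : B) : y * (y * (y * c)) = 0 := by rw [← mul_assoc y y c, ← mul_assoc, hy, zero_mul]
  rw [add_pow_five_of_sq_of_cube hx hy] at hz
  obtain ⟨a, ha⟩ : ∃ a, a = x * y := ⟨_, rfl⟩
  obtain ⟨b, hb⟩ : ∃ b, b = x * (y * y) := ⟨_, rfl⟩
  rw [← ha, ← hb]
  have hay : a * y = b := by rw [ha, hb, mul_assoc]
  have hby : b * y = 0 := by rw [hb, mul_assoc, mul_assoc, hy, mul_zero]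
  have h1 : a * a * a + a * b * x + b * a * x + b * b = 0 := by
    simpa [ha, hb, mul_add, mul_assoc, hx'] using congrArg (x * ·) hz
  have h2 : b * a * a * x + b * a * b + b * b * a = 0 := by
    simpa [ha, hb, mul_add, mul_assoc, hy'] using congrArg (x * y * y * ·) hz
  have baa : a * a * b + a * b * a + b * a * a = 0 := by
    simpa [add_mul, mul_assoc, hay, hby, ← ha] using congrArg (· * y) h1
  have bab : a * b * b + b * a * b = 0 := by
    simpa [add_mul, mul_assoc, hay, hby] using congrArg (· * y) baa
  have bba : a * a * a * a + b * b * a = 0 := by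
    have : a * a * a * a + a * b * b + b * a * b + b * b * a = 0 := by
      simpa [ha, hb, mul_add, add_mul, mul_assoc, hy, hy', add_assoc] using
        congrArg (x * y * · * y) hz
    rwa [add_assoc (a * a * a * a), bab, add_zero] at this
  have bbb : b * a * a * a + b * b * b = 0 := by
    simpa [add_mul, mul_assoc, hay, hby, ← ha] using congrArg (· * y) h2
  have baab : b * a * a * b = 0 := by
    simpa [add_mul, mul_assoc, hay, hby] using congrArg (· * y) bbb
  have h3 : (b * a * b + b * b * a) * x = 0 := by
    simpa [add_mul, mul_assoc, hx] using congrArg (· * x) h2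
  have baa' : b * a * a = -(a * a * b + a * b * a) := eq_neg_of_add_eq_zero_right baa
  have bba' : b * b * a = -(a * a * a * a) := eq_neg_of_add_eq_zero_right bba
  have h4 : b * (a * a * a * a * x) = -(a * a * a * a * (b * x)) := by
    calc b * (a * a * a * a * x) = b * (b * a * b * x) := by
          rw [add_mul, bba', neg_mul, add_neg_eq_zero] at h3; rw [h3]
      _ = b * b * a * (b * x) := by simp only [mul_assoc]
      _ = -(a * a * a * a * (b * x)) := by rw [bba', neg_mul]
  have h5 : b * a * a * a * a * a = -(a * a * a * a * b * a) := by
    simpa [mul_assoc, ← ha] using congrArg (· * y) h4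
  exact ⟨bba', baa', eq_neg_of_add_eq_zero_right bab,
    (eq_neg_of_add_eq_zero_right bbb).trans (by rw [mul_mul_mul_mul_comm_of_eq_neg baa']), baab,
    pow_five_mul_eq_zero_of_eq_neg baa' h5⟩

section Star

variable {x y z : B}

theorem of_mul_mul_sq (hf : IsTracial f) (hx : x * x = 0) (hy : y * (y * y) = 0)
    (hfx : VanishesOnPowers f x) (hfy : VanishesOnPowers f y)
    (h : VanishesOn f {x * y, x * (y * y)}) : VanishesOn f {x, y} := by
  refine pair_of_blocks hf hx (m := 3) (by simpa [pow_succ, mul_assoc] using hy)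
    (by simpa using hfx 1 one_ne_zero) hfy (h.mono ?_)
  rintro _ ⟨j, hj0, hj, rfl⟩
  interval_cases j
  exacts [by contradiction, by simp, by simp [sq]]

theorem trace_mul_self_of_pow_four (hf : IsTracial f) (hx : x * x = 0) (hy : y * (y * y) = 0)
    (hz : (x + y) ^ 4 = 0) : f (x * (y * y) * (x * (y * y))) = 0 := by
  have hy' (c : B) : y * (y * (y * c)) = 0 := by rw [← mul_assoc y y c, ← mul_assoc, hy, zero_mul]
  have h := congrArg (fun b => f (b * y * y)) ((add_pow_four_of_sq_of_cube hx hy).symm.trans hz)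
  simpa [add_mul, map_add, hf y, mul_assoc, hy, hy'] using h

variable [CharZero K]

theorem trace_mul_eq_zero (hf : IsTracial f) (hx : VanishesOnPowers f x)
    (hy : VanishesOnPowers f y) (hz : VanishesOnPowers f (x + y)) : f (x * y) = 0 := by
  have h : f ((x + y) ^ 2) = f (x ^ 2) + 2 * f (x * y) + f (y ^ 2) := by
    simp only [sq, mul_add, add_mul, map_add, hf y x]; ring
  rw [hz 2 two_ne_zero, hx 2 two_ne_zero, hy 2 two_ne_zero] at h
  simpa using h

theorem trace_mul_sq_eq_zero (hf : IsTracial f) (hx : x * x = 0) (hy : y * (y * y) = 0)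
    (hz : VanishesOnPowers f (x + y)) : f (x * (y * y)) = 0 := by
  have hxyx : f (x * (y * x)) = 0 := by rw [hf, mul_assoc, hx, mul_zero, map_zero]
  have h := hz 3 three_ne_zero
  rw [add_pow_three_of_sq_of_cube hx hy] at h
  simp only [map_add, hf y, mul_assoc, hxyx] at h
  have : 3 * f (x * (y * y)) = 0 := by linear_combination h
  simpa using this

theorem trace_mul_mul_mul_eq_zero (hf : IsTracial f) (hx : x * x = 0) (hy : y * (y * y) = 0)
    (hz : VanishesOnPowers f (x + y)) : f (x * (y * (x * y))) = 0 := by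
  have hxyyx : f (x * (y * (y * x))) = 0 := by
    rw [hf, mul_assoc, mul_assoc, hx, mul_zero, mul_zero, map_zero]
  have h := hz 4 four_ne_zero
  rw [add_pow_four_of_sq_of_cube hx hy] at h
  simp only [map_add, hf y, mul_assoc, hxyyx, hy, mul_zero, map_zero, add_zero] at h
  simpa [← two_mul] using h

theorem blocks_of_pow_three (hf : IsTracial f) (hx : x * x = 0) (hy : y * (y * y) = 0)
    (hz : (x + y) ^ 3 = 0) (ha : f (x * y) = 0) (hb : f (x * (y * y)) = 0)
    (haa : f (x * (y * (x * y))) = 0) : VanishesOn f {x * y, x * (y * y)} := by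
  have hx' (c : B) : x * (x * c) = 0 := by rw [← mul_assoc, hx, zero_mul]
  have hy' (c : B) : y * (y * (y * c)) = 0 := by rw [← mul_assoc y y c, ← mul_assoc, hy, zero_mul]
  rw [add_pow_three_of_sq_of_cube hx hy] at hz
  obtain ⟨a, ha'⟩ : ∃ a, a = x * y := ⟨_, rfl⟩
  obtain ⟨b, hb'⟩ : ∃ b, b = x * (y * y) := ⟨_, rfl⟩
  have hay : a * y = b := by rw [ha', hb', mul_assoc]
  have hby : b * y = 0 := by rw [hb', mul_assoc, mul_assoc, hy, mul_zero]
  have h1 : a * a + b * x = 0 := by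
    simpa [ha', hb', mul_add, mul_assoc, hx', hy] using congrArg (x * ·) hz
  have h2 : b * a * x + b * b = 0 := by
    simpa [ha', hb', mul_add, mul_assoc, hy'] using congrArg (x * y * y * ·) hz
  have hba : a * b + b * a = 0 := by
    simpa [add_mul, mul_assoc, hay, ← ha'] using congrArg (· * y) h1
  have hbb : b * b = 0 := by
    simpa [add_mul, mul_assoc, hay, hby] using congrArg (· * y) hba
  have hbax : b * a * x = 0 := by simpa [hbb] using h2
  have haax : a * a * x = 0 := by
    simpa [add_mul, mul_assoc, hx] using congrArg (· * x) h1
  have haaa : a * a * a = 0 := by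
    simpa [mul_assoc, ← ha'] using congrArg (· * y) haax
  have haab : a * a * b = 0 := by
    simpa [mul_assoc, hay] using congrArg (· * y) haaa
  rw [← mul_assoc] at haa
  simp only [← ha', ← hb'] at ha hb haa ⊢
  exact pair_of_E6_relations hf haaa haab (eq_neg_of_add_eq_zero_right hba) hbb ha hb haa

theorem trace_mul_of_pow_four (hf : IsTracial f) (hx : x * x = 0) (hy : y * (y * y) = 0)
    (hz : (x + y) ^ 4 = 0) : f (x * (y * (x * (y * y)))) = 0 := by
  have h := congrArg (fun b => f (b * y)) ((add_pow_four_of_sq_of_cube hx hy).symm.trans hz)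
  have rot : f (x * (y * (y * (x * y)))) = f (x * (y * (x * (y * y)))) := by
    rw [← mul_assoc y, ← mul_assoc, hf]; simp only [mul_assoc]
  simp only [add_mul, map_add, hf y, mul_assoc, hy, mul_zero, map_zero, zero_mul, rot] at h
  have : 3 * f (x * (y * (x * (y * y)))) = 0 := by linear_combination h
  simpa using this

theorem blocks_of_pow_four (hf : IsTracial f) (hx : x * x = 0) (hy : y * (y * y) = 0)
    (hz : (x + y) ^ 4 = 0) (ha : f (x * y) = 0) (hb : f (x * (y * y)) = 0)
    (haa : f (x * (y * (x * y))) = 0) : VanishesOn f {x * y, x * (y * y)} := by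
  have hx' (c : B) : x * (x * c) = 0 := by rw [← mul_assoc, hx, zero_mul]
  have hy' (c : B) : y * (y * (y * c)) = 0 := by rw [← mul_assoc y y c, ← mul_assoc, hy, zero_mul]
  have hab := trace_mul_of_pow_four hf hx hy hz
  have hbb := trace_mul_self_of_pow_four hf hx hy hz
  rw [add_pow_four_of_sq_of_cube hx hy] at hz
  obtain ⟨a, ha'⟩ : ∃ a, a = x * y := ⟨_, rfl⟩
  obtain ⟨b, hb'⟩ : ∃ b, b = x * (y * y) := ⟨_, rfl⟩
  have hay : a * y = b := by rw [ha', hb', mul_assoc]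
  have hby : b * y = 0 := by rw [hb', mul_assoc, mul_assoc, hy, mul_zero]
  have h1 : a * a * x + a * b + b * a = 0 := by
    simpa [ha', hb', mul_add, mul_assoc, hx', hy, add_assoc] using congrArg (x * ·) hz
  have h2 : b * a * a + b * b * x = 0 := by
    simpa [ha', hb', mul_add, mul_assoc, hx', hy, hy'] using congrArg (x * y * y * ·) hz
  have h3 : (a * b + b * a) * x = 0 := by
    simpa [add_mul, mul_assoc, hx] using congrArg (· * x) h1
  have aaa : a * a * a + b * b = 0 := by
    simpa [add_mul, mul_assoc, hay, hby, ← ha'] using congrArg (· * y) h1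
  have aab : a * a * b = 0 := by
    simpa [add_mul, mul_assoc, hay, hby] using congrArg (· * y) aaa
  have aba : a * b * a + b * a * a = 0 := by
    simpa [add_mul, mul_assoc, ← ha'] using congrArg (· * y) h3
  have bab : a * b * b + b * a * b = 0 := by
    simpa [add_mul, mul_assoc, hay] using congrArg (· * y) aba
  have bba : b * a * b + b * b * a = 0 := by
    simpa [add_mul, mul_assoc, hay, ← ha'] using congrArg (· * y) h2
  have bbb : b * b * b = 0 := by
    simpa [add_mul, mul_assoc, hay, hby] using congrArg (· * y) bba
  simp only [← hb', ← mul_assoc x y, ← ha'] at ha hb haa hab hbb ⊢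
  exact pair_of_E7_relations hf (eq_neg_of_add_eq_zero_left aaa) aab
    (eq_neg_of_add_eq_zero_left aba) (eq_neg_of_add_eq_zero_right bab)
    ((eq_neg_of_add_eq_zero_right bba).trans (by rw [eq_neg_of_add_eq_zero_right bab, neg_neg]))
    bbb ha hb haa hab hbb

theorem blocks_of_pow_five (hf : IsTracial f) (hx : x * x = 0) (hy : y * (y * y) = 0)
    (hz : (x + y) ^ 5 = 0) (ha : f (x * y) = 0) (hb : f (x * (y * y)) = 0)
    (haa : f (x * (y * (x * y))) = 0) : VanishesOn f {x * y, x * (y * y)} := by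
  have hrel := E8Relations.of_sq_of_cube hx hy hz
  rw [add_pow_five_of_sq_of_cube hx hy] at hz
  have hx' (c : B) : x * (x * c) = 0 := by rw [← mul_assoc, hx, zero_mul]
  have hxx (c : B) : f (x * (c * x)) = 0 := by rw [hf, mul_assoc, hx, mul_zero, map_zero]
  have hxyxyx : f (x * (y * (x * (y * x)))) = 0 := by simpa only [mul_assoc] using hxx (y * (x * y))
  have hab : f (x * (y * (x * (y * y)))) = 0 := by
    have h := congrArg f hz
    have : f (x * (y * (y * (x * y)))) = f (x * (y * (x * (y * y)))) := by
      rw [← mul_assoc y, ← mul_assoc, hf]; simp only [mul_assoc]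
    simp only [map_add, hf y, mul_assoc, hxyxyx, hy, mul_zero, map_zero, this] at h
    have : 5 * f (x * (y * (x * (y * y)))) = 0 := by linear_combination h
    simpa using this
  have h1 : f (x * (y * (x * (y * (x * y))))) + f (x * (y * (y * (x * (y * y))))) = 0 := by
    have h := congrArg (fun b => f (x * b)) hz
    have h3 := hxx (y * (x * (y * y)))
    have h4 := hxx (y * (y * (x * y)))
    simp only [mul_assoc] at h3 h4
    simpa [mul_add, mul_assoc, hx', h3, h4] using h
  have h2 : f (x * (y * (x * (y * (x * y))))) + 2 * f (x * (y * (y * (x * (y * y))))) = 0 := by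
    have h := congrArg (fun b => f (b * y)) hz
    simp only [add_mul, map_add, hf y, mul_assoc, hy, mul_zero, map_zero, zero_mul] at h
    linear_combination h
  have hbb : f (x * (y * (y * (x * (y * y))))) = 0 := by linear_combination h2 - h1
  refine hrel.vanishesOn hf ha hb ?_ ?_ ?_ ?_ <;> simp only [mul_assoc]
  exacts [haa, hab, by simpa [hbb] using h1, hbb]

theorem pair_of_pow_le_five (hf : IsTracial f) {r : ℕ} (hr : r = 3 ∨ r = 4 ∨ r = 5)
    (hx : x ^ 2 = 0) (hy : y ^ 3 = 0) (hz : (x + y) ^ r = 0) (hfx : VanishesOnPowers f x)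
    (hfy : VanishesOnPowers f y) (hfz : VanishesOnPowers f (x + y)) : VanishesOn f {x, y} := by
  replace hx : x * x = 0 := by rwa [sq] at hx
  replace hy : y * (y * y) = 0 := by rwa [pow_succ', sq] at hy
  have ha := trace_mul_eq_zero hf hfx hfy hfz
  have hb := trace_mul_sq_eq_zero hf hx hy hfz
  have haa := trace_mul_mul_mul_eq_zero hf hx hy hfz
  refine of_mul_mul_sq hf hx hy hfx hfy ?_
  obtain rfl | rfl | rfl := hr
  exacts [blocks_of_pow_three hf hx hy hz ha hb haa, blocks_of_pow_four hf hx hy hz ha hb haa,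
    blocks_of_pow_five hf hx hy hz ha hb haa]

theorem pair_of_sq_eq_zero (hf : IsTracial f) (hx : x ^ 2 = 0) (hy : y ^ 2 = 0)
    (hfx : VanishesOnPowers f x) (hfy : VanishesOnPowers f y)
    (hfz : VanishesOnPowers f (x + y)) : VanishesOn f {x, y} := by
  have hxy (k : ℕ) : f ((x * y) ^ (k + 1)) = 0 := by
    have hyx : f ((y * x) ^ (k + 1)) = f ((x * y) ^ (k + 1)) := by
      have h : y * (x * y) ^ k = (y * x) ^ k * y :=
        SemiconjBy.pow_right (show SemiconjBy y (x * y) (y * x) from (mul_assoc y x y).symm) k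
      rw [pow_succ, ← mul_assoc, ← h, hf, ← mul_assoc, ← pow_succ']
    have := hfz (2 * (k + 1)) (by simp)
    rw [add_pow_two_mul_of_sq_eq_zero hx hy, map_add, hyx] at this
    simpa [← two_mul] using this
  refine pair_of_blocks hf (by rwa [sq] at hx) hy (by simpa using hfx 1 one_ne_zero) hfy ?_
  refine of_mul_mem_span (T := {b | ∃ k, b = (x * y) ^ (k + 1)}) ?_ ?_ ?_
  · rintro _ ⟨j, hj0, hj, rfl⟩
    interval_cases j
    exacts [by contradiction, Submodule.subset_span ⟨0, by simp⟩]
  · rintro _ ⟨k, rfl⟩ _ ⟨j, hj0, hj, rfl⟩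
    interval_cases j
    exacts [by contradiction, Submodule.subset_span ⟨k + 1, by simp [pow_succ]⟩]
  · rintro _ ⟨k, rfl⟩
    exact hxy k

end Star

section ThreeArms

variable {x y z : B}

theorem of_add_eq_zero (h : VanishesOn f {x, y}) (hz : x + y + z = 0) :
    VanishesOn f {x, y, z} := by
  refine h.of_subset_adjoin ?_
  have hx : x ∈ NonUnitalAlgebra.adjoin K {x, y} := NonUnitalAlgebra.subset_adjoin K (by simp)
  have hy : y ∈ NonUnitalAlgebra.adjoin K {x, y} := NonUnitalAlgebra.subset_adjoin K (by simp)
  rintro _ (rfl | rfl | rfl)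
  exacts [hx, hy, by rw [eq_neg_of_add_eq_zero_right hz]; exact neg_mem (add_mem hx hy)]

theorem singleton (hx : VanishesOnPowers f x) : VanishesOn f {x} := by
  refine of_mul_mem_span (T := {b | ∃ k, b = x ^ (k + 1)}) ?_ ?_ ?_
  · rintro _ rfl
    exact Submodule.subset_span ⟨0, by simp⟩
  · rintro _ ⟨k, rfl⟩ _ rfl
    exact Submodule.subset_span ⟨k + 1, (pow_succ _ _).symm⟩
  · rintro _ ⟨k, rfl⟩
    exact hx _ k.succ_ne_zero

variable [CharZero K]

theorem three_arms_two_two (hf : IsTracial f) (hsum : x + y + z = 0) (hx : x ^ 2 = 0)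
    (hy : y ^ 2 = 0) (hfx : VanishesOnPowers f x) (hfy : VanishesOnPowers f y)
    (hfz : VanishesOnPowers f z) : VanishesOn f {x, y, z} := by
  have hxy : x + y = -z := eq_neg_of_add_eq_zero_left hsum
  exact (pair_of_sq_eq_zero hf hx hy hfx hfy (hxy ▸ hfz.neg)).of_add_eq_zero hsum

theorem three_arms_two_three (hf : IsTracial f) {r : ℕ} (hr : r = 3 ∨ r = 4 ∨ r = 5)
    (hsum : x + y + z = 0) (hx : x ^ 2 = 0) (hy : y ^ 3 = 0) (hz : z ^ r = 0)
    (hfx : VanishesOnPowers f x) (hfy : VanishesOnPowers f y) (hfz : VanishesOnPowers f z) :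
    VanishesOn f {x, y, z} := by
  have hxy : x + y = -z := eq_neg_of_add_eq_zero_left hsum
  have hxy' : (x + y) ^ r = 0 := by rw [hxy, neg_pow, hz, mul_zero]
  exact (pair_of_pow_le_five hf hr hx hy hxy' hfx hfy (hxy ▸ hfz.neg)).of_add_eq_zero hsum

end ThreeArms

end VanishesOn

end TraceFunctional

/-! ### Traces on preprojective algebras -/

/-- A trace on a quotient of a preprojective algebra: `arr d` are the images in `B` of the arrows
of a doubled quiver, subject to the preprojective relation at every vertex, `tr` is a tracial
functional, and `dim` is a positive vector in the radical of the symmetric Euler form. -/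
structure PreprojectiveTrace (K B V D : Type*) [Field K] [Ring B] [Algebra K B] [Fintype D]
    [DecidableEq V] where
  head : D → V
  rev : D → D
  arr : D → B
  sign : D → K
  dim : V → ℕ
  tr : B →ₗ[K] K
  rev_rev : ∀ d, rev (rev d) = d
  rev_ne : ∀ d, rev d ≠ d
  sign_mul_self : ∀ d, sign d * sign d = 1
  arr_mul_arr : ∀ a b, head (rev a) ≠ head b → arr a * arr b = 0
  sum_arr_mul_arr_rev : ∀ i, ∑ d with head d = i, sign d • (arr d * arr (rev d)) = 0
  tr_arr : ∀ d, head d ≠ head (rev d) → tr (arr d) = 0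
  tracial : IsTracial tr
  dim_pos : ∀ i, 0 < dim i
  sum_dim_tail : ∀ i, ∑ d with head d = i, dim (head (rev d)) = 2 * dim i

namespace PreprojectiveTrace

variable {K B V D : Type*} [Field K] [Ring B] [Algebra K B] [Fintype D] [DecidableEq V]
  (P : PreprojectiveTrace K B V D)

/-- The vertex at which the arrow `d` starts. -/
def tail (d : D) : V := P.head (P.rev d)

/-- The summand of the preprojective relation at `head d` which belongs to `d`. -/
def loop (d : D) : B := P.sign d • (P.arr d * P.arr (P.rev d))

/-- The arrows inside the vertex set `A`, and the loops `loop d` for the arrows `d` entering `A`. -/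
def generators (A : Finset V) : Set B :=
  {b | ∃ d, P.head d ∈ A ∧ ((P.tail d ∈ A ∧ b = P.arr d) ∨ (P.tail d ∉ A ∧ b = P.loop d))}

/-- The arrows from vertices in `A` to `i`. -/
def inner (A : Finset V) (i : V) : Finset D := {d | P.head d = i ∧ P.tail d ∈ A}

/-- The arrows from vertices outside `A` to `i`. -/
def outer (A : Finset V) (i : V) : Finset D := {d | P.head d = i ∧ P.tail d ∉ A}

/-- `d` looks like the last arrow of an arm of length `p - 1` of an extended Dynkin diagram, whose
vertices have dimensions `e, 2 e, …, (p - 1) e` and which is attached to a vertex of dimension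
`p e`. -/
def IsArm (d : D) : Prop :=
  ∃ p e, 2 ≤ p ∧ P.dim (P.head d) = p * e ∧ P.dim (P.tail d) + e = P.dim (P.head d) ∧
    P.loop d ^ p = 0

/-- `d` looks like an arrow coming from the direction of the extending vertex. -/
def IsStem (d : D) : Prop :=
  (P.dim (P.head d) = P.dim (P.tail d) + 1 ∧ P.loop d ^ P.dim (P.tail d) = 0) ∨
  (P.dim (P.head d) = 1 ∧ P.dim (P.tail d) = 1) ∨ (P.dim (P.head d) = 2 ∧ P.dim (P.tail d) = 2)

/-- A stem from a vertex of dimension one to a vertex of dimension two. -/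
def IsShortStem (Z : Set D) (d : D) : Prop := d ∈ Z ∧ P.dim (P.head d) = 2 ∧ P.dim (P.tail d) = 1

/-- The state of the elimination of vertices in which the vertices outside `A` are already
eliminated: an arrow entering `A` is a stem if it lies in `Z`, and ends an arm otherwise. -/
structure IsPeeling (A : Finset V) (Z : Set D) : Prop where
  tr_loop : ∀ d, P.head d ∈ A → P.tail d ∉ A → VanishesOnPowers P.tr (P.loop d)
  isArm : ∀ d, P.head d ∈ A → P.tail d ∉ A → d ∉ Z → P.IsArm d
  isStem : ∀ d, P.head d ∈ A → P.tail d ∉ A → d ∈ Z → P.IsStem d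
  eq_of_mem : ∀ d d', P.head d ∈ A → P.tail d ∉ A → d ∈ Z → P.head d' ∈ A → P.tail d' ∉ A →
    d' ∈ Z → 2 ≤ P.dim (P.head d) → d' = d
  exists_mem : ∀ T ⊆ A, T.Nonempty → (∀ d, P.head d ∈ T → P.tail d ∈ A → P.tail d ∈ T) →
    ∃ d, P.head d ∈ T ∧ P.tail d ∉ A ∧ d ∈ Z

variable {P} {A : Finset V} {Z : Set D} {i : V} {d : D}

@[simp] theorem mem_inner : d ∈ P.inner A i ↔ P.head d = i ∧ P.tail d ∈ A := by simp [inner]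

@[simp] theorem mem_outer : d ∈ P.outer A i ↔ P.head d = i ∧ P.tail d ∉ A := by simp [outer]

theorem tail_rev : P.tail (P.rev d) = P.head d := by rw [tail, P.rev_rev]

theorem sum_inner_add_sum_outer {M : Type*} [AddCommMonoid M] (A : Finset V) (i : V) (g : D → M) :
    ∑ d ∈ P.inner A i, g d + ∑ d ∈ P.outer A i, g d = ∑ d with P.head d = i, g d := by
  rw [← Finset.sum_filter_add_sum_filter_not {d | P.head d = i} (fun d => P.tail d ∈ A)]
  simp only [Finset.filter_filter, inner, outer]

theorem sum_inner_dim_add_sum_outer_dim (A : Finset V) (i : V) :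
    ∑ d ∈ P.inner A i, P.dim (P.tail d) + ∑ d ∈ P.outer A i, P.dim (P.tail d) = 2 * P.dim i :=
  (sum_inner_add_sum_outer A i _).trans (P.sum_dim_tail i)

theorem sum_inner_loop_add_sum_outer_loop (A : Finset V) (i : V) :
    ∑ d ∈ P.inner A i, P.loop d + ∑ d ∈ P.outer A i, P.loop d = 0 :=
  (sum_inner_add_sum_outer A i _).trans (P.sum_arr_mul_arr_rev i)

theorem IsArm.dim_head_le (h : P.IsArm d) : P.dim (P.head d) ≤ 2 * P.dim (P.tail d) := by
  obtain ⟨p, e, hp, h1, h2, -⟩ := h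
  have : 2 * e ≤ p * e := Nat.mul_le_mul_right _ hp
  omega

theorem IsArm.dim_tail_lt (h : P.IsArm d) : P.dim (P.tail d) < P.dim (P.head d) := by
  obtain ⟨p, e, -, h1, h2, -⟩ := h
  have hpos := P.dim_pos (P.head d)
  have he : e ≠ 0 := by rintro rfl; simp [h1] at hpos
  omega

theorem IsArm.loop_sq (h : P.IsArm d) (h2 : P.dim (P.head d) = 2) : P.loop d ^ 2 = 0 := by
  obtain ⟨p, e, hp, he, -, h⟩ := h
  have : p ≤ 2 := Nat.le_of_dvd two_pos ⟨e, h2 ▸ he⟩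
  rwa [show p = 2 by omega] at h

theorem IsPeeling.dim_head_le (h : P.IsPeeling A Z) (hd : P.head d ∈ A) (ht : P.tail d ∉ A)
    (hs : ¬ P.IsShortStem Z d) : P.dim (P.head d) ≤ 2 * P.dim (P.tail d) ∧
      (d ∈ Z → P.dim (P.head d) < 2 * P.dim (P.tail d)) := by
  have hpos := P.dim_pos (P.tail d)
  by_cases hZ : d ∈ Z
  · rcases h.isStem d hd ht hZ with ⟨h1, -⟩ | h | h
    · have : P.dim (P.tail d) ≠ 1 := fun h => hs ⟨hZ, by omega, h⟩
      omega
    · omega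
    · omega
  · exact ⟨(h.isArm d hd ht hZ).dim_head_le, fun h => absurd h hZ⟩

open scoped Classical in
theorem IsPeeling.card_mul_dim_le (h : P.IsPeeling A Z) (hi : i ∈ A) :
    Finset.card {d ∈ P.outer A i | ¬ P.IsShortStem Z d} * P.dim i ≤
        2 * ∑ d ∈ P.outer A i, P.dim (P.tail d) ∧
      ((∃ z ∈ P.outer A i, z ∈ Z) →
        Finset.card {d ∈ P.outer A i | ¬ P.IsShortStem Z d} * P.dim i <
          2 * ∑ d ∈ P.outer A i, P.dim (P.tail d)) := by
  have hsum : Finset.card {d ∈ P.outer A i | ¬ P.IsShortStem Z d} * P.dim i =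
      ∑ d ∈ P.outer A i, if ¬ P.IsShortStem Z d then P.dim i else 0 := by
    rw [← Finset.sum_filter, Finset.sum_const, smul_eq_mul]
  rw [hsum, Finset.mul_sum]
  have hle : ∀ d ∈ P.outer A i, (if ¬ P.IsShortStem Z d then P.dim i else 0) ≤
      2 * P.dim (P.tail d) := by
    intro d hd
    obtain ⟨rfl, ht⟩ := mem_outer.1 hd
    split_ifs with hs
    exacts [Nat.zero_le _, (h.dim_head_le hi ht hs).1]
  refine ⟨Finset.sum_le_sum hle, fun ⟨z, hz, hzZ⟩ => Finset.sum_lt_sum hle ⟨z, hz, ?_⟩⟩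
  obtain ⟨rfl, ht⟩ := mem_outer.1 hz
  split_ifs with hs
  exacts [by have := P.dim_pos (P.tail z); omega, (h.dim_head_le hi ht hs).2 hzZ]

theorem sum_card_inner_mul_dim (A : Finset V) :
    ∑ i ∈ A, (P.inner A i).card * P.dim i = ∑ i ∈ A, ∑ d ∈ P.inner A i, P.dim (P.tail d) := by
  have fiber (g : D → ℕ) : ∑ i ∈ A, ∑ d ∈ P.inner A i, g d =
      ∑ d with P.head d ∈ A ∧ P.tail d ∈ A, g d := by
    rw [← Finset.sum_fiberwise_of_maps_to (t := A) (g := P.head) (by simp +contextual)]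
    refine Finset.sum_congr rfl fun i hi => Finset.sum_congr ?_ fun _ _ => rfl
    ext d
    simp only [mem_inner, Finset.mem_filter, Finset.mem_univ, true_and]
    exact ⟨fun ⟨hd, ht⟩ => ⟨⟨hd ▸ hi, ht⟩, hd⟩, fun ⟨⟨_, ht⟩, hd⟩ => ⟨hd, ht⟩⟩
  have hcard (i : V) : (P.inner A i).card * P.dim i = ∑ d ∈ P.inner A i, P.dim (P.head d) := by
    rw [Finset.sum_congr rfl fun d hd => by rw [(mem_inner.1 hd).1], Finset.sum_const, smul_eq_mul]
  rw [Finset.sum_congr rfl fun i _ => hcard i, fiber, fiber]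
  refine Finset.sum_nbij' P.rev P.rev ?_ ?_ (fun d _ => P.rev_rev d) (fun d _ => P.rev_rev d)
    (fun d _ => by rw [tail_rev])
  all_goals
    intro d
    simp only [Finset.mem_filter, Finset.mem_univ, true_and, tail_rev]
    exact And.symm

open scoped Classical in
/-- Otherwise every vertex of `A` would satisfy `2 dim i ≤ #inner * dim i + ∑ outer dim`, strictly
at the head of a stem, contradicting the sum over `A` of the radical equations. -/
theorem IsPeeling.exists_inner_card_le_one (h : P.IsPeeling A Z) (hA : A.Nonempty) :
    ∃ i ∈ A, P.inner A i = ∅ ∨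
      ((P.inner A i).card = 1 ∧ Finset.card {d ∈ P.outer A i | ¬ P.IsShortStem Z d} ≤ 1) := by
  by_contra! hcon
  obtain ⟨z, hzA, htz, hz⟩ := h.exists_mem A subset_rfl hA fun d _ h => h
  have bound : ∀ i ∈ A,
      2 * P.dim i ≤ (P.inner A i).card * P.dim i + ∑ d ∈ P.outer A i, P.dim (P.tail d) ∧
      ((∃ z ∈ P.outer A i, z ∈ Z) →
        2 * P.dim i < (P.inner A i).card * P.dim i + ∑ d ∈ P.outer A i, P.dim (P.tail d)) := by
    intro i hi
    obtain ⟨hne, hone⟩ := hcon i hi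
    obtain ⟨hle, hlt⟩ := h.card_mul_dim_le hi
    have hpos : 0 < (P.inner A i).card := Finset.card_pos.2 hne
    by_cases h1 : (P.inner A i).card = 1
    · have := Nat.mul_le_mul_right (P.dim i) (hone h1)
      rw [h1]
      exact ⟨by omega, fun hz => by have := hlt hz; omega⟩
    · have : 2 * P.dim i ≤ (P.inner A i).card * P.dim i := Nat.mul_le_mul_right _ (by omega)
      exact ⟨by omega, fun hz => by have := hlt hz; omega⟩
  have lt : ∑ i ∈ A, 2 * P.dim i <
      ∑ i ∈ A, ((P.inner A i).card * P.dim i + ∑ d ∈ P.outer A i, P.dim (P.tail d)) :=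
    Finset.sum_lt_sum (fun i hi => (bound i hi).1)
      ⟨P.head z, hzA, (bound _ hzA).2 ⟨z, mem_outer.2 ⟨rfl, htz⟩, hz⟩⟩
  rw [Finset.sum_add_distrib, sum_card_inner_mul_dim, ← Finset.sum_add_distrib,
    Finset.sum_congr rfl fun i _ => sum_inner_dim_add_sum_outer_dim A i] at lt
  exact lt_irrefl _ lt

end PreprojectiveTrace

/-- For `p ≤ p'`, the solutions of `1 / p + 1 / p' + 1 / m = 1` in which `p` and `p'` divide `m`:
the triples `(3, 3, 3)`, `(2, 4, 4)`, `(2, 3, 6)` of the diagrams `E₆`, `E₇`, `E₈`. -/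
theorem arm_lengths {m p e p' e' : ℕ} (hpp : p ≤ p') (hp : 2 ≤ p) (he : m = p * e)
    (he' : m = p' * e') (hsum : e + e' + 1 = m) (hm : 2 ≤ m) :
    (m = 3 ∧ p = 3 ∧ p' = 3) ∨ (m = 4 ∧ p = 2 ∧ p' = 4) ∨ (m = 6 ∧ p = 2 ∧ p' = 3) := by
  have bound {k} (hk : k ≤ p') : k * e' ≤ m := he' ▸ Nat.mul_le_mul_right e' hk
  have e_pos : e ≠ 0 := by rintro rfl; omega
  have e'_pos : e' ≠ 0 := by rintro rfl; omega
  obtain rfl | rfl | h4 : p = 2 ∨ p = 3 ∨ 4 ≤ p := by omega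
  · obtain rfl | rfl | rfl | h5 : p' = 2 ∨ p' = 3 ∨ p' = 4 ∨ 5 ≤ p' := by omega
    · omega
    · omega
    · omega
    · have := bound h5
      omega
  · have := bound hpp
    obtain rfl : e = 1 := by omega
    obtain rfl : e' = 1 := by omega
    omega
  · have := bound (h4.trans hpp)
    have : 4 * e ≤ p * e := Nat.mul_le_mul_right e h4
    omega

theorem VanishesOn.of_two_arms {K B : Type*} [Field K] [CharZero K] [Ring B] [Algebra K B]
    {f : B →ₗ[K] K} (hf : IsTracial f) {x y z : B} {m p e p' e' : ℕ} (hp : 2 ≤ p) (hp' : 2 ≤ p')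
    (he : m = p * e) (he' : m = p' * e') (hm : e + e' + 1 = m) (h2 : 2 ≤ m) (hx : x ^ p = 0)
    (hy : y ^ p' = 0) (hz : z ^ (m - 1) = 0) (hsum : x + y + z = 0) (hfx : VanishesOnPowers f x)
    (hfy : VanishesOnPowers f y) (hfz : VanishesOnPowers f z) : VanishesOn f {x, y, z} := by
  wlog hpp : p ≤ p' generalizing x y p e p' e'
  · rw [Set.insert_comm]
    exact this hp' hp he' he (by omega) hy hx (by rwa [add_comm y]) hfy hfx (by omega)
  obtain ⟨rfl, rfl, rfl⟩ | ⟨rfl, rfl, rfl⟩ | ⟨rfl, rfl, rfl⟩ := arm_lengths hpp hp he he' hm h2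
  · rw [show ({x, y, z} : Set B) = {z, x, y} by grind]
    exact three_arms_two_three hf (.inl rfl) (by rw [← hsum]; abel) hz hx hy hfz hfx hfy
  · rw [Set.pair_comm]
    exact three_arms_two_three hf (.inr (.inl rfl)) (by rw [← hsum]; abel) hx hz hy hfx hfz hfy
  · exact three_arms_two_three hf (.inr (.inr rfl)) hsum hx hy hz hfx hfy hfz

namespace PreprojectiveTrace

variable {K B V D : Type*} [Field K] [Ring B] [Algebra K B] [Fintype D] [DecidableEq V]
  {P : PreprojectiveTrace K B V D} {A : Finset V} {Z : Set D} {i : V} {d : D}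

theorem arr_mul_generator (hd : P.tail d ∉ A) {g : B} (hg : g ∈ P.generators A) :
    P.arr d * g = 0 := by
  obtain ⟨e, he, h⟩ := hg
  have hmul : P.arr d * P.arr e = 0 := P.arr_mul_arr _ _ fun h => hd (by rwa [tail, h])
  obtain ⟨-, rfl⟩ | ⟨-, rfl⟩ := h
  · exact hmul
  · rw [loop, mul_smul_comm, ← mul_assoc, hmul, zero_mul, smul_zero]

theorem generator_mul_arr (hd : P.head d ∉ A) {g : B} (hg : g ∈ P.generators A) :
    g * P.arr d = 0 := by
  obtain ⟨e, he, ⟨ht, rfl⟩ | ⟨-, rfl⟩⟩ := hg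
  · exact P.arr_mul_arr _ _ fun h => hd (h ▸ ht)
  · rw [loop, smul_mul_assoc, mul_assoc,
      P.arr_mul_arr _ _ fun h => hd (by rwa [← h, P.rev_rev]), mul_zero, smul_zero]

section Center

theorem card_mul_dim_le_of_isArm {E : Finset D} (hE : ∀ d ∈ E, P.head d = i ∧ P.IsArm d) :
    E.card * P.dim i ≤ 2 * ∑ d ∈ E, P.dim (P.tail d) := by
  rw [Finset.mul_sum, ← smul_eq_mul, ← Finset.sum_const]
  exact Finset.sum_le_sum fun d hd => (hE d hd).1 ▸ (hE d hd).2.dim_head_le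

theorem sum_dim_tail_add_card_le_of_isArm {E : Finset D}
    (hE : ∀ d ∈ E, P.head d = i ∧ P.IsArm d) :
    ∑ d ∈ E, P.dim (P.tail d) + E.card ≤ E.card * P.dim i := by
  rw [Finset.card_eq_sum_ones, ← Finset.sum_add_distrib, Finset.sum_mul]
  refine Finset.sum_le_sum fun d hd => ?_
  have := (hE d hd).2.dim_tail_lt
  rw [(hE d hd).1] at this
  omega

theorem card_arms_of_dim_head_eq {E : Finset D} {z : D} (hE : ∀ d ∈ E, P.head d = i ∧ P.IsArm d)
    (hz : P.dim i = P.dim (P.tail z) + 1)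
    (hdim : P.dim (P.tail z) + ∑ d ∈ E, P.dim (P.tail d) = 2 * P.dim i) :
    E.card = 2 ∨ E.card = 3 ∧ P.dim i = 2 := by
  have hlow := card_mul_dim_le_of_isArm hE
  have hup := sum_dim_tail_add_card_le_of_isArm hE
  have hpos := P.dim_pos (P.tail z)
  have h4 : ¬ 4 ≤ E.card := fun h => by
    have : 4 * P.dim i ≤ E.card * P.dim i := Nat.mul_le_mul_right _ h
    omega
  generalize E.card = n at *
  interval_cases n <;> omega

theorem IsPeeling.vanishesOn_outer_of_dim_eq_one (h : P.IsPeeling A Z) (hi : i ∈ A)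
    (h0 : P.inner A i = ∅) (h1 : P.dim i = 1) : VanishesOn P.tr (P.loop '' P.outer A i) := by
  classical
  have hdim := sum_inner_dim_add_sum_outer_dim (P := P) A i
  have hsum := sum_inner_loop_add_sum_outer_loop (P := P) A i
  have hone : ∀ d ∈ P.outer A i, P.dim (P.tail d) = 1 := by
    intro d hd
    obtain ⟨rfl, ht⟩ := mem_outer.1 hd
    have hpos := P.dim_pos (P.tail d)
    by_cases hZ : d ∈ Z
    · obtain ⟨h, -⟩ | h | h := h.isStem d hi ht hZ <;> omega
    · have := (h.isArm d hi ht hZ).dim_tail_lt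
      omega
  rw [h0, Finset.sum_empty, zero_add] at hdim hsum
  rw [Finset.sum_congr rfl hone, Finset.sum_const, smul_eq_mul, mul_one, h1] at hdim
  obtain ⟨a, b, hab, hN⟩ := Finset.card_eq_two.1 hdim
  have hfa : VanishesOnPowers P.tr (P.loop a) := by
    obtain ⟨ha, ht⟩ := mem_outer.1 (show a ∈ P.outer A i by simp [hN])
    exact h.tr_loop a (ha ▸ hi) ht
  rw [hN, Finset.sum_pair hab] at hsum
  refine (VanishesOn.singleton hfa).of_subset_adjoin ?_
  have ha : P.loop a ∈ NonUnitalAlgebra.adjoin K {P.loop a} := NonUnitalAlgebra.subset_adjoin K rfl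
  rw [hN, Finset.coe_pair, Set.image_pair, eq_neg_of_add_eq_zero_right hsum]
  exact Set.insert_subset ha (Set.singleton_subset_iff.2 (neg_mem ha))

variable [CharZero K]

theorem vanishesOn_loops_of_two_arms {a b z : D} (ha : P.head a = i) (hb : P.head b = i)
    (haA : P.IsArm a) (hbA : P.IsArm b) (hz : P.dim i = P.dim (P.tail z) + 1)
    (hzp : P.loop z ^ P.dim (P.tail z) = 0)
    (hdim : P.dim (P.tail z) + (P.dim (P.tail a) + P.dim (P.tail b)) = 2 * P.dim i)
    (hsum : P.loop z + (P.loop a + P.loop b) = 0) (hfa : VanishesOnPowers P.tr (P.loop a))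
    (hfb : VanishesOnPowers P.tr (P.loop b)) (hfz : VanishesOnPowers P.tr (P.loop z)) :
    VanishesOn P.tr {P.loop a, P.loop b, P.loop z} := by
  obtain ⟨p, e, hp, he, hte, hpow⟩ := haA
  obtain ⟨p', e', hp', he', hte', hpow'⟩ := hbA
  rw [ha] at he hte
  rw [hb] at he' hte'
  have hpos := P.dim_pos (P.tail z)
  refine .of_two_arms P.tracial hp hp' he he' (by omega) (by omega) hpow hpow' ?_
    (by rw [← hsum]; abel) hfa hfb hfz
  rwa [hz, Nat.add_sub_cancel]

theorem vanishesOn_loops_of_arms {E : Finset D} {z : D}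
    (hE : ∀ d ∈ E, P.head d = i ∧ P.IsArm d) (hz : P.head z = i) (hzS : P.IsStem z)
    (h2 : 2 ≤ P.dim i) (hdim : P.dim (P.tail z) + ∑ d ∈ E, P.dim (P.tail d) = 2 * P.dim i)
    (hsum : P.loop z + ∑ d ∈ E, P.loop d = 0) (hfz : VanishesOnPowers P.tr (P.loop z))
    (hfE : ∀ d ∈ E, VanishesOnPowers P.tr (P.loop d)) :
    VanishesOn P.tr (insert (P.loop z) (P.loop '' E)) := by
  classical
  have sq (hi : P.dim i = 2) {d : D} (hd : d ∈ E) : P.loop d ^ 2 = 0 :=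
    (hE d hd).2.loop_sq (by rwa [(hE d hd).1])
  obtain ⟨hz1, hz2⟩ | h | ⟨hi, hz1⟩ := hzS
  · rw [hz] at hz1
    obtain hc | ⟨hc, hi⟩ := card_arms_of_dim_head_eq hE hz1 hdim
    · obtain ⟨a, b, hab, rfl⟩ := Finset.card_eq_two.1 hc
      rw [Finset.sum_pair hab] at hdim hsum
      exact (vanishesOn_loops_of_two_arms (hE a (by simp)).1 (hE b (by simp)).1 (hE a (by simp)).2
        (hE b (by simp)).2 hz1 hz2 hdim hsum (hfE a (by simp)) (hfE b (by simp)) hfz).mono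
          (by simp [Set.image_pair, Set.insert_subset_iff])
    · obtain ⟨a, b, c, hab, hac, hbc, rfl⟩ := Finset.card_eq_three.1 hc
      rw [show P.dim (P.tail z) = 1 by omega, pow_one] at hz2
      rw [Finset.sum_insert (by simp [hab, hac]), Finset.sum_pair hbc, hz2, zero_add,
        ← add_assoc] at hsum
      refine (VanishesOn.three_arms_two_two P.tracial hsum (sq hi (by simp)) (sq hi (by simp))
        (hfE a (by simp)) (hfE b (by simp)) (hfE c (by simp))).of_subset_adjoin ?_
      rw [hz2, Set.insert_subset_iff]
      refine ⟨zero_mem _, ?_⟩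
      simp [Set.image_insert_eq, NonUnitalAlgebra.subset_adjoin]
  · rw [hz] at h
    omega
  · rw [hz] at hi
    have hup := sum_dim_tail_add_card_le_of_isArm hE
    have hlow := card_mul_dim_le_of_isArm hE
    rw [hi] at hup hlow
    obtain ⟨a, b, hab, rfl⟩ := Finset.card_eq_two.1 (show E.card = 2 by omega)
    rw [Finset.sum_pair hab] at hsum
    exact (VanishesOn.three_arms_two_two P.tracial (by rw [← hsum]; abel) (sq hi (by simp))
      (sq hi (by simp)) (hfE a (by simp)) (hfE b (by simp)) hfz).mono
        (by simp [Set.image_pair, Set.insert_subset_iff])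

theorem IsPeeling.vanishesOn_outer (h : P.IsPeeling A Z) (hi : i ∈ A) (h0 : P.inner A i = ∅) :
    VanishesOn P.tr (P.loop '' P.outer A i) := by
  classical
  by_cases h1 : P.dim i = 1
  · exact h.vanishesOn_outer_of_dim_eq_one hi h0 h1
  have h2 : 2 ≤ P.dim i := by have := P.dim_pos i; omega
  obtain ⟨z, hzi, hzA, hz⟩ := h.exists_mem {i} (by simpa using hi) (by simp) fun d hd ht => by
    have : d ∈ P.inner A i := mem_inner.2 ⟨by simpa using hd, ht⟩
    simp [h0] at this
  rw [Finset.mem_singleton] at hzi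
  have hmem : z ∈ P.outer A i := mem_outer.2 ⟨hzi, hzA⟩
  have hdim := sum_inner_dim_add_sum_outer_dim (P := P) A i
  have hsum := sum_inner_loop_add_sum_outer_loop (P := P) A i
  rw [h0, Finset.sum_empty, zero_add, ← Finset.add_sum_erase _ _ hmem] at hdim hsum
  have hpow {d} (hd : d ∈ P.outer A i) : VanishesOnPowers P.tr (P.loop d) := by
    obtain ⟨rfl, ht⟩ := mem_outer.1 hd
    exact h.tr_loop d hi ht
  rw [← Finset.insert_erase hmem, Finset.coe_insert, Set.image_insert_eq]
  refine vanishesOn_loops_of_arms (fun d hd => ?_) hzi (h.isStem z (hzi ▸ hi) hzA hz) h2 hdim hsum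
    (hpow hmem) fun d hd => hpow (Finset.mem_of_mem_erase hd)
  obtain ⟨hne, hd⟩ := Finset.mem_erase.1 hd
  obtain ⟨hdi, hdA⟩ := mem_outer.1 hd
  refine ⟨hdi, h.isArm d (hdi ▸ hi) hdA fun hdZ => hne ?_⟩
  exact h.eq_of_mem z d (hzi ▸ hi) hzA hz (hdi ▸ hi) hdA hdZ (hzi ▸ h2)

end Center

section EraseIsolated

variable (h0 : P.inner A i = ∅)
include h0

theorem tail_ne_of_inner_eq_empty (hd : P.head d ∈ A) : P.tail d ≠ i := fun h => by
  have : P.rev d ∈ P.inner A i := mem_inner.2 ⟨h, by rwa [tail_rev]⟩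
  simp [h0] at this

theorem tail_notMem_of_inner_eq_empty (hd : P.head d ∈ A.erase i) (ht : P.tail d ∉ A.erase i) :
    P.head d ∈ A ∧ P.tail d ∉ A := by
  have hdA := Finset.mem_of_mem_erase hd
  exact ⟨hdA, fun h => ht (Finset.mem_erase.2 ⟨tail_ne_of_inner_eq_empty h0 hdA, h⟩)⟩

theorem IsPeeling.erase_of_inner_eq_empty (h : P.IsPeeling A Z) : P.IsPeeling (A.erase i) Z := by
  have old {d} := tail_notMem_of_inner_eq_empty h0 (d := d)
  refine ⟨fun d hd ht => ?_, fun d hd ht => ?_, fun d hd ht => ?_, fun d d' hd ht hz hd' ht' => ?_,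
    fun T hT hne hcl => ?_⟩
  · exact h.tr_loop d (old hd ht).1 (old hd ht).2
  · exact h.isArm d (old hd ht).1 (old hd ht).2
  · exact h.isStem d (old hd ht).1 (old hd ht).2
  · exact h.eq_of_mem d d' (old hd ht).1 (old hd ht).2 hz (old hd' ht').1 (old hd' ht').2
  · obtain ⟨d, hd, ht, hz⟩ := h.exists_mem T (hT.trans (A.erase_subset i)) hne fun d hd ht =>
      hcl d hd (Finset.mem_erase.2
        ⟨tail_ne_of_inner_eq_empty h0 (Finset.mem_of_mem_erase (hT hd)), ht⟩)
    exact ⟨d, hd, fun h => ht (Finset.mem_of_mem_erase h), hz⟩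

theorem generators_subset_of_inner_eq_empty :
    P.generators A ⊆ P.generators (A.erase i) ∪ P.loop '' P.outer A i := by
  rintro _ ⟨d, hd, h⟩
  by_cases hdi : P.head d = i
  · obtain ⟨ht, -⟩ | ⟨ht, rfl⟩ := h
    · have : d ∈ P.inner A i := mem_inner.2 ⟨hdi, ht⟩
      simp [h0] at this
    · exact .inr ⟨d, mem_outer.2 ⟨hdi, ht⟩, rfl⟩
  · refine .inl ⟨d, Finset.mem_erase.2 ⟨hdi, hd⟩, h.imp ?_ ?_⟩
    · exact fun ⟨ht, h⟩ => ⟨Finset.mem_erase.2 ⟨tail_ne_of_inner_eq_empty h0 hd, ht⟩, h⟩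
    · exact fun ⟨ht, h⟩ => ⟨fun h => ht (Finset.mem_of_mem_erase h), h⟩

theorem IsPeeling.vanishesOn_generators_of_inner_eq_empty [CharZero K] (h : P.IsPeeling A Z)
    (hi : i ∈ A) (hA : VanishesOn P.tr (P.generators (A.erase i))) :
    VanishesOn P.tr (P.generators A) := by
  refine (hA.union (h.vanishesOn_outer hi h0) ?_ ?_).mono (generators_subset_of_inner_eq_empty h0)
  · rintro s hs _ ⟨d, hd, rfl⟩
    rw [loop, mul_smul_comm, ← mul_assoc, generator_mul_arr (by simp [(mem_outer.1 hd).1]) hs,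
      zero_mul, smul_zero]
  · rintro _ ⟨d, hd, rfl⟩ s hs
    rw [loop, smul_mul_assoc, mul_assoc,
      arr_mul_generator (by simp [tail_rev, (mem_outer.1 hd).1]) hs, mul_zero, smul_zero]

end EraseIsolated

end PreprojectiveTrace

namespace PreprojectiveTrace

variable {K B V D : Type*} [Field K] [Ring B] [Algebra K B] [Fintype D] [DecidableEq V]
  {P : PreprojectiveTrace K B V D} {A : Finset V} {Z : Set D} {i : V} {d' : D}

section LoopRev

theorem head_rev {d : D} : P.head (P.rev d) = P.tail d := rfl

theorem arr_mul_arr_rev (d : D) : P.arr d * P.arr (P.rev d) = P.sign d • P.loop d := by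
  rw [loop, smul_smul, P.sign_mul_self, one_smul]

theorem loop_rev_pow_succ (d : D) (m : ℕ) : P.loop (P.rev d) ^ (m + 1) =
    P.sign (P.rev d) •
      (P.arr (P.rev d) * ((P.sign (P.rev d) * P.sign d) • P.loop d) ^ m * P.arr d) := by
  have hloop : P.loop (P.rev d) = P.sign (P.rev d) • (P.arr (P.rev d) * P.arr d) := by
    rw [loop, P.rev_rev]
  have semiconj : SemiconjBy (P.arr (P.rev d)) ((P.sign (P.rev d) * P.sign d) • P.loop d)
      (P.loop (P.rev d)) := by
    rw [SemiconjBy, hloop, smul_mul_assoc, mul_assoc, arr_mul_arr_rev, mul_smul_comm,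
      mul_smul_comm, smul_smul]
  rw [(semiconj.pow_right m).eq, mul_assoc, ← mul_smul_comm, pow_succ, hloop]

theorem loop_rev_pow_eq_zero {d : D} {p : ℕ} (h : P.loop d ^ p = 0) :
    P.loop (P.rev d) ^ (p + 1) = 0 := by
  rw [loop_rev_pow_succ, smul_pow, h, smul_zero, mul_zero, zero_mul, smul_zero]

theorem vanishesOnPowers_loop_rev {d : D} (h : VanishesOnPowers P.tr (P.loop d)) :
    VanishesOnPowers P.tr (P.loop (P.rev d)) := by
  intro k hk
  obtain ⟨m, rfl⟩ := Nat.exists_eq_succ_of_ne_zero hk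
  rw [loop_rev_pow_succ, map_smul, mul_assoc, P.tracial, mul_assoc, arr_mul_arr_rev, smul_pow,
    smul_mul_assoc, mul_smul_comm, ← pow_succ, map_smul, map_smul, h _ hk]
  simp only [smul_zero]

end LoopRev

section Peelable

/-- `d'` is the only arrow from `A` to `i`, and its reverse, which enters `A.erase i`, is of the
kind required by `IsPeeling`: the vertex `i` can be eliminated. -/
structure IsPeelable (P : PreprojectiveTrace K B V D) (A : Finset V) (Z : Set D) (i : V)
    (d' : D) : Prop where
  inner_eq : P.inner A i = {d'}
  loop_eq : ∀ e ∈ P.outer A i, P.loop e = 0 ∨ P.loop e = -P.loop d'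
  tr_loop : VanishesOnPowers P.tr (P.loop d')
  isArm : (∀ e ∈ P.outer A i, e ∉ Z) → P.IsArm (P.rev d')
  isStem : (∃ e ∈ P.outer A i, e ∈ Z) → P.IsStem (P.rev d')
  two_le_dim : (∃ e ∈ P.outer A i, e ∈ Z) → 2 ≤ P.dim (P.tail d') → 2 ≤ P.dim i

theorem head_eq_of_inner_eq (h0 : P.inner A i = {d'}) : P.head d' = i ∧ P.tail d' ∈ A :=
  mem_inner.1 (h0 ▸ Finset.mem_singleton_self d')

theorem IsArm.rev {e : D} (he : P.IsArm e) (hhead : P.head e = P.head d')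
    (hdim : P.dim (P.tail d') + P.dim (P.tail e) = 2 * P.dim (P.head d'))
    (hloop : P.loop d' = -P.loop e) : P.IsArm (P.rev d') := by
  obtain ⟨p, q, hp, h1, h2, h3⟩ := he
  rw [hhead] at h1 h2
  exact ⟨p + 1, q, by omega, by rw [head_rev, add_mul]; omega, by rw [tail_rev, head_rev]; omega,
    loop_rev_pow_eq_zero (by rw [hloop, neg_pow, h3, mul_zero])⟩

theorem IsStem.rev {e : D} (he : P.IsStem e) (hhead : P.head e = P.head d')
    (hdim : P.dim (P.tail d') + P.dim (P.tail e) = 2 * P.dim (P.head d'))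
    (hloop : P.loop d' = -P.loop e) : P.IsStem (P.rev d') := by
  rw [IsStem, hhead] at he
  rw [IsStem, tail_rev, head_rev]
  obtain ⟨h1, h2⟩ | h | h := he
  · refine .inl ⟨by omega, ?_⟩
    rw [h1]
    exact loop_rev_pow_eq_zero (by rw [hloop, neg_pow, h2, mul_zero])
  · exact .inr (.inl (by omega))
  · exact .inr (.inr (by omega))

theorem isPeelable_of_outer_eq_empty (h0 : P.inner A i = {d'}) (hN : P.outer A i = ∅) :
    P.IsPeelable A Z i d' := by
  have hdim := sum_inner_dim_add_sum_outer_dim (P := P) A i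
  have hloop := sum_inner_loop_add_sum_outer_loop (P := P) A i
  rw [h0, hN, Finset.sum_singleton, Finset.sum_empty, add_zero] at hdim hloop
  obtain ⟨rfl, -⟩ := head_eq_of_inner_eq h0
  refine ⟨h0, by simp [hN], fun k hk => by rw [hloop, zero_pow hk, map_zero], fun _ => ?_,
    by simp [hN], by simp [hN]⟩
  exact ⟨2, P.dim (P.head d'), le_rfl, hdim, by rw [tail_rev, head_rev]; omega,
    loop_rev_pow_eq_zero (by rwa [pow_one])⟩

theorem IsPeeling.isPeelable_of_outer_eq_singleton (h : P.IsPeeling A Z) (hi : i ∈ A)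
    (h0 : P.inner A i = {d'}) {e : D} (hN : P.outer A i = {e}) : P.IsPeelable A Z i d' := by
  have hdim := sum_inner_dim_add_sum_outer_dim (P := P) A i
  have hloop := sum_inner_loop_add_sum_outer_loop (P := P) A i
  rw [h0, hN, Finset.sum_singleton, Finset.sum_singleton] at hdim hloop
  obtain ⟨rfl, -⟩ := head_eq_of_inner_eq h0
  obtain ⟨he, ht⟩ := mem_outer.1 (hN ▸ Finset.mem_singleton_self e)
  have hloop' := eq_neg_of_add_eq_zero_left hloop
  have heA : P.head e ∈ A := he ▸ hi
  refine ⟨h0, ?_, hloop' ▸ (h.tr_loop e heA ht).neg, ?_, ?_, ?_⟩ <;>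
    simp only [hN, Finset.mem_singleton, forall_eq, exists_eq_left]
  · exact .inr (eq_neg_of_add_eq_zero_right hloop)
  · exact fun hZ => (h.isArm e heA ht hZ).rev he hdim hloop'
  · exact fun hZ => (h.isStem e heA ht hZ).rev he hdim hloop'
  · intro hZ h2
    have := P.dim_pos (P.tail e)
    have hS := h.isStem e heA ht hZ
    rw [IsStem, he] at hS
    omega

theorem IsPeeling.isPeelable_of_outer_eq_pair (h : P.IsPeeling A Z) (hi : i ∈ A)
    (h0 : P.inner A i = {d'}) [DecidableEq D] {z e : D} (hz : P.IsShortStem Z z) (heZ : e ∉ Z)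
    (hN : P.outer A i = {z, e}) : P.IsPeelable A Z i d' := by
  obtain ⟨hzZ, hz2, hz1⟩ := hz
  obtain ⟨he, hte⟩ := mem_outer.1 (show e ∈ P.outer A i by simp [hN])
  obtain ⟨rfl, htz⟩ := mem_outer.1 (show z ∈ P.outer A i by simp [hN])
  have heA := h.isArm e (he ▸ hi) hte heZ
  have hz0 : P.loop z = 0 := by
    obtain ⟨-, h⟩ | h | h := h.isStem z hi htz hzZ
    · rwa [hz1, pow_one] at h
    · omega
    · omega
  have hdim := sum_inner_dim_add_sum_outer_dim (P := P) A (P.head z)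
  have hloop := sum_inner_loop_add_sum_outer_loop (P := P) A (P.head z)
  rw [h0, hN, Finset.sum_singleton, Finset.sum_pair (ne_of_mem_of_not_mem hzZ heZ)] at hdim hloop
  rw [hz0, zero_add] at hloop
  have hte2 : P.dim (P.tail e) = 1 := by
    have h1 := heA.dim_tail_lt
    have := P.dim_pos (P.tail e)
    rw [he] at h1
    omega
  refine ⟨h0, ?_, ?_, ?_, fun _ => .inr (.inr ?_), fun _ _ => hz2.ge⟩
  · simp only [hN, Finset.mem_insert, Finset.mem_singleton, forall_eq_or_imp, forall_eq]
    exact ⟨.inl hz0, .inr (eq_neg_of_add_eq_zero_right hloop)⟩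
  · exact eq_neg_of_add_eq_zero_left hloop ▸ (h.tr_loop e (he ▸ hi) hte).neg
  · exact fun h => absurd hzZ (h z (by simp [hN]))
  · rw [tail_rev, head_rev, (head_eq_of_inner_eq h0).1]
    omega

open scoped Classical in
theorem IsPeeling.outer_cases (h : P.IsPeeling A Z) (hi : i ∈ A)
    (hcard : Finset.card {d ∈ P.outer A i | ¬ P.IsShortStem Z d} ≤ 1) :
    P.outer A i = ∅ ∨ (∃ e, P.outer A i = {e}) ∨
      ∃ z e, P.IsShortStem Z z ∧ e ∉ Z ∧ P.outer A i = {z, e} := by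
  by_cases hz : ∃ z ∈ P.outer A i, P.IsShortStem Z z
  · obtain ⟨z, hz, hzS⟩ := hz
    obtain ⟨rfl, htz⟩ := mem_outer.1 hz
    have notMem : ∀ e ∈ (P.outer A (P.head z)).erase z, e ∉ Z := by
      intro e he heZ
      obtain ⟨hne, he⟩ := Finset.mem_erase.1 he
      obtain ⟨he, hte⟩ := mem_outer.1 he
      exact hne (h.eq_of_mem z e hi htz hzS.1 (he ▸ hi) hte heZ hzS.2.1.ge)
    have hsub : (P.outer A (P.head z)).erase z ⊆
        {d ∈ P.outer A (P.head z) | ¬ P.IsShortStem Z d} := fun e he =>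
      Finset.mem_filter.2 ⟨Finset.mem_of_mem_erase he, fun h => notMem e he h.1⟩
    rw [← Finset.insert_erase hz]
    obtain h0 | h1 := Nat.le_one_iff_eq_zero_or_eq_one.1 ((Finset.card_le_card hsub).trans hcard)
    · exact .inr (.inl ⟨z, by rw [Finset.card_eq_zero.1 h0]; rfl⟩)
    · obtain ⟨e, he⟩ := Finset.card_eq_one.1 h1
      exact .inr (.inr ⟨z, e, hzS, notMem e (by simp [he]), by rw [he]⟩)
  · push Not at hz
    rw [Finset.filter_true_of_mem hz] at hcard
    obtain h0 | h1 := Nat.le_one_iff_eq_zero_or_eq_one.1 hcard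
    · exact .inl (Finset.card_eq_zero.1 h0)
    · exact .inr (.inl (Finset.card_eq_one.1 h1))

open scoped Classical in
theorem IsPeeling.isPeelable (h : P.IsPeeling A Z) (hi : i ∈ A) (h0 : P.inner A i = {d'})
    (hcard : Finset.card {d ∈ P.outer A i | ¬ P.IsShortStem Z d} ≤ 1) :
    P.IsPeelable A Z i d' := by
  obtain hN | ⟨e, hN⟩ | ⟨z, e, hz, he, hN⟩ := h.outer_cases hi hcard
  · exact isPeelable_of_outer_eq_empty h0 hN
  · exact h.isPeelable_of_outer_eq_singleton hi h0 hN
  · exact h.isPeelable_of_outer_eq_pair hi h0 hz he hN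

end Peelable

section EraseLeaf

variable {d : D}

/-- The stems after the elimination of `i`: the arrow `rev d'` inherits this status from the arrows
which entered `A` at `i`. -/
def stemsErase (P : PreprojectiveTrace K B V D) (A : Finset V) (Z : Set D) (i : V) (d' : D) :
    Set D :=
  {d | (d ≠ P.rev d' ∧ d ∈ Z) ∨ (d = P.rev d' ∧ ∃ e ∈ P.outer A i, e ∈ Z)}

theorem mem_stemsErase_of_ne (hd : d ≠ P.rev d') : d ∈ P.stemsErase A Z i d' ↔ d ∈ Z := by
  simp [stemsErase, hd]

theorem rev_mem_stemsErase :
    P.rev d' ∈ P.stemsErase A Z i d' ↔ ∃ e ∈ P.outer A i, e ∈ Z := by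
  simp [stemsErase]

section InnerEq

variable (h0 : P.inner A i = {d'})
include h0

theorem eq_of_inner_eq (hd : P.head d = i) (ht : P.tail d ∈ A) : d = d' :=
  Finset.mem_singleton.1 (h0 ▸ mem_inner.2 ⟨hd, ht⟩)

theorem eq_rev_of_inner_eq (hd : P.head d ∈ A) (ht : P.tail d = i) : d = P.rev d' := by
  rw [← eq_of_inner_eq h0 (d := P.rev d) ht (by rwa [tail_rev]), P.rev_rev]

theorem tail_rev_eq_of_inner_eq : P.tail (P.rev d') = i := by
  rw [tail_rev, (head_eq_of_inner_eq h0).1]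

theorem tail_ne_of_inner_eq (hi : i ∈ A) : P.tail d' ≠ i := fun h => P.rev_ne d'
  (eq_of_inner_eq h0 (d := P.rev d') h (by rwa [tail_rev_eq_of_inner_eq h0]))

theorem eq_rev_or_of_inner_eq (hd : P.head d ∈ A.erase i) (ht : P.tail d ∉ A.erase i) :
    d = P.rev d' ∨ (d ≠ P.rev d' ∧ P.head d ∈ A ∧ P.tail d ∉ A) := by
  have hdA := Finset.mem_of_mem_erase hd
  by_cases h : P.tail d = i
  · exact .inl (eq_rev_of_inner_eq h0 hdA h)
  · exact .inr ⟨fun h' => h (h' ▸ tail_rev_eq_of_inner_eq h0), hdA,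
      fun h3 => ht (Finset.mem_erase.2 ⟨h, h3⟩)⟩

end InnerEq

theorem IsPeeling.erase_exists_mem (h : P.IsPeeling A Z) (hi : i ∈ A) (h0 : P.inner A i = {d'})
    {T : Finset V} (hT : T ⊆ A.erase i) (hne : T.Nonempty)
    (hcl : ∀ d, P.head d ∈ T → P.tail d ∈ A.erase i → P.tail d ∈ T) :
    ∃ d, P.head d ∈ T ∧ P.tail d ∉ A.erase i ∧ d ∈ P.stemsErase A Z i d' := by
  have lift {d} (hd : P.head d ∈ T) (ht : P.tail d ∉ A) (hz : d ∈ Z) :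
      ∃ d, P.head d ∈ T ∧ P.tail d ∉ A.erase i ∧ d ∈ P.stemsErase A Z i d' := by
    refine ⟨d, hd, fun h => ht (Finset.mem_of_mem_erase h), (mem_stemsErase_of_ne ?_).2 hz⟩
    rintro rfl
    exact ht (tail_rev_eq_of_inner_eq h0 ▸ hi)
  by_cases hk : P.tail d' ∈ T
  · obtain ⟨d, hd, ht, hz⟩ := h.exists_mem (insert i T)
      (Finset.insert_subset hi (hT.trans (A.erase_subset i))) (by simp) fun d hd ht => by
        obtain hd | hd := Finset.mem_insert.1 hd
        · exact Finset.mem_insert_of_mem (eq_of_inner_eq h0 hd ht ▸ hk)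
        · by_cases h : P.tail d = i
          · exact h ▸ Finset.mem_insert_self _ _
          · exact Finset.mem_insert_of_mem (hcl d hd (Finset.mem_erase.2 ⟨h, ht⟩))
    obtain hd | hd := Finset.mem_insert.1 hd
    · refine ⟨P.rev d', hk, by simp [tail_rev_eq_of_inner_eq h0], rev_mem_stemsErase.2 ?_⟩
      exact ⟨d, mem_outer.2 ⟨hd, ht⟩, hz⟩
    · exact lift hd ht hz
  · obtain ⟨d, hd, ht, hz⟩ := h.exists_mem T (hT.trans (A.erase_subset i)) hne fun d hd ht => by
      refine hcl d hd (Finset.mem_erase.2 ⟨fun h => hk ?_, ht⟩)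
      have := eq_rev_of_inner_eq h0 (Finset.mem_of_mem_erase (hT hd)) h
      rwa [this] at hd
    exact lift hd ht hz

theorem IsPeeling.erase_eq_of_mem (h : P.IsPeeling A Z) (hi : i ∈ A)
    (hP : P.IsPeelable A Z i d') {c : D} (hd : P.head d ∈ A.erase i) (ht : P.tail d ∉ A.erase i)
    (hdZ : d ∈ P.stemsErase A Z i d') (hc : P.head c ∈ A.erase i) (htc : P.tail c ∉ A.erase i)
    (hcZ : c ∈ P.stemsErase A Z i d') (h2 : 2 ≤ P.dim (P.head d)) : c = d := by
  have ne_head {e x : D} (he : P.head e = i) (hx : P.head x ∈ A.erase i) : x ≠ e := by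
    rintro rfl
    exact Finset.ne_of_mem_erase hx he
  obtain rfl | ⟨hne, hdA, htA⟩ := eq_rev_or_of_inner_eq hP.inner_eq hd ht <;>
    obtain rfl | ⟨hnec, hcA, htcA⟩ := eq_rev_or_of_inner_eq hP.inner_eq hc htc
  · rfl
  · obtain ⟨e, he, heZ⟩ := rev_mem_stemsErase.1 hdZ
    obtain ⟨hei, hte⟩ := mem_outer.1 he
    have hce := h.eq_of_mem e c (hei ▸ hi) hte heZ hcA htcA ((mem_stemsErase_of_ne hnec).1 hcZ)
      (hei ▸ hP.two_le_dim ⟨e, he, heZ⟩ h2)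
    exact absurd hce (ne_head hei hc)
  · obtain ⟨e, he, heZ⟩ := rev_mem_stemsErase.1 hcZ
    obtain ⟨hei, hte⟩ := mem_outer.1 he
    have hed := h.eq_of_mem d e hdA htA ((mem_stemsErase_of_ne hne).1 hdZ) (hei ▸ hi) hte heZ h2
    exact absurd hed.symm (ne_head hei hd)
  · exact h.eq_of_mem d c hdA htA ((mem_stemsErase_of_ne hne).1 hdZ) hcA htcA
      ((mem_stemsErase_of_ne hnec).1 hcZ) h2

theorem IsPeeling.erase (h : P.IsPeeling A Z) (hi : i ∈ A) (hP : P.IsPeelable A Z i d') :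
    P.IsPeeling (A.erase i) (P.stemsErase A Z i d') := by
  have cases {d} := eq_rev_or_of_inner_eq (d := d) hP.inner_eq
  refine ⟨fun d hd ht => ?_, fun d hd ht hZ => ?_, fun d hd ht hZ => ?_,
    fun d c => h.erase_eq_of_mem hi hP, fun T => h.erase_exists_mem hi hP.inner_eq⟩ <;>
    obtain rfl | ⟨hne, hdA, htA⟩ := cases hd ht
  · exact vanishesOnPowers_loop_rev hP.tr_loop
  · exact h.tr_loop d hdA htA
  · exact hP.isArm fun e he heZ => hZ (rev_mem_stemsErase.2 ⟨e, he, heZ⟩)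
  · exact h.isArm d hdA htA fun hdZ => hZ ((mem_stemsErase_of_ne hne).2 hdZ)
  · exact hP.isStem (rev_mem_stemsErase.1 hZ)
  · exact h.isStem d hdA htA ((mem_stemsErase_of_ne hne).1 hZ)

theorem IsPeelable.generators_subset (hP : P.IsPeelable A Z i d') :
    P.generators A ⊆ NonUnitalAlgebra.adjoin K
      (P.generators (A.erase i) ∪ {P.arr (P.rev d'), P.arr d'}) := by
  have sub := NonUnitalAlgebra.subset_adjoin K
    (s := P.generators (A.erase i) ∪ {P.arr (P.rev d'), P.arr d'})
  rintro _ ⟨d, hd, h⟩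
  by_cases hdi : P.head d = i
  · obtain ⟨ht, rfl⟩ | ⟨ht, rfl⟩ := h
    · rw [eq_of_inner_eq hP.inner_eq hdi ht]
      exact sub (by simp)
    · obtain h | h := hP.loop_eq d (mem_outer.2 ⟨hdi, ht⟩) <;> rw [h]
      · exact zero_mem _
      · exact neg_mem (SMulMemClass.smul_mem _ (mul_mem (sub (by simp)) (sub (by simp))))
  · have hdA : P.head d ∈ A.erase i := Finset.mem_erase.2 ⟨hdi, hd⟩
    obtain ⟨ht, rfl⟩ | ⟨ht, rfl⟩ := h
    · by_cases hti : P.tail d = i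
      · rw [eq_rev_of_inner_eq hP.inner_eq hd hti]
        exact sub (by simp)
      · exact sub (.inl ⟨d, hdA, .inl ⟨Finset.mem_erase.2 ⟨hti, ht⟩, rfl⟩⟩)
    · exact sub (.inl ⟨d, hdA, .inr ⟨fun h => ht (Finset.mem_of_mem_erase h), rfl⟩⟩)

theorem IsPeelable.vanishesOn_generators (hP : P.IsPeelable A Z i d') (hi : i ∈ A)
    (hA : VanishesOn P.tr (P.generators (A.erase i))) : VanishesOn P.tr (P.generators A) := by
  obtain ⟨hd', hk⟩ := head_eq_of_inner_eq hP.inner_eq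
  have hrev := tail_rev_eq_of_inner_eq hP.inner_eq
  have hki := tail_ne_of_inner_eq hP.inner_eq hi
  have hni : i ∉ A.erase i := A.notMem_erase i
  have hgen : P.loop (P.rev d') ∈ P.generators (A.erase i) :=
    ⟨P.rev d', Finset.mem_erase.2 ⟨hki, hk⟩, .inr ⟨by rwa [hrev], rfl⟩⟩
  have hmul : P.arr (P.rev d') * P.arr d' = P.sign (P.rev d') • P.loop (P.rev d') := by
    rw [← arr_mul_arr_rev, P.rev_rev]
  refine VanishesOn.of_subset_adjoin
    (VanishesOn.union_pair P.tracial hA hgen hmul ?_ ?_ ?_ ?_ ?_ ?_) hP.generators_subset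
  · exact fun g => arr_mul_generator (by rwa [hrev])
  · exact fun g => generator_mul_arr (by rwa [hd'])
  · exact P.arr_mul_arr _ _ (by rw [P.rev_rev, hd']; exact hki.symm)
  · exact P.arr_mul_arr _ _ (by rw [hd']; exact hki)
  · exact P.tr_arr _ (by rw [P.rev_rev, hd']; exact hki)
  · exact P.tr_arr _ (by rw [hd']; exact hki.symm)

end EraseLeaf

theorem vanishesOn_generators_empty : VanishesOn P.tr (P.generators ∅) := by
  have : P.generators ∅ = ∅ := by simp [generators]
  rw [this]
  intro b hb
  rw [NonUnitalAlgebra.adjoin_empty, NonUnitalAlgebra.mem_bot] at hb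
  rw [hb, map_zero]

theorem IsPeeling.vanishesOn_generators [CharZero K] (h : P.IsPeeling A Z) :
    VanishesOn P.tr (P.generators A) := by
  induction A using Finset.strongInduction generalizing Z with | H A ih
  obtain rfl | hA := A.eq_empty_or_nonempty
  · exact vanishesOn_generators_empty
  obtain ⟨i, hi, h0 | ⟨h1, hcard⟩⟩ := h.exists_inner_card_le_one hA
  · exact h.vanishesOn_generators_of_inner_eq_empty h0 hi
      (ih _ (A.erase_ssubset hi) (h.erase_of_inner_eq_empty h0))
  · obtain ⟨d', h0⟩ := Finset.card_eq_one.1 h1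
    have hP := h.isPeelable hi h0 hcard
    exact hP.vanishesOn_generators hi (ih _ (A.erase_ssubset hi) (h.erase hi hP))

section Extending

variable {v0 : V}

theorem dim_add_dim_le_of_dim_eq_one (hv0 : P.dim v0 = 1) {d d' : D} (hd : P.tail d = v0)
    (hd' : P.tail d' = v0) (hne : d' ≠ d) : P.dim (P.head d') + P.dim (P.head d) ≤ 2 := by
  classical
  have hne' : P.rev d' ≠ P.rev d := fun h => hne (by rw [← P.rev_rev d', h, P.rev_rev])
  have hsum := P.sum_dim_tail v0
  have hpair := Finset.sum_pair (f := fun e => P.dim (P.head (P.rev e))) hne'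
  rw [P.rev_rev, P.rev_rev] at hpair
  rw [← hpair, ← mul_one 2, ← hv0, ← hsum]
  refine Finset.sum_le_sum_of_subset ?_
  simp [Finset.insert_subset_iff, head_rev, hd, hd']

theorem dim_head_le_two_of_dim_eq_one (hv0 : P.dim v0 = 1) {d : D} (hd : P.tail d = v0) :
    P.dim (P.head d) ≤ 2 := by
  have hsum := P.sum_dim_tail v0
  have hle := Finset.single_le_sum (f := fun e => P.dim (P.head (P.rev e)))
    (s := {e | P.head e = v0}) (fun _ _ => Nat.zero_le _) (a := P.rev d)
    (by simpa [head_rev] using hd)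
  rw [P.rev_rev, hsum, hv0] at hle
  exact hle

theorem isPeeling_univ_erase [Fintype V] (hv0 : P.dim v0 = 1)
    (harr : ∀ d, P.tail d = v0 → P.arr d = 0)
    (hconn : ∀ T : Set V, T.Nonempty → (∀ d, P.head d ∈ T → P.tail d ∈ T) → v0 ∈ T) :
    P.IsPeeling (Finset.univ.erase v0) Set.univ := by
  have tail_eq {d} (h : P.tail d ∉ Finset.univ.erase v0) : P.tail d = v0 := by simpa using h
  have loop_eq {d} (h : P.tail d ∉ Finset.univ.erase v0) : P.loop d = 0 := by
    rw [loop, harr d (tail_eq h), zero_mul, smul_zero]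
  refine ⟨fun d _ h k hk => ?_, fun d _ _ h => absurd (Set.mem_univ _) h, fun d _ h _ => ?_,
    fun d d' _ h _ _ h' _ h2 => ?_, fun T hT hne hcl => ?_⟩
  · rw [loop_eq h, zero_pow hk, map_zero]
  · have hle := dim_head_le_two_of_dim_eq_one hv0 (tail_eq h)
    have := P.dim_pos (P.head d)
    rw [IsStem, tail_eq h, hv0, pow_one, loop_eq h]
    obtain h1 | h2 : P.dim (P.head d) = 1 ∨ P.dim (P.head d) = 2 := by omega
    · exact .inr (.inl ⟨h1, rfl⟩)
    · exact .inl ⟨h2, rfl⟩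
  · by_contra hne
    have hle := dim_add_dim_le_of_dim_eq_one hv0 (tail_eq h) (tail_eq h') hne
    have := P.dim_pos (P.head d')
    omega
  · by_contra! hcon
    have hmem := hconn T hne fun d hd => by
      by_contra ht
      exact hcon d hd (fun h' => ht (hcl d hd h')) (Set.mem_univ _)
    simpa using hT hmem

theorem tr_prod_eq_zero [CharZero K] [Finite V] (hv0 : P.dim v0 = 1)
    (harr : ∀ d, P.head d = v0 ∨ P.tail d = v0 → P.arr d = 0)
    (hconn : ∀ T : Set V, T.Nonempty → (∀ d, P.head d ∈ T → P.tail d ∈ T) → v0 ∈ T)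
    {l : List D} (hl : l ≠ []) : P.tr (l.map P.arr).prod = 0 := by
  cases nonempty_fintype V
  by_cases hbad : ∃ d ∈ l, P.arr d = 0
  · obtain ⟨d, hd, h⟩ := hbad
    rw [List.prod_eq_zero (h ▸ List.mem_map_of_mem hd), map_zero]
  push Not at hbad
  refine (isPeeling_univ_erase hv0 (fun d h => harr d (.inr h)) hconn).vanishesOn_generators _ ?_
  have hmem : ∀ d ∈ l, P.arr d ∈ P.generators (Finset.univ.erase v0) := fun d hd =>
    ⟨d, by simpa using fun h => hbad d hd (harr d (.inl h)),
      .inl ⟨by simpa using fun h => hbad d hd (harr d (.inr h)), rfl⟩⟩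
  clear hbad
  induction l with
  | nil => exact absurd rfl hl
  | cons d l ih =>
    have hd := NonUnitalAlgebra.subset_adjoin K (hmem d (by simp))
    obtain rfl | hl := eq_or_ne l []
    · simpa using hd
    · rw [List.map_cons, List.prod_cons]
      exact mul_mem hd (ih hl fun d hd => hmem d (by simp [hd]))

end Extending

end PreprojectiveTrace

/-! ### Words in solutions of the deformed preprojective relation -/

namespace IsTracial

variable {K B : Type*} [Field K] [Ring B] [Algebra K B] {f : B →ₗ[K] K}

/-- Congruence modulo the radical of the trace form `(a, b) ↦ f (a b)`. -/
def radicalCon (hf : IsTracial f) : RingCon B where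
  r a b := ∀ u, f (u * a) = f (u * b)
  iseqv := ⟨fun _ _ => rfl, fun h u => (h u).symm, fun h h' u => (h u).trans (h' u)⟩
  mul' {w x y z} h h' u := by
    calc f (u * (w * y)) = f (y * u * w) := by rw [← mul_assoc, hf, mul_assoc]
      _ = f (y * u * x) := h _
      _ = f (u * x * y) := by rw [mul_assoc, hf]
      _ = f (u * x * z) := h' _
      _ = f (u * (x * z)) := by rw [mul_assoc]
  add' h h' u := by rw [mul_add, mul_add, map_add, map_add, h, h']

/-- The functional which a tracial functional induces modulo the radical of its trace form. -/
def onQuotient (hf : IsTracial f) : hf.radicalCon.Quotient →ₗ[K] K where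
  toFun := Quotient.lift f fun a b h => by simpa only [one_mul] using h 1
  map_add' := by
    rintro ⟨a⟩ ⟨b⟩
    exact map_add f a b
  map_smul' := by
    rintro k ⟨a⟩
    exact map_smul f k a

theorem onQuotient_coe (hf : IsTracial f) (a : B) : hf.onQuotient a = f a := rfl

theorem isTracial_onQuotient (hf : IsTracial f) : IsTracial hf.onQuotient := by
  rintro ⟨a⟩ ⟨b⟩
  exact hf a b

theorem coe_eq_zero (hf : IsTracial f) {a : B} (h : ∀ u, f (u * a) = 0) :
    (a : hf.radicalCon.Quotient) = 0 :=
  (hf.radicalCon.eq).2 fun u => by rw [h, mul_zero, map_zero]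

end IsTracial

section Words

open FreeAlgebra

variable {K R D J : Type*} [Field K] [CommRing R] [Algebra K R]

theorem linearMap_eq_zero_of_words {f : FreeAlgebra K D →ₗ[K] K}
    (h : ∀ l : List D, f (l.map (ι K)).prod = 0) : f = 0 := by
  have hspan : Submodule.span K
      (Submonoid.closure (Set.range (ι K (X := D))) : Set (FreeAlgebra K D)) = ⊤ := by
    rw [← Algebra.adjoin_eq_span, adjoin_range_ι, Algebra.top_toSubmodule]
  refine LinearMap.ext_on hspan fun x hx => ?_
  obtain ⟨l, hl, rfl⟩ := Submonoid.exists_list_of_mem_closure hx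
  obtain ⟨m, rfl⟩ : l ∈ Set.range (List.map (ι K (X := D))) := by
    rw [Set.range_list_map]
    exact hl
  exact h m

variable [Fintype J] [DecidableEq J]

open Polynomial in
/-- The functional `w ↦ φ (tr (X w))` on the words `w` of length `n`, extended by zero to the other
words; the length is recorded by the exponent of a polynomial variable. -/
def wordFunctional (X : D → Matrix J J R) (φ : R →ₗ[K] K) (n : ℕ) :
    FreeAlgebra K D →ₗ[K] K :=
  φ ∘ₗ (lcoeff R n).restrictScalars K ∘ₗ Matrix.traceLinearMap J K R[X] ∘ₗ
    (lift K fun d => (Polynomial.X : R[X]) • (X d).map C).toLinearMap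

variable (X : D → Matrix J J R) (φ : R →ₗ[K] K) (n : ℕ)

open Polynomial in
theorem wordFunctional_apply (a : FreeAlgebra K D) : wordFunctional X φ n a =
    φ ((lift K (fun d => (Polynomial.X : R[X]) • (X d).map C) a).trace.coeff n) := rfl

theorem isTracial_wordFunctional : IsTracial (wordFunctional X φ n) := fun a b => by
  rw [wordFunctional_apply, wordFunctional_apply, map_mul, map_mul, Matrix.trace_mul_comm]

open Polynomial in
theorem lift_X_smul_prod (l : List D) :
    lift K (fun d => (Polynomial.X : R[X]) • (X d).map C) (l.map (ι K)).prod =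
      (Polynomial.X ^ l.length : R[X]) • C.mapMatrix (l.map X).prod := by
  induction l with
  | nil => simp
  | cons a l ih =>
    simp only [List.map_cons, List.prod_cons, map_mul, ih, lift_ι_apply, List.length_cons, pow_succ,
      Matrix.smul_mul, Matrix.mul_smul, smul_smul, RingHom.mapMatrix_apply]

theorem wordFunctional_prod (l : List D) : wordFunctional X φ n (l.map (ι K)).prod =
    if l.length = n then φ (l.map X).prod.trace else 0 := by
  have htr (A : Matrix J J R) : (Polynomial.C.mapMatrix A).trace = Polynomial.C A.trace :=
    (AddMonoidHom.map_trace Polynomial.C.toAddMonoidHom A).symm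
  rw [wordFunctional_apply, lift_X_smul_prod, Matrix.trace_smul, htr, smul_eq_mul, mul_comm,
    Polynomial.coeff_C_mul_X_pow, apply_ite φ, map_zero]
  simp only [eq_comm]

theorem wordFunctional_prod_mul_prod (l m : List D) :
    wordFunctional X φ n ((l.map (ι K)).prod * (m.map (ι K)).prod) =
      if l.length + m.length = n then φ ((l.map X).prod * (m.map X).prod).trace else 0 := by
  simpa only [List.map_append, List.prod_append, List.length_append] using
    wordFunctional_prod X φ n (l ++ m)

variable {X φ n}

theorem coe_eq_zero_of_wordFunctional {b : FreeAlgebra K D}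
    (h : ∀ l : List D, wordFunctional X φ n ((l.map (ι K)).prod * b) = 0) :
    (b : (isTracial_wordFunctional X φ n).radicalCon.Quotient) = 0 :=
  (isTracial_wordFunctional X φ n).coe_eq_zero <| LinearMap.congr_fun <|
    linearMap_eq_zero_of_words (f := wordFunctional X φ n ∘ₗ LinearMap.mulRight K b) h

end Words

/-- A family of matrices over a commutative `K`-algebra solving the deformed preprojective relation
of a doubled quiver with parameter `weight`, together with the idempotents `idem` of the vertices
and a positive vector `dim` in the radical of the symmetric Euler form. -/
structure PreprojectiveMatrices (K R V D J : Type*) [Field K] [CommRing R] [Algebra K R]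
    [Fintype D] [DecidableEq V] [Fintype J] where
  head : D → V
  rev : D → D
  sign : D → K
  weight : V → K
  dim : V → ℕ
  mat : D → Matrix J J R
  idem : V → Matrix J J R
  rev_rev : ∀ d, rev (rev d) = d
  rev_ne : ∀ d, rev d ≠ d
  sign_mul_self : ∀ d, sign d * sign d = 1
  mat_mul_mat : ∀ a b, head (rev a) ≠ head b → mat a * mat b = 0
  sum_mat_mul_mat_rev :
    ∀ i, ∑ d with head d = i, sign d • (mat d * mat (rev d)) = weight i • idem i
  idem_mul_mat : ∀ i d, idem i * mat d = if head d = i then mat d else 0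
  trace_mat : ∀ d, head d ≠ head (rev d) → (mat d).trace = 0
  dim_pos : ∀ i, 0 < dim i
  sum_dim_tail : ∀ i, ∑ d with head d = i, dim (head (rev d)) = 2 * dim i

namespace PreprojectiveMatrices

open FreeAlgebra

variable {K R V D J : Type*} [Field K] [CommRing R] [Algebra K R] [Fintype D] [DecidableEq V]
  [Fintype J] [DecidableEq J] (M : PreprojectiveMatrices K R V D J) {φ : R →ₗ[K] K} {n : ℕ}

/-- The trace of a word of length `n - 2` times the idempotent of a vertex is killed by `φ`. -/
def KillsShorter (φ : R →ₗ[K] K) (n : ℕ) : Prop :=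
  ∀ i, ∀ l : List D, l.length + 2 = n → φ ((l.map M.mat).prod * M.idem i).trace = 0

theorem wordFunctional_mul_sum (hφ : M.KillsShorter φ n) (i : V) (l : List D) :
    wordFunctional M.mat φ n ((l.map (ι K)).prod *
      ∑ d with M.head d = i, M.sign d • (ι K d * ι K (M.rev d))) = 0 := by
  have hterm (d : D) : wordFunctional M.mat φ n
      ((l.map (ι K)).prod * M.sign d • (ι K d * ι K (M.rev d))) =
        if l.length + 2 = n then
          φ ((l.map M.mat).prod * M.sign d • (M.mat d * M.mat (M.rev d))).trace else 0 := by
    have := wordFunctional_prod_mul_prod M.mat φ n l [d, M.rev d]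
    simp only [List.map_cons, List.map_nil, List.prod_cons, List.prod_nil, mul_one] at this
    rw [mul_smul_comm, map_smul, this]
    simp [Matrix.trace_smul]
  rw [Finset.mul_sum, map_sum, Finset.sum_congr rfl fun d _ => hterm d]
  split_ifs with hl
  · rw [← map_sum, ← Matrix.trace_sum, ← Finset.mul_sum, M.sum_mat_mul_mat_rev, mul_smul_comm,
      Matrix.trace_smul, map_smul, hφ i l hl, smul_zero]
  · exact Finset.sum_const_zero

/-- The trace on the free algebra modulo the radical of `wordFunctional`. -/
def preprojectiveTrace (hφ : M.KillsShorter φ n) :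
    PreprojectiveTrace K (isTracial_wordFunctional M.mat φ n).radicalCon.Quotient V D where
  head := M.head
  rev := M.rev
  arr d := (ι K d : FreeAlgebra K D)
  sign := M.sign
  dim := M.dim
  tr := (isTracial_wordFunctional M.mat φ n).onQuotient
  rev_rev := M.rev_rev
  rev_ne := M.rev_ne
  sign_mul_self := M.sign_mul_self
  arr_mul_arr a b hab := coe_eq_zero_of_wordFunctional fun l => by
    have := wordFunctional_prod_mul_prod M.mat φ n l [a, b]
    simp only [List.map_cons, List.map_nil, List.prod_cons, List.prod_nil, mul_one] at this
    simp [this, M.mat_mul_mat a b hab]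
  sum_arr_mul_arr_rev i :=
    (map_sum (isTracial_wordFunctional M.mat φ n).radicalCon.mk'
      (fun d => M.sign d • (ι K d * ι K (M.rev d))) _).symm.trans
        (coe_eq_zero_of_wordFunctional (M.wordFunctional_mul_sum hφ i))
  tr_arr d hd := by
    have := wordFunctional_prod M.mat φ n [d]
    simp only [List.map_cons, List.map_nil, List.prod_cons, List.prod_nil, mul_one] at this
    rw [IsTracial.onQuotient_coe, this, M.trace_mat d hd, map_zero, ite_self]
  tracial := IsTracial.isTracial_onQuotient _
  dim_pos := M.dim_pos
  sum_dim_tail := M.sum_dim_tail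

theorem prod_arr (hφ : M.KillsShorter φ n) (l : List D) :
    (l.map (M.preprojectiveTrace hφ).arr).prod = ((l.map (ι K)).prod : FreeAlgebra K D) :=
  ((map_list_prod (isTracial_wordFunctional M.mat φ n).radicalCon.mk' (l.map (ι K))).trans
    (by rw [List.map_map]; rfl)).symm

theorem tr_prod_arr (hφ : M.KillsShorter φ n) (l : List D) :
    (M.preprojectiveTrace hφ).tr (l.map (M.preprojectiveTrace hφ).arr).prod =
      if l.length = n then φ (l.map M.mat).prod.trace else 0 := by
  rw [prod_arr, ← wordFunctional_prod]
  rfl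

theorem arr_eq_zero (hφ : M.KillsShorter φ n) {d : D}
    (hd : ∀ l : List D, φ ((l.map M.mat).prod * M.mat d).trace = 0) :
    (M.preprojectiveTrace hφ).arr d = 0 :=
  coe_eq_zero_of_wordFunctional fun l => by
    have := wordFunctional_prod_mul_prod M.mat φ n l [d]
    simp only [List.map_cons, List.map_nil, List.prod_cons, List.prod_nil, mul_one] at this
    rw [this, hd, ite_self]

variable {S : Submodule K R}

theorem trace_mul_idem_mem (hidem : ∀ i, (M.idem i).trace ∈ S) {l : List D}
    (hl : l ≠ [] → (l.map M.mat).prod.trace ∈ S) (i : V) :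
    ((l.map M.mat).prod * M.idem i).trace ∈ S := by
  rw [Matrix.trace_mul_comm]
  rcases l with _ | ⟨a, l⟩
  · simpa using hidem i
  · rw [List.map_cons, List.prod_cons, ← mul_assoc, M.idem_mul_mat]
    split_ifs
    · exact hl (List.cons_ne_nil a l)
    · simp

/-- A functional separating a shortest counterexample from `S` would give a preprojective trace in
which all arrows at `v0` vanish. -/
theorem trace_prod_mem [CharZero K] [Finite V] {v0 : V} (hv0 : M.dim v0 = 1)
    (hconn : ∀ T : Set V, T.Nonempty → (∀ d, M.head d ∈ T → M.head (M.rev d) ∈ T) → v0 ∈ T)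
    (hidem : ∀ i, (M.idem i).trace ∈ S)
    (hS : ∀ l : List D, (∃ d ∈ l, M.head d = v0 ∨ M.head (M.rev d) = v0) →
      (l.map M.mat).prod.trace ∈ S) {l : List D} (hl : l ≠ []) :
    (l.map M.mat).prod.trace ∈ S := by
  induction hn : l.length using Nat.strong_induction_on generalizing l with
  | _ n ih =>
  by_contra hcon
  obtain ⟨φ, hne, hker⟩ := Submodule.exists_le_ker_of_notMem hcon
  have hφ : M.KillsShorter φ n := fun i w hw =>
    hker (M.trace_mul_idem_mem hidem (fun hw' => ih w.length (by omega) hw' rfl) i)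
  have harr (d : D) (hd : M.head d = v0 ∨ M.head (M.rev d) = v0) :
      (M.preprojectiveTrace hφ).arr d = 0 := M.arr_eq_zero hφ fun w => by
    simpa using hker (hS (w ++ [d]) ⟨d, by simp, hd⟩)
  refine hne ?_
  rw [← (M.preprojectiveTrace hφ).tr_prod_eq_zero hv0 harr hconn hl, M.tr_prod_arr, if_pos hn]

end PreprojectiveMatrices

/-! ### Averaging and the double centralizer property -/

section OrthogonalProjection

variable {k E : Type*} [Field k] [AddCommGroup E] [Module k E] [FiniteDimensional k E]

theorem isCompl_orthogonal_of_anisotropic {B : LinearMap.BilinForm k E} (hB : B.IsSymm)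
    (hB0 : ∀ x, B x x = 0 → x = 0) (W : Submodule k E) : IsCompl W (B.orthogonal W) :=
  (LinearMap.BilinForm.isCompl_orthogonal_iff_disjoint hB.isRefl).2 <|
    Submodule.disjoint_def.2 fun x hx hx' => hB0 x (hx' x hx)

theorem exists_equivariant_projection {B : LinearMap.BilinForm k E} (hB : B.IsSymm)
    (hB0 : ∀ x, B x x = 0 → x = 0) (W : Submodule k E) :
    ∃ P : E →ₗ[k] E, (∀ x, P x ∈ W) ∧ (∀ x ∈ W, P x = x) ∧
      ∀ T T' : E →ₗ[k] E, B.IsAdjointPair B T' T → (∀ x ∈ W, T x ∈ W) → (∀ x ∈ W, T' x ∈ W) →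
        ∀ x, P (T x) = T (P x) := by
  have hcompl := isCompl_orthogonal_of_anisotropic hB hB0 W
  refine ⟨W.projection _ hcompl, Submodule.projection_apply_mem hcompl,
    fun x => Submodule.projection_apply_of_mem_left hcompl, fun T T' hT hW hW' x => ?_⟩
  have horth : T (x - W.projection _ hcompl x) ∈ B.orthogonal W := fun w hw => by
    rw [← hT]
    exact Submodule.sub_projection_mem hcompl x _ (hW' w hw)
  have hzero := (Submodule.projection_apply_eq_zero_iff hcompl).2 horth
  rw [map_sub, map_sub, sub_eq_zero] at hzero
  rw [hzero, Submodule.projection_apply_of_mem_left hcompl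
    (hW _ (Submodule.projection_apply_mem hcompl x))]

end OrthogonalProjection

section TransposeClosed

open Matrix

variable {k Y : Type*} [Field k] [Fintype Y]

variable (k Y) in
/-- The form `(A, B) ↦ tr (A Bᵀ)`, for which multiplication by `g` and by `gᵀ` are adjoint. -/
def frobeniusForm : LinearMap.BilinForm k (Matrix Y Y k) :=
  LinearMap.mk₂ k (fun A B => (A * Bᵀ).trace) (by simp [add_mul]) (by simp) (by simp [mul_add])
    (by simp)

theorem frobeniusForm_apply (A B : Matrix Y Y k) : frobeniusForm k Y A B = (A * Bᵀ).trace := rfl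

theorem frobeniusForm_isSymm : (frobeniusForm k Y).IsSymm :=
  ⟨fun A B => by
    rw [frobeniusForm_apply, frobeniusForm_apply, ← trace_transpose, transpose_mul,
      transpose_transpose]⟩

theorem isAdjointPair_frobeniusForm (g h : Matrix Y Y k) :
    (frobeniusForm k Y).IsAdjointPair (frobeniusForm k Y)
      (LinearMap.mulLeftRight k (gᵀ, hᵀ)) (LinearMap.mulLeftRight k (g, h)) := fun A B => by
  simp only [frobeniusForm_apply, LinearMap.mulLeftRight_apply, transpose_mul]
  rw [mul_assoc, mul_assoc, trace_mul_comm]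
  simp only [mul_assoc]

theorem map_inv_eq_transpose [DecidableEq Y] {Γ : Type*} [Group Γ] (ρ : Γ →* Matrix Y Y k)
    {g h : Γ} (hgh : ρ h = (ρ g)ᵀ) : ρ h⁻¹ = (ρ g⁻¹)ᵀ :=
  left_inv_eq_right_inv (a := ρ h) (by rw [← map_mul, inv_mul_cancel, map_one])
    (by rw [hgh, ← transpose_mul, ← map_mul, inv_mul_cancel, map_one, transpose_one])

variable [LinearOrder k] [IsStrictOrderedRing k]

theorem eq_zero_of_frobeniusForm_self {A : Matrix Y Y k} (h : frobeniusForm k Y A A = 0) :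
    A = 0 := by
  simp only [frobeniusForm_apply, trace, diag_apply, mul_apply, transpose_apply] at h
  ext i j
  have hi := (Finset.sum_eq_zero_iff_of_nonneg
    fun i _ => Finset.sum_nonneg fun j _ => mul_self_nonneg (A i j)).1 h i (Finset.mem_univ i)
  simpa using (Finset.sum_eq_zero_iff_of_nonneg
    fun j _ => mul_self_nonneg (A i j)).1 hi j (Finset.mem_univ j)

theorem exists_matrix_projection (W : Submodule k (Matrix Y Y k)) :
    ∃ P : Matrix Y Y k →ₗ[k] Matrix Y Y k, (∀ A, P A ∈ W) ∧ (∀ A ∈ W, P A = A) ∧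
      ∀ g h, (∀ A ∈ W, g * A * h ∈ W) → (∀ A ∈ W, gᵀ * A * hᵀ ∈ W) →
        ∀ A, P (g * A * h) = g * P A * h := by
  obtain ⟨P, hmem, hid, hequiv⟩ := exists_equivariant_projection frobeniusForm_isSymm
    (fun A => eq_zero_of_frobeniusForm_self) W
  exact ⟨P, hmem, hid, fun g h => hequiv _ _ (isAdjointPair_frobeniusForm g h)⟩

variable [DecidableEq Y]

/-- If `P` is the orthogonal projection to `W`, each matrix `C p e = P (E e y) p z` commutes with
`G`, hence with `T`. This says that `P (T A) = T (P A)` for all `A`, and `A = 1` gives the claim. -/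
theorem mem_of_commute_centralizer {G : Set (Matrix Y Y k)} (hG : ∀ g ∈ G, gᵀ ∈ G)
    {W : Submodule k (Matrix Y Y k)} (hone : 1 ∈ W) (hmul : ∀ g ∈ G, ∀ A ∈ W, g * A ∈ W)
    {T : Matrix Y Y k} (hT : ∀ C, (∀ g ∈ G, Commute g C) → Commute C T) : T ∈ W := by
  obtain ⟨P, hmem, hid, hequiv⟩ := exists_matrix_projection W
  have hPG (g) (hg : g ∈ G) (A : Matrix Y Y k) : P (g * A) = g * P A := by
    simpa using hequiv g 1 (by simpa using hmul g hg) (by simpa using hmul gᵀ (hG g hg)) A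
  have hsum (A : Matrix Y Y k) (q y : Y) :
      P (A * single q y 1) = ∑ r, A r q • P (single r y 1) := by
    simp only [← map_smul, ← map_sum]
    congr 1
    ext i j
    by_cases hj : y = j <;> simp [mul_apply, Matrix.sum_apply, single_apply, hj]
  let C (y z : Y) : Matrix Y Y k := of fun p e => P (single e y 1) p z
  have hC (y z : Y) (A : Matrix Y Y k) (p q : Y) :
      (C y z * A) p q = P (A * single q y 1) p z := by
    rw [hsum, Matrix.sum_apply, mul_apply]
    exact Finset.sum_congr rfl fun r _ => by rw [Matrix.smul_apply, smul_eq_mul, mul_comm]; rfl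
  have hC' (y z : Y) (A : Matrix Y Y k) (p q : Y) :
      (A * C y z) p q = (A * P (single q y 1)) p z := rfl
  have hCG (y z : Y) (g) (hg : g ∈ G) : Commute g (C y z) := by
    ext p q
    rw [hC, hC', hPG g hg]
  have hPT (q y : Y) : P (T * single q y 1) = T * P (single q y 1) := by
    ext p z
    rw [← hC, ← hC', (hT _ (hCG y z)).eq]
  have hone' : (1 : Matrix Y Y k) = ∑ q, single q q 1 := sum_single_one.symm
  have hPone : P (T * 1) = T * P 1 := by
    simp only [hone', Finset.mul_sum, map_sum, hPT]
  rw [hid 1 hone, mul_one] at hPone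
  exact hPone ▸ hmem T

/-- The average of `T` over the conjugation action, obtained by removing from `T` its orthogonal
projection to the span of the differences `T' - T` with `T'` conjugate to `T`. -/
theorem exists_commute_sub_mem_span {Γ : Type*} [Group Γ] (ρ : Γ →* Matrix Y Y k)
    (hρ : ∀ g, ∃ h, ρ h = (ρ g)ᵀ) (T : Matrix Y Y k) :
    ∃ T' : Matrix Y Y k, (∀ g, Commute (ρ g) T') ∧
      T - T' ∈ Submodule.span k (Set.range fun g => ρ g⁻¹ * T * ρ g - T) := by
  set W := Submodule.span k (Set.range fun g => ρ g⁻¹ * T * ρ g - T)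
  have hdiff (g : Γ) : ρ g⁻¹ * T * ρ g - T ∈ W := Submodule.subset_span ⟨g, rfl⟩
  have hW (h : Γ) : ∀ A ∈ W, ρ h⁻¹ * A * ρ h ∈ W := by
    change W ≤ W.comap (LinearMap.mulLeftRight k (ρ h⁻¹, ρ h))
    refine Submodule.span_le.2 ?_
    rintro _ ⟨g, rfl⟩
    have hconj : ρ h⁻¹ * (ρ g⁻¹ * T * ρ g - T) * ρ h =
        (ρ (g * h)⁻¹ * T * ρ (g * h) - T) - (ρ h⁻¹ * T * ρ h - T) := by
      rw [_root_.mul_inv_rev, map_mul, map_mul]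
      noncomm_ring
    change ρ h⁻¹ * (ρ g⁻¹ * T * ρ g - T) * ρ h ∈ W
    exact hconj ▸ W.sub_mem (hdiff (g * h)) (hdiff h)
  obtain ⟨P, hmem, hid, hequiv⟩ := exists_matrix_projection W
  have hfix (g : Γ) : ρ g⁻¹ * (T - P T) * ρ g = T - P T := by
    obtain ⟨h, hh⟩ := hρ g
    have hP := hequiv (ρ g⁻¹) (ρ g) (hW g)
      (by rw [← hh, ← map_inv_eq_transpose ρ hh]; exact hW h) T
    have := hid _ (hdiff g)
    rw [map_sub, hP] at this
    rw [mul_sub, sub_mul, sub_eq_sub_iff_sub_eq_sub, ← this]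
  refine ⟨T - P T, fun g => ?_, by rw [sub_sub_cancel]; exact hmem T⟩
  rw [commute_iff_eq]
  nth_rw 1 [← hfix g]
  simp only [← mul_assoc, ← map_mul, mul_inv_cancel, map_one, one_mul]

end TransposeClosed

/-! ### Tensor powers and coloured permutations -/

section TensorPower

open Matrix

variable {R ι J : Type*} [CommRing R]

section

variable [DecidableEq J] [Fintype ι]

variable (R J) in
/-- The matrix permuting tensor factors by `σ`. -/
def permTensor (σ : Equiv.Perm ι) : Matrix (ι → J) (ι → J) R :=
  (σ⁻¹.arrowCongr (Equiv.refl J)).toPEquiv.toMatrix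

theorem transpose_permTensor (σ : Equiv.Perm ι) :
    (permTensor R J σ)ᵀ = permTensor R J σ⁻¹ := by
  rw [permTensor, permTensor, ← PEquiv.toMatrix_symm, ← Equiv.toPEquiv_symm]
  rfl

theorem map_permTensor {S : Type*} [CommRing S] (f : R →+* S) (σ : Equiv.Perm ι) :
    (permTensor R J σ).map f = permTensor S J σ := by
  rw [permTensor, PEquiv.map_toMatrix]
  rfl

theorem permTensor_one : permTensor R J (1 : Equiv.Perm ι) = 1 := by
  rw [permTensor, inv_one, ← PEquiv.toMatrix_refl]
  rfl

variable [DecidableEq ι] [Fintype J]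

theorem permTensor_mul_apply (σ : Equiv.Perm ι) (A : Matrix (ι → J) (ι → J) R) (p q : ι → J) :
    (permTensor R J σ * A) p q = A (p ∘ σ) q := by
  rw [permTensor, PEquiv.toMatrix_toPEquiv_mul]
  rfl

theorem mul_permTensor_apply (σ : Equiv.Perm ι) (A : Matrix (ι → J) (ι → J) R) (p q : ι → J) :
    (A * permTensor R J σ) p q = A p (q ∘ (σ⁻¹ : Equiv.Perm ι)) := by
  rw [permTensor, PEquiv.mul_toMatrix_toPEquiv]
  rfl

theorem permTensor_mul_permTensor (σ τ : Equiv.Perm ι) :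
    permTensor R J σ * permTensor R J τ = permTensor R J (σ * τ) := by
  rw [← mul_one (permTensor R J τ), ← mul_one (permTensor R J (σ * τ))]
  ext p q
  rw [permTensor_mul_apply, permTensor_mul_apply, permTensor_mul_apply]
  rfl

end

variable [Fintype ι]

/-- The Kronecker product of a family of square matrices, with rows and columns indexed by
multi-indices `ι → J`. -/
def tensor (M : ι → Matrix J J R) : Matrix (ι → J) (ι → J) R :=
  of fun p q => ∏ k, M k (p k) (q k)

theorem tensor_apply (M : ι → Matrix J J R) (p q : ι → J) :
    tensor M p q = ∏ k, M k (p k) (q k) := rfl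

theorem map_tensor {S : Type*} [CommRing S] (f : R →+* S) (M : ι → Matrix J J R) :
    (tensor M).map f = tensor fun k => (M k).map f := by
  ext p q
  simp [tensor_apply]

theorem tensor_one [DecidableEq J] : tensor (fun _ : ι => (1 : Matrix J J R)) = 1 := by
  ext p q
  rw [tensor_apply, one_apply]
  split_ifs with h
  · subst h
    exact Finset.prod_eq_one fun k _ => one_apply_eq (p k)
  · obtain ⟨k, hk⟩ := Function.ne_iff.1 h
    exact Finset.prod_eq_zero (Finset.mem_univ k) (one_apply_ne hk)

variable [DecidableEq ι]

variable [Fintype J]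

theorem tensor_mul (M N : ι → Matrix J J R) :
    tensor (fun k => M k * N k) = tensor M * tensor N := by
  ext p q
  simp only [tensor_apply, mul_apply, ← Finset.prod_mul_distrib]
  rw [Finset.prod_univ_sum, Fintype.piFinset_univ]

variable [DecidableEq J]

theorem tensor_mul_permTensor (M : ι → Matrix J J R) (σ : Equiv.Perm ι) :
    tensor M * permTensor R J σ = permTensor R J σ * tensor (M ∘ σ) := by
  ext p q
  rw [permTensor_mul_apply, mul_permTensor_apply, tensor_apply, tensor_apply]
  refine (Fintype.prod_equiv σ _ _ fun k => ?_).symm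
  simp

theorem trace_permTensor_mul_tensor (σ : Equiv.Perm ι) (M : ι → Matrix J J R) :
    (permTensor R J σ * tensor M).trace = ∑ q : ι → J, ∏ k, M k (q (σ k)) (q k) :=
  Finset.sum_congr rfl fun q _ => permTensor_mul_apply σ (tensor M) q q

end TensorPower

section TracePermTensor

open Matrix

variable {R J : Type*} [CommRing R] [Fintype J] [DecidableEq J]

section Option

variable {ι : Type*} [Fintype ι] [DecidableEq ι]

theorem trace_permTensor_option (σ : Equiv.Perm (Option ι)) (M : Option ι → Matrix J J R) :
    (permTensor R J σ * tensor M).trace =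
      ∑ q : ι → J, ∑ x : J, M none ((σ none).elim x q) x *
        ∏ k, M (some k) ((σ (some k)).elim x q) (q k) := by
  rw [trace_permTensor_mul_tensor, ← Fintype.sum_prod_type_right']
  refine Fintype.sum_equiv (Equiv.piOptionEquivProd (β := fun _ => J)) _ _ fun q => ?_
  have helim : ∀ o : Option ι, q o = o.elim (q none) fun k => q (some k) := by
    rintro (_ | k) <;> rfl
  rw [Fintype.prod_option, helim (σ none)]
  simp only [helim (σ (some _))]
  rfl

omit [Fintype ι] [DecidableEq ι] in
theorem perm_option_some {σ : Equiv.Perm (Option ι)} {k : ι} (hk : σ (some k) ≠ none) :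
    σ (some k) = some (Equiv.removeNone σ k) :=
  (Equiv.removeNone_some σ (Option.ne_none_iff_exists'.1 hk)).symm

theorem trace_permTensor_of_apply_none_eq {σ : Equiv.Perm (Option ι)} (hσ : σ none = none)
    (M : Option ι → Matrix J J R) :
    (permTensor R J σ * tensor M).trace = (M none).trace *
      (permTensor R J (Equiv.removeNone σ) * tensor fun k => M (some k)).trace := by
  have hsome : ∀ k, σ (some k) = some (Equiv.removeNone σ k) := fun k =>
    perm_option_some fun h => Option.some_ne_none k (σ.injective (h.trans hσ.symm))
  simp only [trace_permTensor_option, hσ, hsome, Option.elim_none, Option.elim_some,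
    ← Finset.sum_mul]
  rw [trace_permTensor_mul_tensor, Finset.mul_sum]
  rfl

theorem trace_permTensor_of_apply_some_eq {σ : Equiv.Perm (Option ι)} {k₀ : ι}
    (hσ : σ (some k₀) = none) (M : Option ι → Matrix J J R) :
    (permTensor R J σ * tensor M).trace = (permTensor R J (Equiv.removeNone σ) *
      tensor (Function.update (fun k => M (some k)) k₀ (M none * M (some k₀)))).trace := by
  have hsome : ∀ k, k ≠ k₀ → σ (some k) = some (Equiv.removeNone σ k) := fun k hk =>
    perm_option_some fun h => hk (Option.some_injective _ (σ.injective (h.trans hσ.symm)))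
  rw [trace_permTensor_option, trace_permTensor_mul_tensor]
  refine Finset.sum_congr rfl fun q _ => ?_
  rw [Fintype.prod_eq_mul_prod_compl k₀, Function.update_self, Matrix.mul_apply, Finset.sum_mul]
  refine Finset.sum_congr rfl fun x _ => ?_
  rw [Fintype.prod_eq_mul_prod_compl k₀, hσ, ← Equiv.removeNone_none σ hσ, Option.elim_none,
    Option.elim_some, ← mul_assoc]
  congr 1
  refine Finset.prod_congr rfl fun k hk => ?_
  have hne : k ≠ k₀ := by simpa using hk
  rw [hsome k hne, Function.update_of_ne hne, Option.elim_some]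

end Option

theorem trace_permTensor_mul_tensor_mem {S : Submonoid R} {L : Subsemigroup (Matrix J J R)}
    (hL : ∀ M ∈ L, M.trace ∈ S) {ι : Type*} [Fintype ι] [DecidableEq ι] (σ : Equiv.Perm ι)
    (M : ι → Matrix J J R) (hM : ∀ k, M k ∈ L) : (permTensor R J σ * tensor M).trace ∈ S := by
  revert σ M
  suffices h : ∀ [DecidableEq ι] (σ : Equiv.Perm ι) (M : ι → Matrix J J R), (∀ k, M k ∈ L) →
      (permTensor R J σ * tensor M).trace ∈ S from fun σ M => h σ M
  refine Fintype.induction_empty_option (P := fun ι [Fintype ι] =>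
    ∀ [DecidableEq ι] (σ : Equiv.Perm ι) (M : ι → Matrix J J R), (∀ k, M k ∈ L) →
      (permTensor R J σ * tensor M).trace ∈ S) ?_ ?_ ?_ ι
  · intro α β _ e ih _ σ M hM
    classical
    let := Fintype.ofEquiv β e.symm
    convert ih ((e.trans σ).trans e.symm) (M ∘ e) fun k => hM (e k) using 1
    rw [trace_permTensor_mul_tensor, trace_permTensor_mul_tensor]
    refine Fintype.sum_equiv (e.symm.arrowCongr (Equiv.refl J)) _ _ fun q => ?_
    exact Fintype.prod_equiv e.symm _ _ fun k => by simp
  · intro _ σ M _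
    rw [trace_permTensor_mul_tensor]
    simp [S.one_mem]
  · intro α _ ih _ σ M hM
    classical
    obtain hσ | ⟨k₀, hσ⟩ : σ none = none ∨ ∃ k₀, σ (some k₀) = none := by
      rcases h : σ.symm none with _ | k₀
      · exact Or.inl (σ.symm_apply_eq.1 h).symm
      · exact Or.inr ⟨k₀, (σ.symm_apply_eq.1 h).symm⟩
    · convert S.mul_mem (hL _ (hM none)) (ih (Equiv.removeNone σ) _ fun k => hM (some k)) using 1
      convert trace_permTensor_of_apply_none_eq hσ M
    · convert ih (Equiv.removeNone σ)
        (Function.update (fun k => M (some k)) k₀ (M none * M (some k₀))) ?_ using 1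
      · convert trace_permTensor_of_apply_some_eq hσ M
      · intro k
        rcases eq_or_ne k k₀ with rfl | hk
        · rw [Function.update_self]
          exact L.mul_mem (hM none) (hM (some k))
        · rw [Function.update_of_ne hk]
          exact hM (some k)

end TracePermTensor

section ColorProjections

open Matrix

variable {J V k : Type*} [DecidableEq J] [DecidableEq V] [CommRing k]

variable (k) in
/-- The diagonal projection onto the coordinates of colour `v`. -/
def colorProj (color : J → V) (v : V) : Matrix J J k :=
  diagonal fun j => if color j = v then 1 else 0

theorem map_colorProj {R : Type*} [CommRing R] (f : k →+* R) (color : J → V) (v : V) :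
    (colorProj k color v).map f = colorProj R color v := by
  rw [colorProj, diagonal_map f.map_zero]
  simp only [apply_ite f, f.map_one, f.map_zero]
  rfl

theorem transpose_colorProj (color : J → V) (v : V) :
    (colorProj k color v)ᵀ = colorProj k color v :=
  diagonal_transpose _

theorem sum_colorProj [Fintype V] (color : J → V) : ∑ v, colorProj k color v = 1 := by
  refine (map_sum (diagonalAddMonoidHom J k) _ Finset.univ).symm.trans ?_
  rw [diagonalAddMonoidHom_apply, ← diagonal_one]
  congr 1
  ext j
  rw [Finset.sum_apply, Finset.sum_ite_eq, if_pos (Finset.mem_univ _)]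

section

variable [Fintype J] (color : J → V)

theorem colorProj_mul_apply (v : V) (A : Matrix J J k) (i j : J) :
    (colorProj k color v * A) i j = if color i = v then A i j else 0 := by
  rw [colorProj, diagonal_mul, ite_mul, one_mul, zero_mul]

theorem mul_colorProj_apply (v : V) (A : Matrix J J k) (i j : J) :
    (A * colorProj k color v) i j = if color j = v then A i j else 0 := by
  rw [colorProj, mul_diagonal, mul_ite, mul_one, mul_zero]

theorem colorProj_mul_colorProj (v w : V) :
    colorProj k color v * colorProj k color w = if v = w then colorProj k color v else 0 := by
  ext i j
  rw [colorProj_mul_apply]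
  rcases eq_or_ne v w with rfl | h
  · simp only [colorProj, diagonal_apply, if_true]
    split_ifs <;> rfl
  · rw [if_neg h, Matrix.zero_apply, colorProj, diagonal_apply, ite_eq_right_iff]
    rintro rfl
    simp [h]

end

variable {ι : Type*} [Fintype ι]

theorem tensor_colorProj (color : J → V) (γ : ι → V) :
    (tensor fun a => colorProj k color (γ a)) = colorProj k (color ∘ · : (ι → J) → ι → V) γ := by
  ext p q
  simp only [tensor_apply, colorProj, diagonal_apply, ← ite_and, Fintype.prod_ite_zero,
    Finset.prod_const_one, funext_iff, Function.comp_apply, forall_and]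

theorem colorProj_mul_permTensor [Fintype J] [DecidableEq ι] (color : J → V) (γ : ι → V)
    (σ : Equiv.Perm ι) :
    colorProj k (color ∘ ·) γ * permTensor k J σ =
      permTensor k J σ * colorProj k (color ∘ ·) (γ ∘ σ) := by
  rw [← tensor_colorProj, ← tensor_colorProj, tensor_mul_permTensor]
  rfl

end ColorProjections

section SchurWeyl

open Matrix

variable {J V k ι : Type*} [DecidableEq J] [Fintype J] [DecidableEq V]
  [DecidableEq ι] [Fintype ι]

variable (k ι) in
/-- The span of the operators on tensor space that first project every tensor factor to a colour
and then permute the factors. -/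
def coloredPermSpan [Field k] (color : J → V) : Submodule k (Matrix (ι → J) (ι → J) k) :=
  Submodule.span k (Set.range fun x : Equiv.Perm ι × (ι → V) =>
    permTensor k J x.1 * colorProj k (color ∘ ·) x.2)

section Field

variable [Field k] {color : J → V}

theorem one_mem_coloredPermSpan [Finite V] : 1 ∈ coloredPermSpan k ι color := by
  cases nonempty_fintype V
  rw [← sum_colorProj (color ∘ · : (ι → J) → ι → V)]
  refine Submodule.sum_mem _ fun γ _ => Submodule.subset_span ⟨(1, γ), ?_⟩
  exact (congrArg (· * _) permTensor_one).trans (one_mul _)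

theorem permTensor_mul_mem_coloredPermSpan (τ : Equiv.Perm ι) {A : Matrix (ι → J) (ι → J) k}
    (hA : A ∈ coloredPermSpan k ι color) : permTensor k J τ * A ∈ coloredPermSpan k ι color := by
  suffices h : coloredPermSpan k ι color ≤
      (coloredPermSpan k ι color).comap (LinearMap.mulLeft k (permTensor k J τ)) from h hA
  refine Submodule.span_le.2 ?_
  rintro _ ⟨⟨σ, γ⟩, rfl⟩
  refine Submodule.subset_span ⟨(τ * σ, γ), ?_⟩
  rw [LinearMap.mulLeft_apply, ← mul_assoc, permTensor_mul_permTensor]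

theorem colorProj_mul_mem_coloredPermSpan (γ : ι → V) {A : Matrix (ι → J) (ι → J) k}
    (hA : A ∈ coloredPermSpan k ι color) :
    colorProj k (color ∘ ·) γ * A ∈ coloredPermSpan k ι color := by
  suffices h : coloredPermSpan k ι color ≤
      (coloredPermSpan k ι color).comap (LinearMap.mulLeft k (colorProj k (color ∘ ·) γ)) from h hA
  refine Submodule.span_le.2 ?_
  rintro _ ⟨⟨σ, γ'⟩, rfl⟩
  rw [SetLike.mem_coe, Submodule.mem_comap, LinearMap.mulLeft_apply, ← mul_assoc,
    colorProj_mul_permTensor, mul_assoc, colorProj_mul_colorProj]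
  split_ifs
  · exact Submodule.subset_span ⟨(σ, γ ∘ σ), rfl⟩
  · rw [mul_zero]
    exact Submodule.zero_mem _

end Field

theorem mem_coloredPermSpan_of_commute [Field k] [LinearOrder k] [IsStrictOrderedRing k]
    [Finite V] {color : J → V} {T : Matrix (ι → J) (ι → J) k}
    (hT : ∀ C : Matrix (ι → J) (ι → J) k,
      (∀ (σ : Equiv.Perm ι) p q, C (p ∘ σ) (q ∘ σ) = C p q) →
      (∀ p q, color ∘ p ≠ color ∘ q → C p q = 0) → Commute C T) :
    T ∈ coloredPermSpan k ι color := by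
  refine mem_of_commute_centralizer (G := Set.range (permTensor k J) ∪
    Set.range (colorProj k (color ∘ · : (ι → J) → ι → V))) ?_ one_mem_coloredPermSpan ?_
    fun C hC => hT C ?_ ?_
  · rintro _ (⟨σ, rfl⟩ | ⟨γ, rfl⟩)
    · exact Or.inl ⟨σ⁻¹, (transpose_permTensor σ).symm⟩
    · exact Or.inr ⟨γ, (transpose_colorProj _ γ).symm⟩
  · rintro _ (⟨σ, rfl⟩ | ⟨γ, rfl⟩) A hA
    · exact permTensor_mul_mem_coloredPermSpan σ hA
    · exact colorProj_mul_mem_coloredPermSpan γ hA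
  · intro σ p q
    have h := congrFun₂ (hC _ (Or.inl ⟨σ, rfl⟩)).eq p (q ∘ σ)
    rw [permTensor_mul_apply, mul_permTensor_apply] at h
    rw [h, Function.comp_assoc, ← Equiv.Perm.coe_mul, mul_inv_cancel]
    rfl
  · intro p q hpq
    have h := congrFun₂ (hC _ (Or.inr ⟨color ∘ p, rfl⟩)).eq p q
    rwa [colorProj_mul_apply, mul_colorProj_apply, if_pos rfl, if_neg hpq.symm] at h

end SchurWeyl

/-! ### The first fundamental theorem -/

section Polarization

open Matrix

theorem exists_perm_of_sum_single_eq {ι α : Type*} [Fintype ι] {a b : ι → α}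
    (h : ∑ i, Finsupp.single (a i) 1 = (∑ i, Finsupp.single (b i) 1 : α →₀ ℕ)) :
    ∃ σ : Equiv.Perm ι, b = a ∘ σ := by
  classical
  have hcard : ∀ x, Fintype.card {i // b i = x} = Fintype.card {i // a i = x} := fun x => by
    have hx := DFunLike.congr_fun h x
    simp only [Finsupp.finsetSum_apply, Finsupp.single_apply] at hx
    rw [Fintype.card_subtype, Fintype.card_subtype, Finset.card_filter, Finset.card_filter, hx]
  refine ⟨Equiv.ofFiberEquiv (f := b) (g := a) fun x => Fintype.equivOfCardEq (hcard x), ?_⟩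
  exact funext fun i => (Equiv.ofFiberEquiv_map _ i).symm

variable {k J V ι : Type*} [Field k] [DecidableEq V]

variable (k) in
/-- The matrix of indeterminates of block shape: its entries between different colours vanish. -/
def genericMatrix (color : J → V) : Matrix J J (MvPolynomial (J × J) k) :=
  of fun i j => if color i = color j then MvPolynomial.X (i, j) else 0

variable {color : J → V}

theorem genericMatrix_map_eval {h : Matrix J J k} (hh : ∀ i j, color i ≠ color j → h i j = 0) :
    (genericMatrix k color).map (MvPolynomial.eval fun x => h x.1 x.2) = h := by
  ext i j
  rw [map_apply, genericMatrix, of_apply]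
  split_ifs with hij
  · exact MvPolynomial.eval_X _
  · rw [map_zero, hh i j hij]

variable [Fintype ι]

theorem exists_linearMap_tensor_genericMatrix {C : Matrix (ι → J) (ι → J) k}
    (hperm : ∀ (σ : Equiv.Perm ι) p q, C (p ∘ σ) (q ∘ σ) = C p q)
    (hcol : ∀ p q, color ∘ p ≠ color ∘ q → C p q = 0) :
    ∃ f : MvPolynomial (J × J) k →ₗ[k] k,
      (tensor fun _ : ι => genericMatrix k color).map f = C := by
  classical
  let exponent : (ι → J) × (ι → J) → (J × J →₀ ℕ) := fun x =>
    ∑ a, Finsupp.single (x.1 a, x.2 a) 1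
  have hexp : ∀ x y, exponent x = exponent y → C x.1 x.2 = C y.1 y.2 := fun x y hxy => by
    obtain ⟨σ, hσ⟩ := exists_perm_of_sum_single_eq hxy
    have hy₁ : y.1 = x.1 ∘ σ := funext fun a => congrArg Prod.fst (congrFun hσ a)
    have hy₂ : y.2 = x.2 ∘ σ := funext fun a => congrArg Prod.snd (congrFun hσ a)
    rw [hy₁, hy₂, hperm]
  obtain ⟨g, hg⟩ : ∃ g : (J × J →₀ ℕ) → k, ∀ x, g (exponent x) = C x.1 x.2 :=
    ⟨Function.extend exponent (fun x => C x.1 x.2) 0,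
      fun x => Function.FactorsThrough.extend_apply (fun x y => hexp x y) _ x⟩
  refine ⟨(MvPolynomial.basisMonomials (J × J) k).constr k g, ?_⟩
  ext p q
  rw [map_apply, tensor_apply]
  by_cases hpq : color ∘ p = color ∘ q
  · have hmon : ∏ a, genericMatrix k color (p a) (q a) =
        MvPolynomial.basisMonomials (J × J) k (exponent (p, q)) := by
      rw [MvPolynomial.coe_basisMonomials]
      refine Eq.trans ?_ (MvPolynomial.monomial_sum_one _ _).symm
      exact Finset.prod_congr rfl fun a _ => if_pos (congrFun hpq a)
    rw [hmon, Module.Basis.constr_basis, hg]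
  · obtain ⟨a, ha⟩ := Function.ne_iff.1 hpq
    rw [hcol p q hpq, Finset.prod_eq_zero (Finset.mem_univ a) (if_neg ha), map_zero]

variable [Fintype J] [DecidableEq J]

theorem det_genericMatrix_ne_zero : (genericMatrix k color).det ≠ 0 := fun h => by
  have hone : ∀ i j, color i ≠ color j → (1 : Matrix J J k) i j = 0 :=
    fun i j hij => one_apply_ne fun h => hij (congrArg color h)
  refine one_ne_zero (α := k) ?_
  rw [← det_one (n := J), ← genericMatrix_map_eval hone, ← RingHom.mapMatrix_apply,
    ← RingHom.map_det, h, map_zero]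

variable [DecidableEq ι] {T : Matrix (ι → J) (ι → J) k}

theorem commute_tensor_genericMatrix [Infinite k]
    (hT : ∀ h : Matrix J J k, (∀ i j, color i ≠ color j → h i j = 0) → h.det ≠ 0 →
      Commute (tensor fun _ => h) T) :
    Commute (tensor fun _ => genericMatrix k color) (T.map MvPolynomial.C) := by
  set H := genericMatrix k color with hH
  suffices hdet : H.det • ((tensor fun _ => H) * T.map MvPolynomial.C -
      T.map MvPolynomial.C * tensor fun _ => H) = 0 from
    sub_eq_zero.1 ((smul_eq_zero.1 hdet).resolve_left det_genericMatrix_ne_zero)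
  ext1 p q
  refine MvPolynomial.funext fun x => ?_
  set h := H.map (MvPolynomial.eval x) with hh
  have hcol : ∀ i j, color i ≠ color j → h i j = 0 := fun i j hij => by
    rw [hh, map_apply, hH, genericMatrix, of_apply, if_neg hij, map_zero]
  have hC : (T.map MvPolynomial.C).map (MvPolynomial.eval x) = T := by
    ext
    simp
  rw [Matrix.smul_apply, smul_eq_mul, map_mul, RingHom.map_det, RingHom.mapMatrix_apply, ← hh,
    Matrix.zero_apply, map_zero, mul_eq_zero, or_iff_not_imp_left]
  intro hdet
  rw [← map_apply (M := _ - _) (f := MvPolynomial.eval x), Matrix.map_sub _ (map_sub _),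
    Matrix.map_mul, Matrix.map_mul, map_tensor, hC, ← hh, (hT h hcol hdet).eq, sub_self,
    Matrix.zero_apply]

omit [DecidableEq V] in
theorem commute_of_commute_tensor [Infinite k]
    (hT : ∀ h : Matrix J J k, (∀ i j, color i ≠ color j → h i j = 0) → h.det ≠ 0 →
      Commute (tensor fun _ => h) T)
    {C : Matrix (ι → J) (ι → J) k} (hperm : ∀ (σ : Equiv.Perm ι) p q, C (p ∘ σ) (q ∘ σ) = C p q)
    (hcol : ∀ p q, color ∘ p ≠ color ∘ q → C p q = 0) : Commute C T := by
  classical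
  obtain ⟨f, rfl⟩ := exists_linearMap_tensor_genericMatrix hperm hcol
  set A := tensor fun _ : ι => genericMatrix k color
  have hf : ∀ c F, f (MvPolynomial.C c * F) = c * f F := fun c F => by
    rw [← MvPolynomial.smul_eq_C_mul, map_smul, smul_eq_mul]
  have hleft : A.map f * T = (A * T.map MvPolynomial.C).map f := by
    ext p q
    simp only [mul_apply, map_apply, map_sum, mul_comm _ (MvPolynomial.C _), hf, mul_comm _ (T _ _)]
  have hright : T * A.map f = (T.map MvPolynomial.C * A).map f := by
    ext p q
    simp only [mul_apply, map_apply, map_sum, hf]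
  exact hleft.trans ((congrArg (·.map f) (commute_tensor_genericMatrix hT).eq).trans hright.symm)

end Polarization

section Reynolds

open Matrix

variable {P : Type*} {Y : P → Type*} [∀ t, Fintype (Y t)]

section

variable {R : Type*} [Semiring R] [Fintype P] [DecidableEq P]

theorem blockDiag'_blockDiagonal'_mul (A : ∀ t, Matrix (Y t) (Y t) R)
    (B : Matrix (Σ t, Y t) (Σ t, Y t) R) (t : P) :
    blockDiag' (blockDiagonal' A * B) t = A t * blockDiag' B t := by
  ext i j
  rw [blockDiag'_apply, mul_apply, mul_apply, Fintype.sum_sigma, Fintype.sum_eq_single t]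
  · simp only [blockDiagonal'_apply_eq, blockDiag'_apply]
  · intro s hs
    exact Finset.sum_eq_zero fun x _ => by rw [blockDiagonal'_apply_ne _ _ _ hs.symm, zero_mul]

theorem blockDiag'_mul_blockDiagonal' (A : ∀ t, Matrix (Y t) (Y t) R)
    (B : Matrix (Σ t, Y t) (Σ t, Y t) R) (t : P) :
    blockDiag' (B * blockDiagonal' A) t = blockDiag' B t * A t := by
  ext i j
  rw [blockDiag'_apply, mul_apply, mul_apply, Fintype.sum_sigma, Fintype.sum_eq_single t]
  · simp only [blockDiagonal'_apply_eq, blockDiag'_apply]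
  · intro s hs
    exact Finset.sum_eq_zero fun x _ => by rw [blockDiagonal'_apply_ne _ _ _ hs, mul_zero]

end

theorem exists_forall_commute_sub_mem_span {k Γ : Type*} [Finite P] [Field k] [LinearOrder k]
    [IsStrictOrderedRing k] [Group Γ] [∀ t, DecidableEq (Y t)] (ρ : ∀ t, Γ →* Matrix (Y t) (Y t) k)
    (hρ : ∀ g, ∃ h, ∀ t, ρ t h = (ρ t g)ᵀ) (T : ∀ t, Matrix (Y t) (Y t) k) :
    ∃ T' : ∀ t, Matrix (Y t) (Y t) k, (∀ g t, Commute (ρ t g) (T' t)) ∧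
      T - T' ∈ Submodule.span k (Set.range fun g => (fun t => ρ t g⁻¹ * T t * ρ t g) - T) := by
  classical
  cases nonempty_fintype P
  let ρB : Γ →* Matrix (Σ t, Y t) (Σ t, Y t) k :=
    (blockDiagonal'RingHom Y k).toMonoidHom.comp (MonoidHom.pi ρ)
  have hρB : ∀ g, ρB g = blockDiagonal' fun t => ρ t g := fun _ => rfl
  obtain ⟨B, hB, hTB⟩ := exists_commute_sub_mem_span ρB
    (fun g => (hρ g).imp fun h hh => by
      rw [hρB, hρB, blockDiagonal'_transpose]
      simp only [hh]) (blockDiagonal' T)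
  refine ⟨blockDiag' B, fun g t => ?_, ?_⟩
  · have h := congrFun (congrArg blockDiag' (hB g).eq) t
    rwa [hρB, blockDiag'_blockDiagonal'_mul, blockDiag'_mul_blockDiagonal'] at h
  · let blocks : Matrix (Σ t, Y t) (Σ t, Y t) k →ₗ[k] ∀ t, Matrix (Y t) (Y t) k :=
      { toFun := blockDiag', map_add' := blockDiag'_add, map_smul' := blockDiag'_smul }
    have hblocks : blocks (blockDiagonal' T) = T := blockDiag'_blockDiagonal' T
    have hconj : (blocks ∘ fun g => ρB g⁻¹ * blockDiagonal' T * ρB g - blockDiagonal' T) =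
        fun g => (fun t => ρ t g⁻¹ * T t * ρ t g) - T := funext fun g => by
      rw [Function.comp_apply, map_sub, hblocks]
      refine congrArg (· - T) (funext fun t => ?_)
      change blockDiag' (ρB g⁻¹ * blockDiagonal' T * ρB g) t = _
      rw [hρB, hρB, blockDiag'_mul_blockDiagonal', blockDiag'_blockDiagonal'_mul,
        blockDiag'_blockDiagonal']
    have h := Submodule.mem_map_of_mem (f := blocks) hTB
    rwa [Submodule.map_span, ← Set.range_comp, hconj, map_sub, hblocks] at h

end Reynolds

section TensorForm

open Matrix

variable {k R D J ι : Type*} [CommRing R] [Fintype J] [Fintype ι] [DecidableEq ι]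

section CommRing

variable [CommRing k] [Algebra k R]

variable (k) in
/-- The linear form on operators of tensor space pairing an operator with the Kronecker product of
the matrices `X (w a)` by the trace form. -/
def tensorForm (X : D → Matrix J J R) (w : ι → D) : Matrix (ι → J) (ι → J) k →ₗ[k] R where
  toFun T := (T.map (algebraMap k R) * tensor fun a => X (w a)).trace
  map_add' T T' := by
    rw [Matrix.map_add _ (map_add _), add_mul, trace_add]
  map_smul' c T := by
    rw [Matrix.map_smul' _ _ _ (map_mul _), smul_mul, trace_smul, algebraMap_smul,
      RingHom.id_apply]

theorem tensorForm_apply (X : D → Matrix J J R) (w : ι → D) (T : Matrix (ι → J) (ι → J) k) :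
    tensorForm k X w T = (T.map (algebraMap k R) * tensor fun a => X (w a)).trace := rfl

theorem tensorForm_single [DecidableEq J] (X : D → Matrix J J R) (w : ι → D) (p q : ι → J) :
    tensorForm k X w (single q p 1) = ∏ a, X (w a) (p a) (q a) := by
  rw [tensorForm_apply, map_single, map_one, trace_single_mul, one_smul, tensor_apply]

theorem tensorForm_tensor_mul_mul_tensor (X : D → Matrix J J R) (w : ι → D) (h h' : Matrix J J k)
    (T : Matrix (ι → J) (ι → J) k) :
    tensorForm k X w ((tensor fun _ => h') * T * tensor fun _ => h) =
      tensorForm k (fun d => h.map (algebraMap k R) * X d * h'.map (algebraMap k R)) w T := by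
  simp only [tensorForm_apply, Matrix.map_mul, map_tensor, tensor_mul]
  rw [trace_mul_comm, trace_mul_comm, mul_assoc, mul_assoc, trace_mul_comm]
  simp only [mul_assoc]

end CommRing

theorem tensorForm_mem {V : Type*} [Field k] [Algebra k R] [DecidableEq J] [DecidableEq V]
    {color : J → V} {S : Subalgebra k R} {L : Subsemigroup (Matrix J J R)}
    (hL : ∀ M ∈ L, M.trace ∈ S) {X : D → Matrix J J R}
    (hX : ∀ d v, colorProj R color v * X d ∈ L) (w : ι → D)
    {T : Matrix (ι → J) (ι → J) k} (hT : T ∈ coloredPermSpan k ι color) :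
    tensorForm k X w T ∈ S := by
  suffices h : coloredPermSpan k ι color ≤ S.toSubmodule.comap (tensorForm k X w) from h hT
  refine Submodule.span_le.2 ?_
  rintro _ ⟨⟨σ, γ⟩, rfl⟩
  have htr := trace_permTensor_mul_tensor_mem (S := S.toSubmonoid) hL σ
    (fun a => colorProj R color (γ a) * X (w a)) fun a => hX (w a) (γ a)
  rwa [tensor_mul, tensor_colorProj, ← map_colorProj (algebraMap k R),
    ← map_permTensor (algebraMap k R), ← mul_assoc, ← Matrix.map_mul] at htr

end TensorForm

section FirstFundamentalTheorem

open Matrix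

/-- The factors of the monomial `m`, a variable of exponent `e` being repeated `e` times. -/
abbrev MonomialFactor {α : Type*} (m : α →₀ ℕ) : Type _ := (x : m.support) × Fin (m x)

variable {k K R D J V Γ : Type*} [CommRing K] [CommRing R] [Algebra K R]

theorem aeval_eq_sum_smul_prod_monomialFactor {α : Type*} (f : α → R) (F : MvPolynomial α K) :
    MvPolynomial.aeval f F = ∑ m : F.support, F.coeff m • ∏ a : MonomialFactor m.1, f a.1 := by
  rw [MvPolynomial.aeval_def, MvPolynomial.eval₂_eq, ← Finset.sum_coe_sort]
  refine Finset.sum_congr rfl fun m _ => ?_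
  rw [Algebra.smul_def, Fintype.prod_sigma, ← Finset.prod_coe_sort]
  simp only [Finset.prod_const, Finset.card_univ, Fintype.card_fin]

variable [Fintype J] [DecidableEq J]

section PolarForm

variable [CommRing k] [Algebra k R] [Algebra k K] [IsScalarTower k K R] [DecidableEq D]

variable (k) in
/-- The linear form on families of tensor operators, one for each monomial of `F`, whose value at
suitable matrix units is the value of `F` at the entries of the matrices `X d`. -/
def polarForm (F : MvPolynomial (D × J × J) K) (X : D → Matrix J J R) :
    (∀ m : F.support, Matrix (MonomialFactor m.1 → J) (MonomialFactor m.1 → J) k) →ₗ[k] R :=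
  ∑ m : F.support, F.coeff m • (tensorForm k X (fun a : MonomialFactor m.1 => a.1.1.1) ∘ₗ
    LinearMap.proj m)

theorem polarForm_apply (F : MvPolynomial (D × J × J) K) (X : D → Matrix J J R)
    (T : ∀ m : F.support, Matrix (MonomialFactor m.1 → J) (MonomialFactor m.1 → J) k) :
    polarForm k F X T =
      ∑ m : F.support,
        F.coeff m • tensorForm k X (fun a : MonomialFactor m.1 => a.1.1.1) (T m) := by
  rw [polarForm, LinearMap.sum_apply]
  rfl

theorem polarForm_single (F : MvPolynomial (D × J × J) K) (X : D → Matrix J J R) :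
    polarForm k F X (fun _ => single (fun a => a.1.1.2.2) (fun a => a.1.1.2.1) 1) =
      MvPolynomial.aeval (fun c : D × J × J => X c.1 c.2.1 c.2.2) F := by
  rw [polarForm_apply, aeval_eq_sum_smul_prod_monomialFactor]
  simp only [tensorForm_single]

theorem polarForm_tensor_mul_mul_tensor (F : MvPolynomial (D × J × J) K) (X : D → Matrix J J R)
    (h h' : Matrix J J k)
    (T : ∀ m : F.support, Matrix (MonomialFactor m.1 → J) (MonomialFactor m.1 → J) k) :
    polarForm k F X (fun m => (tensor fun _ => h') * T m * tensor fun _ => h) =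
      polarForm k F (fun d => h.map (algebraMap k R) * X d * h'.map (algebraMap k R)) T := by
  simp only [polarForm_apply, tensorForm_tensor_mul_mul_tensor]

end PolarForm

variable (k J) in
/-- The diagonal action of matrices on tensor space. -/
def tensorPowHom [CommRing k] (ι : Type*) [Fintype ι] [DecidableEq ι] :
    Matrix J J k →* Matrix (ι → J) (ι → J) k where
  toFun A := tensor fun _ => A
  map_one' := tensor_one
  map_mul' A B := tensor_mul (fun _ => A) fun _ => B

/-- The averaged polar form of `F` has the same value, and invariant operators on tensor space are
combinations of coloured permutations. -/
theorem aeval_mem_of_conj_invariant [Field k] [LinearOrder k] [IsStrictOrderedRing k] [Algebra k R]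
    [Algebra k K] [IsScalarTower k K R] [Finite V] [DecidableEq V] [Group Γ] {color : J → V}
    (ρ : Γ →* Matrix J J k) (hcol : ∀ g i j, color i ≠ color j → ρ g i j = 0)
    (hsurj : ∀ h : Matrix J J k, (∀ i j, color i ≠ color j → h i j = 0) → h.det ≠ 0 →
      ∃ g, ρ g = h)
    {S : Subalgebra K R} {L : Subsemigroup (Matrix J J R)} (hL : ∀ M ∈ L, M.trace ∈ S)
    {X : D → Matrix J J R} (hX : ∀ d v, colorProj R color v * X d ∈ L)
    {F : MvPolynomial (D × J × J) K}
    (hF : ∀ g, MvPolynomial.aeval (fun c : D × J × J => ((ρ g).map (algebraMap k R) * X c.1 *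
      (ρ g⁻¹).map (algebraMap k R)) c.2.1 c.2.2) F =
        MvPolynomial.aeval (fun c : D × J × J => X c.1 c.2.1 c.2.2) F) :
    MvPolynomial.aeval (fun c : D × J × J => X c.1 c.2.1 c.2.2) F ∈ S := by
  classical
  have htranspose : ∀ g, ∃ h, ρ h = (ρ g)ᵀ := fun g =>
    hsurj _ (fun i j hij => hcol g j i hij.symm) <| by
      rw [det_transpose]
      exact (((Group.isUnit g).map ρ).map detMonoidHom).ne_zero
  let T : ∀ m : F.support, Matrix (MonomialFactor m.1 → J) (MonomialFactor m.1 → J) k := fun _ =>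
    single (fun a => a.1.1.2.2) (fun a => a.1.1.2.1) 1
  obtain ⟨T', hcomm, hTT'⟩ := exists_forall_commute_sub_mem_span
    (fun m : F.support => (tensorPowHom k J (MonomialFactor m.1)).comp ρ)
    (fun g => (htranspose g).imp fun h hh m =>
      congrArg (tensorPowHom k J (MonomialFactor m.1)) hh) T
  have hker : Submodule.span k (Set.range fun g => (fun m : F.support =>
      (tensor fun _ => ρ g⁻¹) * T m * tensor fun _ => ρ g) - T) ≤
        LinearMap.ker (polarForm k F X) := by
    refine Submodule.span_le.2 ?_
    rintro _ ⟨g, rfl⟩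
    rw [SetLike.mem_coe, LinearMap.mem_ker, map_sub, polarForm_tensor_mul_mul_tensor,
      polarForm_single, polarForm_single, hF, sub_self]
  have hform : polarForm k F X T = polarForm k F X T' := by
    rw [← sub_eq_zero, ← map_sub]
    exact hker hTT'
  rw [← polarForm_single (k := k), hform, polarForm_apply]
  refine S.sum_mem fun m _ => S.smul_mem (tensorForm_mem (S := S.restrictScalars k) hL hX _
    (mem_coloredPermSpan_of_commute fun C hperm hC => ?_)) _
  refine commute_of_commute_tensor (fun h hh hdet => ?_) hperm hC
  obtain ⟨g, rfl⟩ := hsurj h hh hdet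
  exact hcomm g m

end FirstFundamentalTheorem

/-! ### Traces of words and closed paths -/

section TracesOfWords

open Matrix

variable {R J : Type*} [CommRing R] [Fintype J] [DecidableEq J]

theorem prod_ofFn_apply : ∀ (n : ℕ) (f : Fin (n + 1) → Matrix J J R) (p q : J),
    (List.ofFn f).prod p q = ∑ c : Fin n → J, ∏ k : Fin (n + 1),
      f k ((Fin.cons p c : Fin (n + 1) → J) k) ((Fin.snoc c q : Fin (n + 1) → J) k)
  | 0, f, p, q => by simp [Fin.snoc]
  | n + 1, f, p, q => by
    rw [List.ofFn_succ, List.prod_cons, Matrix.mul_apply,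
      ← (Fin.consEquiv fun _ : Fin (n + 1) => J).sum_comp, Fintype.sum_prod_type]
    refine Finset.sum_congr rfl fun r _ => ?_
    rw [prod_ofFn_apply n, Finset.mul_sum]
    refine Finset.sum_congr rfl fun c _ => ?_
    change _ = ∏ k, f k ((Fin.cons p (Fin.cons r c) : Fin (n + 2) → J) k)
      ((Fin.snoc (Fin.cons r c : Fin (n + 1) → J) q : Fin (n + 2) → J) k)
    rw [← Fin.cons_snoc_eq_snoc_cons]
    exact (Fin.prod_univ_succ fun k => f k ((Fin.cons p (Fin.cons r c) : Fin (n + 2) → J) k)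
      ((Fin.cons r (Fin.snoc c q : Fin (n + 1) → J) : Fin (n + 2) → J) k)).symm

theorem trace_prod_ofFn {n : ℕ} (f : Fin (n + 1) → Matrix J J R) :
    (List.ofFn f).prod.trace = ∑ c : Fin (n + 1) → J, ∏ k, f k (c k) (c (k + 1)) := by
  rw [← (Fin.consEquiv fun _ : Fin (n + 1) => J).sum_comp, Fintype.sum_prod_type, Matrix.trace]
  refine Finset.sum_congr rfl fun p _ => ?_
  rw [diag_apply, prod_ofFn_apply]
  refine Finset.sum_congr rfl fun c _ => Finset.prod_congr rfl fun k _ => ?_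
  rw [Fin.snoc_eq_cons_rotate]
  beta_reduce
  rw [finRotate_apply]
  rfl

theorem trace_prod_ofFn_add {n : ℕ} (f : Fin (n + 1) → Matrix J J R) (m : Fin (n + 1)) :
    (List.ofFn fun k => f (k + m)).prod.trace = (List.ofFn f).prod.trace := by
  rw [trace_prod_ofFn, trace_prod_ofFn]
  refine Fintype.sum_equiv (Equiv.arrowCongr (Equiv.addRight m) (Equiv.refl J)) _ _ fun c => ?_
  refine Fintype.prod_equiv (Equiv.addRight m) _ _ fun k => ?_
  simp [Equiv.arrowCongr, add_right_comm]

theorem trace_prod_ofFn_eq_zero {V : Type*} {n : ℕ} {f : Fin (n + 1) → Matrix J J R}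
    {color : J → V} {s t : Fin (n + 1) → V}
    (hf : ∀ k p q, f k p q ≠ 0 → color p = s k ∧ color q = t k)
    {k : Fin (n + 1)} (hk : t k ≠ s (k + 1)) : (List.ofFn f).prod.trace = 0 := by
  rw [trace_prod_ofFn]
  refine Finset.sum_eq_zero fun c _ => ?_
  by_contra hne
  have hne' (j : Fin (n + 1)) : f j (c j) (c (j + 1)) ≠ 0 := fun h =>
    hne (Finset.prod_eq_zero (Finset.mem_univ j) h)
  exact hk ((hf k _ _ (hne' k)).2.symm.trans (hf (k + 1) _ _ (hne' (k + 1))).1)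

theorem trace_prod_map_conj {D : Type*} (u : (Matrix J J R)ˣ) (X : D → Matrix J J R) (l : List D) :
    (l.map fun d => (u : Matrix J J R) * X d * (u⁻¹ : (Matrix J J R)ˣ)).prod.trace =
      (l.map X).prod.trace := by
  have h : (l.map fun d => (u : Matrix J J R) * X d * (u⁻¹ : (Matrix J J R)ˣ)).prod =
      u * (l.map X).prod * (u⁻¹ : (Matrix J J R)ˣ) := by
    induction l with
    | nil => simp
    | cons d l ih =>
      rw [List.map_cons, List.map_cons, List.prod_cons, List.prod_cons, ih]
      simp only [mul_assoc, Units.inv_mul_cancel_left]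
  rw [h, trace_units_conj]

/-- The semigroup of the nonempty products of the matrices `X d`, together with `0`. -/
def wordSemigroup {D : Type*} (X : D → Matrix J J R) : Subsemigroup (Matrix J J R) where
  carrier := {M | M = 0 ∨ ∃ l : List D, l ≠ [] ∧ M = (l.map X).prod}
  mul_mem' := by
    rintro M N (rfl | ⟨l, hl, rfl⟩) (rfl | ⟨m, _, rfl⟩)
    · exact Or.inl (mul_zero 0)
    · exact Or.inl (zero_mul _)
    · exact Or.inl (mul_zero _)
    · exact Or.inr ⟨l ++ m, by simp [hl], by rw [List.map_append, List.prod_append]⟩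

end TracesOfWords

section BlockInclusions

open Matrix

variable {ι R : Type*} [DecidableEq ι] {n : ι → Type*} [∀ i, DecidableEq (n i)] [CommRing R]

variable (R n) in
/-- The matrix of the inclusion of the `i`-th summand into the direct sum of all `R ^ n i`. -/
def blockIncl (i : ι) : Matrix (Σ i, n i) (n i) R :=
  (1 : Matrix (Σ i, n i) (Σ i, n i) R).submatrix id (Sigma.mk i)

variable [∀ i, Fintype (n i)]

theorem blockIncl_mul_transpose_blockIncl (i : ι) :
    blockIncl R n i * (blockIncl R n i)ᵀ = colorProj R Sigma.fst i := by
  ext ⟨p, u⟩ ⟨q, v⟩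
  by_cases hp : p = i
  · subst hp
    by_cases hq : p = q
    · subst hq
      simp [blockIncl, colorProj, mul_apply, one_apply, diagonal_apply, eq_comm]
    · simp [blockIncl, colorProj, mul_apply, one_apply, hq]
  · simp [blockIncl, colorProj, mul_apply, one_apply, diagonal_apply, hp]

variable [Fintype ι]

theorem transpose_blockIncl_mul_mul_blockIncl (M : Matrix (Σ i, n i) (Σ i, n i) R) (i j : ι) :
    (blockIncl R n i)ᵀ * M * blockIncl R n j = M.submatrix (Sigma.mk i) (Sigma.mk j) := by
  rw [blockIncl, blockIncl, transpose_submatrix, transpose_one]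
  exact (congrArg (· * _) (one_submatrix_mul _ (Equiv.refl _) M)).trans
    (mul_submatrix_one (Equiv.refl _) _ _)

theorem transpose_blockIncl_mul_blockIncl_self (i : ι) :
    (blockIncl R n i)ᵀ * blockIncl R n i = 1 := by
  rw [← Matrix.mul_one (blockIncl R n i)ᵀ, transpose_blockIncl_mul_mul_blockIncl,
    submatrix_one _ sigma_mk_injective]

theorem transpose_blockIncl_mul_blockIncl_of_ne {i j : ι} (h : i ≠ j) :
    (blockIncl R n i)ᵀ * blockIncl R n j = 0 := by
  rw [← Matrix.mul_one (blockIncl R n i)ᵀ, transpose_blockIncl_mul_mul_blockIncl]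
  ext a b
  exact one_apply_ne fun h' => h (congrArg Sigma.fst h')

theorem blockIncl_mul_mul_transpose_mul {i j k : ι} (M : Matrix (n i) (n j) R)
    (N : Matrix (n j) (n k) R) :
    blockIncl R n i * M * (blockIncl R n j)ᵀ * (blockIncl R n j * N * (blockIncl R n k)ᵀ) =
      blockIncl R n i * (M * N) * (blockIncl R n k)ᵀ := by
  rw [Matrix.mul_assoc (blockIncl R n j), Matrix.mul_assoc _ (blockIncl R n j)ᵀ,
    ← Matrix.mul_assoc (blockIncl R n j)ᵀ, transpose_blockIncl_mul_blockIncl_self, Matrix.one_mul]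
  simp only [Matrix.mul_assoc]

theorem colorProj_mul_blockIncl (i j : ι) :
    colorProj R (Sigma.fst : (Σ i, n i) → ι) i * blockIncl R n j =
      if j = i then blockIncl R n j else 0 := by
  rw [← blockIncl_mul_transpose_blockIncl, Matrix.mul_assoc]
  split_ifs with h
  · rw [h, transpose_blockIncl_mul_blockIncl_self, Matrix.mul_one]
  · rw [transpose_blockIncl_mul_blockIncl_of_ne (Ne.symm h), Matrix.mul_zero]

theorem blockDiagonal'_mul_blockIncl (g : ∀ i, Matrix (n i) (n i) R) (i : ι) :
    blockDiagonal' g * blockIncl R n i = blockIncl R n i * g i := by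
  ext ⟨p, u⟩ a
  rcases eq_or_ne p i with rfl | h
  · simp [blockIncl, mul_apply, one_apply, blockDiagonal'_apply]
  · simp [blockIncl, mul_apply, one_apply, blockDiagonal'_apply, h]

theorem transpose_blockIncl_mul_blockDiagonal' (g : ∀ i, Matrix (n i) (n i) R) (i : ι) :
    (blockIncl R n i)ᵀ * blockDiagonal' g = g i * (blockIncl R n i)ᵀ := by
  rw [← transpose_transpose (g i), ← transpose_mul,
    ← blockDiagonal'_mul_blockIncl (fun i => (g i)ᵀ) i, transpose_mul, blockDiagonal'_transpose]
  simp only [transpose_transpose]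

end BlockInclusions

/-! ### Representations of the double quiver -/

namespace FinQuiver

open Matrix

variable (Q : FinQuiver)

theorem dh_swap (a : Q.DA) : Q.dh a.swap = Q.dt a := by cases a <;> rfl

theorem dt_swap (a : Q.DA) : Q.dt a.swap = Q.dh a := by cases a <;> rfl

variable {Q}

theorem Connected.mem_of_forall_dh (hQ : Q.Connected) {T : Set Q.I} (hT : T.Nonempty)
    (h : ∀ a : Q.DA, Q.dh a ∈ T → Q.dt a ∈ T) (v : Q.I) : v ∈ T := by
  obtain ⟨u, hu⟩ := hT
  induction hQ u v with
  | refl => exact hu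
  | tail _ hab ih =>
    obtain ⟨a, ⟨rfl, rfl⟩ | ⟨rfl, rfl⟩⟩ := hab
    · exact h (Sum.inl a) ih
    · exact h (Sum.inr a) ih

theorem sum_dt_eq_two_mul {δ : Q.I → ℕ} {i : Q.I} (h : Q.bil (Q.toZ δ) (Q.ev i) = 0) :
    ∑ a : Q.DA with Q.dh a = i, δ (Q.dt a) = 2 * δ i := by
  have hvertices : ∑ j, 2 * Q.toZ δ j * Q.ev i j = 2 * (δ i : ℤ) := by simp [ev, toZ]
  have harrows : ∑ a : Q.DA, Q.toZ δ (Q.dh a) * Q.ev i (Q.dt a) =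
      ((∑ a : Q.DA with Q.dh a = i, δ (Q.dt a) : ℕ) : ℤ) := by
    rw [Finset.sum_filter, ← (Equiv.sumComm Q.A Q.A).sum_comp]
    push_cast
    refine Finset.sum_congr rfl fun a _ => ?_
    rw [Equiv.sumComm_apply, dh_swap, dt_swap, ev, toZ, mul_ite, mul_one, mul_zero]
  rw [bil, hvertices, harrows] at h
  omega

theorem Connected.pos_of_bil_eq_zero (hQ : Q.Connected) {δ : Q.I → ℕ}
    (hδ : ∀ i, Q.bil (Q.toZ δ) (Q.ev i) = 0) {v : Q.I} (hv : δ v ≠ 0) (i : Q.I) : 0 < δ i := by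
  by_contra hi
  refine hv (hQ.mem_of_forall_dh (T := {j | δ j = 0}) ⟨i, by simpa using hi⟩ (fun a ha => ?_) v)
  have hsum := sum_dt_eq_two_mul (hδ (Q.dh a))
  rw [show δ (Q.dh a) = 0 from ha, mul_zero, Finset.sum_eq_zero_iff] at hsum
  exact hsum a (by simp)

variable {K : Type} [Field K] {α : Q.I → ℕ}

/-- The endomorphism of `⊕ᵢ K ^ αᵢ` by which the arrow `a` acts in the representation `x`. -/
def arrowMatrix (x : Q.Rep K α) (a : Q.DA) :
    Matrix (Σ i, Fin (α i)) (Σ i, Fin (α i)) K :=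
  blockIncl K (fun i => Fin (α i)) (Q.dh a) * x a * (blockIncl K (fun i => Fin (α i)) (Q.dt a))ᵀ

theorem arrowMatrix_apply (x : Q.Rep K α) (a : Q.DA) (u : Fin (α (Q.dh a)))
    (v : Fin (α (Q.dt a))) : arrowMatrix x a ⟨Q.dh a, u⟩ ⟨Q.dt a, v⟩ = x a u v := by
  have h : (arrowMatrix x a).submatrix (Sigma.mk (Q.dh a)) (Sigma.mk (Q.dt a)) = x a := by
    rw [← transpose_blockIncl_mul_mul_blockIncl, arrowMatrix, Matrix.mul_assoc, Matrix.mul_assoc,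
      transpose_blockIncl_mul_blockIncl_self, Matrix.mul_one, ← Matrix.mul_assoc,
      transpose_blockIncl_mul_blockIncl_self, Matrix.one_mul]
  exact congrFun (congrFun h u) v

theorem colorProj_mul_arrowMatrix (x : Q.Rep K α) (i : Q.I) (a : Q.DA) :
    colorProj K Sigma.fst i * arrowMatrix x a = if Q.dh a = i then arrowMatrix x a else 0 := by
  rw [arrowMatrix, ← Matrix.mul_assoc, ← Matrix.mul_assoc, colorProj_mul_blockIncl]
  split_ifs
  · rfl
  · rw [Matrix.zero_mul, Matrix.zero_mul]

theorem arrowMatrix_mul_colorProj (x : Q.Rep K α) (i : Q.I) (a : Q.DA) :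
    arrowMatrix x a * colorProj K Sigma.fst i = if Q.dt a = i then arrowMatrix x a else 0 := by
  rw [arrowMatrix, Matrix.mul_assoc, ← transpose_colorProj, ← transpose_mul,
    colorProj_mul_blockIncl]
  split_ifs
  · rfl
  · rw [transpose_zero, Matrix.mul_zero]

theorem arrowMatrix_ne_zero {x : Q.Rep K α} {a : Q.DA} {p q : Σ i, Fin (α i)}
    (h : arrowMatrix x a p q ≠ 0) : p.1 = Q.dh a ∧ q.1 = Q.dt a := by
  refine ⟨?_, ?_⟩
  · have hp := colorProj_mul_arrowMatrix x (Q.dh a) a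
    rw [if_pos rfl] at hp
    rw [← hp, colorProj_mul_apply] at h
    exact (ite_ne_right_iff.1 h).1
  · have hq := arrowMatrix_mul_colorProj x (Q.dt a) a
    rw [if_pos rfl] at hq
    rw [← hq, mul_colorProj_apply] at h
    exact (ite_ne_right_iff.1 h).1

theorem arrowMatrix_mul_arrowMatrix (x : Q.Rep K α) {a b : Q.DA} (h : Q.dt a ≠ Q.dh b) :
    arrowMatrix x a * arrowMatrix x b = 0 := by
  have hb := colorProj_mul_arrowMatrix x (Q.dh b) b
  rw [if_pos rfl] at hb
  rw [← hb, ← Matrix.mul_assoc, arrowMatrix_mul_colorProj, if_neg h, Matrix.zero_mul]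

theorem trace_arrowMatrix (x : Q.Rep K α) {a : Q.DA} (h : Q.dh a ≠ Q.dt a) :
    (arrowMatrix x a).trace = 0 := by
  rw [arrowMatrix, trace_mul_cycle, transpose_blockIncl_mul_blockIncl_of_ne h.symm,
    Matrix.zero_mul, trace_zero]

theorem arrowMatrix_inl_mul_inr (x : Q.Rep K α) (a : Q.A) :
    arrowMatrix x (Sum.inl a) * arrowMatrix x (Sum.inr a) =
      blockIncl K (fun i => Fin (α i)) (Q.h a) * (x (Sum.inl a) * x (Sum.inr a)) *
        (blockIncl K (fun i => Fin (α i)) (Q.h a))ᵀ :=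
  blockIncl_mul_mul_transpose_mul (n := fun i => Fin (α i)) (x (Sum.inl a)) (x (Sum.inr a))

theorem arrowMatrix_inr_mul_inl (x : Q.Rep K α) (a : Q.A) :
    arrowMatrix x (Sum.inr a) * arrowMatrix x (Sum.inl a) =
      blockIncl K (fun i => Fin (α i)) (Q.t a) * (x (Sum.inr a) * x (Sum.inl a)) *
        (blockIncl K (fun i => Fin (α i)) (Q.t a))ᵀ :=
  blockIncl_mul_mul_transpose_mul (n := fun i => Fin (α i)) (x (Sum.inr a)) (x (Sum.inl a))

variable (Q K) in
/-- The sign with which an arrow of the double quiver enters the moment map. -/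
def arrowSign : Q.DA → K := Sum.elim 1 (-1)

theorem sum_arrowSign_smul (x : Q.Rep K α) (i : Q.I) :
    ∑ a : Q.DA with Q.dh a = i, Q.arrowSign K a • (arrowMatrix x a * arrowMatrix x a.swap) =
      blockIncl K (fun i => Fin (α i)) i * Q.moment K α x i *
        (blockIncl K (fun i => Fin (α i)) i)ᵀ := by
  rw [Finset.sum_filter, Fintype.sum_sum_type, moment, Matrix.mul_sub, Matrix.sub_mul,
    sub_eq_add_neg, Matrix.mul_sum, Matrix.sum_mul, Matrix.mul_sum, Matrix.sum_mul,
    ← Finset.sum_neg_distrib]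
  congr 1
  · refine Finset.sum_congr rfl fun a _ => ?_
    by_cases h : Q.h a = i
    · subst h
      simp [arrowSign, arrowMatrix_inl_mul_inr]
    · simp [h]
  · refine Finset.sum_congr rfl fun a _ => ?_
    by_cases h : Q.t a = i
    · subst h
      simp [arrowSign, arrowMatrix_inr_mul_inl]
    · simp [h]

theorem sum_arrowSign_smul_of_mem {l : Q.I → K} {x : Q.Rep K α} (hx : x ∈ Q.MomentFiber K l α)
    (i : Q.I) :
    ∑ a : Q.DA with Q.dh a = i, Q.arrowSign K a • (arrowMatrix x a * arrowMatrix x a.swap) =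
      l i • colorProj K Sigma.fst i := by
  rw [sum_arrowSign_smul, hx i, Matrix.mul_smul, Matrix.smul_mul, Matrix.mul_one,
    blockIncl_mul_transpose_blockIncl]

theorem cycTr_eq_trace (x : Q.Rep K α) (p : Q.Cyc) :
    Q.cycTr K α p x = (List.ofFn fun k => arrowMatrix x (p.ar k)).prod.trace := by
  have hcast {i j : Q.I} (h : i = j) (u : Fin (α i)) :
      (⟨j, Fin.cast (congrArg α h) u⟩ : Σ i, Fin (α i)) = ⟨i, u⟩ := by subst h; rfl
  rw [trace_prod_ofFn, cycTr]
  refine Fintype.sum_of_injective (fun c k => (⟨Q.dh (p.ar k), c k⟩ : Σ i, Fin (α i)))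
    (fun c c' h => funext fun k => by simpa using congrFun h k) _ _ (fun c hc => ?_) fun c => ?_
  · by_contra hne
    have hne' (k : Fin (p.n + 1)) : (c k).1 = Q.dh (p.ar k) :=
      (arrowMatrix_ne_zero fun h => hne (Finset.prod_eq_zero (Finset.mem_univ k) h)).1
    exact hc ⟨fun k => Fin.cast (congrArg α (hne' k)) (c k).2, funext fun k => hcast (hne' k) _⟩
  · refine Finset.prod_congr rfl fun k _ => ?_
    beta_reduce
    rw [← hcast (p.compat k).symm, arrowMatrix_apply]

theorem trace_ofFn_arrowMatrix_eq_zero (x : Q.Rep K α) {n : ℕ} {f : Fin (n + 1) → Q.DA}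
    {k : Fin (n + 1)} (hk : Q.dt (f k) ≠ Q.dh (f (k + 1))) :
    (List.ofFn fun k => arrowMatrix x (f k)).prod.trace = 0 :=
  trace_prod_ofFn_eq_zero (fun _ _ _ => arrowMatrix_ne_zero) hk

end FinQuiver

section BlockDiagonalGroup

open Matrix

variable {ι k : Type*} [Fintype ι] [DecidableEq ι] {n : ι → Type*} [∀ i, Fintype (n i)]
  [∀ i, DecidableEq (n i)] [CommRing k]

variable (k n) in
/-- The action of a product of general linear groups on the direct sum of the spaces `k ^ n i`. -/
def blockGL : (∀ i, GL (n i) k) →* (Matrix (Σ i, n i) (Σ i, n i) k)ˣ :=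
  (Units.map (blockDiagonal'RingHom n k).toMonoidHom).comp MulEquiv.piUnits.symm.toMonoidHom

theorem coe_blockGL (g : ∀ i, GL (n i) k) :
    (blockGL k n g : Matrix (Σ i, n i) (Σ i, n i) k) =
      blockDiagonal' fun i => (g i : Matrix (n i) (n i) k) := rfl

theorem map_blockGL {R : Type*} [CommRing R] (f : k →+* R) (g : ∀ i, GL (n i) k) :
    (blockGL k n g : Matrix (Σ i, n i) (Σ i, n i) k).map f =
      blockGL R n fun i => GeneralLinearGroup.map f (g i) :=
  blockDiagonal'_map _ f f.map_zero

theorem exists_blockGL_eq {M : Matrix (Σ i, n i) (Σ i, n i) k}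
    (hM : ∀ p q, p.1 ≠ q.1 → M p q = 0) (hdet : IsUnit M.det) :
    ∃ g, (blockGL k n g : Matrix (Σ i, n i) (Σ i, n i) k) = M := by
  have hblock : blockDiagonal' M.blockDiag' = M := by
    ext ⟨i, u⟩ ⟨j, v⟩
    rcases eq_or_ne i j with rfl | h
    · rw [blockDiagonal'_apply_eq, blockDiag'_apply]
    · rw [blockDiagonal'_apply_ne _ _ _ h, hM _ _ h]
  have hunit (i : ι) : IsUnit (M.blockDiag' i) := by
    refine IsUnit.of_mul_eq_one (blockDiag' M⁻¹ i) ?_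
    rw [← blockDiag'_blockDiagonal'_mul, hblock, mul_nonsing_inv M hdet, blockDiag'_one]
    rfl
  exact ⟨fun i => (hunit i).unit, hblock⟩

theorem blockGL_mul_mul_inv (g : ∀ i, GL (n i) k) {i j : ι} (M : Matrix (n i) (n j) k) :
    (blockGL k n g).val * (blockIncl k n i * M * (blockIncl k n j)ᵀ) * (blockGL k n g)⁻¹.val =
      blockIncl k n i * ((g i).val * M * (g j)⁻¹.val) * (blockIncl k n j)ᵀ := by
  rw [← map_inv, coe_blockGL, coe_blockGL, ← Matrix.mul_assoc, ← Matrix.mul_assoc,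
    blockDiagonal'_mul_blockIncl, Matrix.mul_assoc _ _ (blockDiagonal' _),
    transpose_blockIncl_mul_blockDiagonal']
  simp only [Matrix.mul_assoc, Pi.inv_apply]

end BlockDiagonalGroup

namespace FinQuiver

open Matrix

variable {Q : FinQuiver} {K : Type} [Field K] {α : Q.I → ℕ}

theorem arrowMatrix_glAct (g : ∀ i, GL (Fin (α i)) K) (x : Q.Rep K α) (a : Q.DA) :
    arrowMatrix (Q.glAct K α g x) a =
      (blockGL K _ g).val * arrowMatrix x a * (blockGL K _ g)⁻¹.val :=
  (blockGL_mul_mul_inv g (x a)).symm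

theorem moment_glAct (g : Q.Gl K α) (x : Q.Rep K α) (i : Q.I) :
    Q.moment K α (Q.glAct K α g x) i = (g i : Matrix (Fin (α i)) (Fin (α i)) K) *
      Q.moment K α x i * ((g i)⁻¹ : GL (Fin (α i)) K) := by
  rw [moment, moment, Matrix.mul_sub, Matrix.sub_mul, Matrix.mul_sum, Matrix.sum_mul,
    Matrix.mul_sum, Matrix.sum_mul]
  congr 1
  · refine Finset.sum_congr rfl fun a _ => ?_
    by_cases h : Q.h a = i
    · subst h
      simp [glAct, Matrix.mul_assoc]
    · simp [h]
  · refine Finset.sum_congr rfl fun a _ => ?_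
    by_cases h : Q.t a = i
    · subst h
      simp [glAct, Matrix.mul_assoc]
    · simp [h]

theorem glAct_mem_momentFiber {l : Q.I → K} (g : Q.Gl K α) {x : Q.Rep K α}
    (hx : x ∈ Q.MomentFiber K l α) : Q.glAct K α g x ∈ Q.MomentFiber K l α := fun i => by
  rw [moment_glAct, hx i, Matrix.mul_smul, Matrix.smul_mul, Matrix.mul_one, Units.mul_inv]

theorem trace_prod_map_arrowMatrix_glAct (g : Q.Gl K α) (x : Q.Rep K α) (w : List Q.DA) :
    (w.map (arrowMatrix (Q.glAct K α g x))).prod.trace = (w.map (arrowMatrix x)).prod.trace := by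
  rw [funext (arrowMatrix_glAct g x)]
  exact trace_prod_map_conj _ _ w

end FinQuiver

section Evaluation

open Matrix

variable {X K J : Type*} [CommRing K] [Fintype J] [DecidableEq J]

theorem ext_of_mapMatrix_evalRingHom {M N : Matrix J J (X → K)}
    (h : ∀ x, (Pi.evalRingHom (fun _ => K) x).mapMatrix M =
      (Pi.evalRingHom (fun _ => K) x).mapMatrix N) : M = N :=
  Matrix.ext fun i j => funext fun x => congrFun (congrFun (h x) i) j

theorem trace_apply (M : Matrix J J (X → K)) (x : X) :
    M.trace x = ((Pi.evalRingHom (fun _ => K) x).mapMatrix M).trace :=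
  AddMonoidHom.map_trace (Pi.evalRingHom (fun _ => K) x).toAddMonoidHom M

theorem aeval_pi_apply {σ : Type*} (φ : σ → X → K) (x : X) (F : MvPolynomial σ K) :
    MvPolynomial.aeval φ F x = MvPolynomial.aeval (fun c => φ c x) F :=
  MvPolynomial.comp_aeval_apply φ (Pi.evalAlgHom K (fun _ => K) x) F

end Evaluation

namespace FinQuiver

open Matrix

variable {Q : FinQuiver} {K : Type} [Field K] {α : Q.I → ℕ} (W : Set (Q.Rep K α))

/-- The matrix of an arrow in the tautological family of representations parametrised by `W`. -/
def universalArrow (a : Q.DA) : Matrix (Σ i, Fin (α i)) (Σ i, Fin (α i)) (W → K) :=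
  of fun p q x => arrowMatrix x.1 a p q

variable {W}

theorem mapMatrix_universalArrow (x : W) (a : Q.DA) :
    (Pi.evalRingHom (fun _ => K) x).mapMatrix (universalArrow W a) = arrowMatrix x.1 a := rfl

theorem mapMatrix_colorProj (x : W) (i : Q.I) :
    (Pi.evalRingHom (fun _ => K) x).mapMatrix
      (colorProj (W → K) (Sigma.fst : (Σ i, Fin (α i)) → Q.I) i) = colorProj K Sigma.fst i :=
  map_colorProj _ _ _

theorem trace_prod_map_universalArrow_apply (w : List Q.DA) (x : W) :
    (w.map (universalArrow W)).prod.trace x = (w.map (arrowMatrix x.1)).prod.trace := by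
  rw [trace_apply, map_list_prod, List.map_map]
  rfl

theorem colorProj_mul_universalArrow (i : Q.I) (a : Q.DA) :
    colorProj (W → K) Sigma.fst i * universalArrow W a =
      if Q.dh a = i then universalArrow W a else 0 := by
  refine ext_of_mapMatrix_evalRingHom fun x => ?_
  rw [map_mul, mapMatrix_colorProj, mapMatrix_universalArrow, colorProj_mul_arrowMatrix]
  split_ifs
  · rfl
  · rw [map_zero]

theorem trace_colorProj_fst (i : Q.I) :
    (colorProj (W → K) (Sigma.fst : (Σ i, Fin (α i)) → Q.I) i).trace = (α i : W → K) := by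
  rw [← blockIncl_mul_transpose_blockIncl, trace_mul_comm,
    transpose_blockIncl_mul_blockIncl_self, trace_one, Fintype.card_fin]

theorem cycTr_eq_trace_universalArrow (p : Q.Cyc) :
    (fun x : W => Q.cycTr K α p x.1) =
      (List.ofFn fun k => universalArrow W (p.ar k)).prod.trace := by
  funext x
  have h := trace_prod_map_universalArrow_apply (List.ofFn p.ar) x
  rw [List.map_ofFn, List.map_ofFn] at h
  exact (cycTr_eq_trace x.1 p).trans h.symm

theorem trace_prod_map_universalArrow_mem {v0 : Q.I} {w : List Q.DA}
    (hw : ∃ a ∈ w, Q.dh a = v0 ∨ Q.dt a = v0) :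
    (w.map (universalArrow W)).prod.trace ∈ Algebra.adjoin K {f : W → K |
      ∃ p : Q.Cyc, Q.dh (p.ar 0) = v0 ∧ f = fun x => Q.cycTr K α p x.1} := by
  obtain ⟨n, f, rfl⟩ : ∃ (n : ℕ) (f : Fin (n + 1) → Q.DA), w = List.ofFn f := by
    cases w with
    | nil => simp at hw
    | cons a w => exact ⟨w.length, (a :: w).get, (List.ofFn_get _).symm⟩
  rw [List.map_ofFn]
  by_cases hcompat : ∀ k, Q.dt (f k) = Q.dh (f (k + 1))
  · obtain ⟨m, hm⟩ : ∃ m, Q.dh (f m) = v0 := by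
      obtain ⟨a, ha, h⟩ := hw
      obtain ⟨k, rfl⟩ := (List.mem_ofFn' _ _).1 ha
      exact h.elim (fun h => ⟨k, h⟩) fun h => ⟨k + 1, (hcompat k).symm.trans h⟩
    refine Algebra.subset_adjoin ⟨⟨n, fun k => f (k + m), fun k => ?_⟩, ?_, ?_⟩
    · rw [hcompat, add_right_comm]
    · simpa only [zero_add] using hm
    · rw [cycTr_eq_trace_universalArrow]
      exact (trace_prod_ofFn_add (universalArrow W ∘ f) m).symm
  · obtain ⟨k, hk⟩ := not_forall.1 hcompat
    convert Subalgebra.zero_mem _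
    funext x
    rw [← List.map_ofFn, trace_prod_map_universalArrow_apply, List.map_ofFn]
    exact trace_ofFn_arrowMatrix_eq_zero x.1 hk

theorem cycTr_mem_invRing (l : Q.I → K) (p : Q.Cyc) :
    (fun x : Q.MomentFiber K l α => Q.cycTr K α p x.1) ∈ Q.InvRing K l α := by
  refine ⟨⟨∑ c : ∀ i, Fin (α (Q.dh (p.ar i))), ∏ i, MvPolynomial.X
    (⟨p.ar i, c i, Fin.cast (congrArg α (p.compat i)).symm (c (i + 1))⟩ : Q.Coords α), ?_⟩, ?_⟩
  · funext x
    simp only [AlgHom.toRingHom_eq_coe, RingHom.coe_coe, map_sum, map_prod, Finset.sum_apply,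
      Finset.prod_apply]
    exact Finset.sum_congr rfl fun c _ => Finset.prod_congr rfl fun i _ =>
      congrFun (MvPolynomial.aeval_X _ _) x
  · rintro x y ⟨g, hg⟩
    have hword (z : Q.Rep K α) :
        Q.cycTr K α p z = ((List.ofFn p.ar).map (arrowMatrix z)).prod.trace := by
      rw [cycTr_eq_trace, List.map_ofFn, Function.comp_def]
    beta_reduce
    rw [hg, hword, hword, trace_prod_map_arrowMatrix_glAct]

/-- The position of a coordinate of the representation space in the tuple of arrow matrices. -/
def entryIndex (c : Q.Coords α) : Q.DA × (Σ i, Fin (α i)) × (Σ i, Fin (α i)) :=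
  (c.1, ⟨Q.dh c.1, c.2.1⟩, ⟨Q.dt c.1, c.2.2⟩)

theorem aeval_rename_entryIndex (x : Q.Rep K α) (F : MvPolynomial (Q.Coords α) K) :
    MvPolynomial.aeval (fun c : Q.DA × (Σ i, Fin (α i)) × (Σ i, Fin (α i)) =>
        arrowMatrix x c.1 c.2.1 c.2.2) (MvPolynomial.rename entryIndex F) =
      MvPolynomial.aeval (fun c : Q.Coords α => x c.1 c.2.1 c.2.2) F := by
  rw [MvPolynomial.aeval_rename]
  congr 2
  exact funext fun c => arrowMatrix_apply x c.1 c.2.1 c.2.2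

theorem exists_aeval_arrowMatrix {f : W → K} (hf : f ∈ Q.fnRing K α W) :
    ∃ F : MvPolynomial (Q.DA × (Σ i, Fin (α i)) × (Σ i, Fin (α i))) K,
      ∀ x, f x = MvPolynomial.aeval (fun c => arrowMatrix x.1 c.1 c.2.1 c.2.2) F := by
  obtain ⟨F, rfl⟩ := hf
  refine ⟨MvPolynomial.rename entryIndex F, fun x => ?_⟩
  rw [aeval_rename_entryIndex]
  exact aeval_pi_apply _ x F

theorem mapMatrix_blockGL_mul_universalArrow_mul [CharZero K] (g : ∀ i, GL (Fin (α i)) ℚ) (x : W)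
    (a : Q.DA) :
    (Pi.evalRingHom (fun _ => K) x).mapMatrix
        ((blockGL ℚ _ g).val.map (algebraMap ℚ (W → K)) * universalArrow W a *
          (blockGL ℚ _ g⁻¹).val.map (algebraMap ℚ (W → K))) =
      arrowMatrix (Q.glAct K α (fun i => GeneralLinearGroup.map (algebraMap ℚ K) (g i)) x.1) a := by
  have heval (h : ∀ i, GL (Fin (α i)) ℚ) : (Pi.evalRingHom (fun _ => K) x).mapMatrix
      ((blockGL ℚ _ h).val.map (algebraMap ℚ (W → K))) =
        (blockGL K _ fun i => GeneralLinearGroup.map (algebraMap ℚ K) (h i)).val := by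
    rw [← map_blockGL]
    rfl
  rw [map_mul, map_mul, heval, heval, mapMatrix_universalArrow]
  refine .trans ?_ (arrowMatrix_glAct _ x.1 a).symm
  congr 2

end FinQuiver

namespace FinQuiver

open Matrix

variable {Q : FinQuiver} {K : Type} [Field K] {δ : Q.I → ℕ} {l : Q.I → K}

theorem mem_of_mem_invRing [CharZero K] {S : Subalgebra K (Q.MomentFiber K l δ → K)}
    (hS : ∀ w ≠ [], (w.map (universalArrow (Q.MomentFiber K l δ))).prod.trace ∈ S)
    {f : Q.MomentFiber K l δ → K} (hf : f ∈ Q.InvRing K l δ) : f ∈ S := by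
  obtain ⟨F, hF⟩ := exists_aeval_arrowMatrix hf.1
  have hfF : MvPolynomial.aeval (fun c : Q.DA × (Σ i, Fin (δ i)) × (Σ i, Fin (δ i)) =>
      universalArrow (Q.MomentFiber K l δ) c.1 c.2.1 c.2.2) F = f :=
    funext fun x => (aeval_pi_apply _ x F).trans (hF x).symm
  rw [← hfF]
  refine aeval_mem_of_conj_invariant (k := ℚ) (color := Sigma.fst) (V := Q.I)
    ((Units.coeHom _).comp (blockGL ℚ fun i => Fin (δ i)))
    (fun g p q => blockDiagonal'_apply_ne (fun i => (g i).val) p.2 q.2)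
    (fun M hM hdet => exists_blockGL_eq hM hdet.isUnit)
    (L := wordSemigroup (universalArrow (Q.MomentFiber K l δ))) ?_ (fun a i => ?_) fun g => ?_
  · rintro M (rfl | ⟨w, hw, rfl⟩)
    · rw [trace_zero]
      exact S.zero_mem
    · exact hS w hw
  · rw [colorProj_mul_universalArrow]
    split_ifs
    · exact Or.inr ⟨[a], List.cons_ne_nil _ _, (List.prod_singleton).symm⟩
    · exact Or.inl rfl
  · rw [hfF]
    funext x
    let gK : Q.Gl K δ := fun i => GeneralLinearGroup.map (algebraMap ℚ K) (g i)
    have hgx : f x = f ⟨Q.glAct K δ gK x.1, glAct_mem_momentFiber gK x.2⟩ := hf.2 _ _ ⟨gK, rfl⟩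
    rw [hgx, hF, aeval_pi_apply]
    refine congrArg (fun φ => MvPolynomial.aeval φ F) (funext fun c => ?_)
    exact congrFun (congrFun (mapMatrix_blockGL_mul_universalArrow_mul g x c.1) c.2.1) c.2.2

variable (l) in
/-- The tautological family of representations over a fibre of the moment map. -/
def preprojectiveMatrices (hpos : ∀ i, 0 < δ i) (hδ : ∀ i, Q.bil (Q.toZ δ) (Q.ev i) = 0) :
    PreprojectiveMatrices K (Q.MomentFiber K l δ → K) Q.I Q.DA (Σ i, Fin (δ i)) where
  head := Q.dh
  rev := Sum.swap
  sign := Q.arrowSign K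
  weight := l
  dim := δ
  mat := universalArrow (Q.MomentFiber K l δ)
  idem := colorProj _ Sigma.fst
  rev_rev := Sum.swap_swap
  rev_ne := by rintro (a | a) <;> simp
  sign_mul_self := by rintro (a | a) <;> simp [arrowSign]
  mat_mul_mat a b hab := by
    rw [dh_swap] at hab
    refine ext_of_mapMatrix_evalRingHom fun x => ?_
    rw [map_mul, map_zero, mapMatrix_universalArrow, mapMatrix_universalArrow,
      arrowMatrix_mul_arrowMatrix _ hab]
  sum_mat_mul_mat_rev i := by
    refine ext_of_mapMatrix_evalRingHom fun x => ?_
    have hsmul (c : K) (M : Matrix (Σ i, Fin (δ i)) (Σ i, Fin (δ i)) (Q.MomentFiber K l δ → K)) :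
        (Pi.evalRingHom (fun _ => K) x).mapMatrix (c • M) =
          c • (Pi.evalRingHom (fun _ => K) x).mapMatrix M := rfl
    simp only [map_sum, hsmul, map_mul, mapMatrix_universalArrow, mapMatrix_colorProj]
    exact sum_arrowSign_smul_of_mem x.2 i
  idem_mul_mat := colorProj_mul_universalArrow
  trace_mat a ha := by
    rw [dh_swap] at ha
    funext x
    rw [trace_apply, mapMatrix_universalArrow, trace_arrowMatrix _ ha, Pi.zero_apply]
  dim_pos := hpos
  sum_dim_tail i := by
    simp only [dh_swap]
    exact sum_dt_eq_two_mul (hδ i)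

end FinQuiver

theorem stmt13_general (Q : FinQuiver) (K : Type) [Field K] [CharZero K] (l : Q.I → K)
    (δ : Q.I → ℕ) (v0 : Q.I) (hQ : Q.Connected) (hδ : ∀ i, Q.bil (Q.toZ δ) (Q.ev i) = 0)
    (hext : δ v0 = 1) :
    Q.InvRing K l δ = Algebra.adjoin K
      {f : ↥(Q.MomentFiber K l δ) → K |
        ∃ p : Q.Cyc, Q.dh (p.ar 0) = v0 ∧ f = fun x => Q.cycTr K δ p x.1} := by
  have hpos := hQ.pos_of_bil_eq_zero hδ (hext.trans_ne one_ne_zero)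
  refine le_antisymm (fun f => FinQuiver.mem_of_mem_invRing fun w hw => ?_)
    (Algebra.adjoin_le ?_)
  · refine (FinQuiver.preprojectiveMatrices l hpos hδ).trace_prod_mem
      (S := Subalgebra.toSubmodule (Algebra.adjoin K _)) hext
      (fun T hT h => hQ.mem_of_forall_dh hT (fun a ha => ?_) v0) (fun i => ?_)
      (fun w hw => ?_) hw
    · rw [← FinQuiver.dh_swap]
      exact h a ha
    · exact FinQuiver.trace_colorProj_fst (W := Q.MomentFiber K l δ) i ▸
        natCast_mem (Algebra.adjoin K _) (δ i)
    · obtain ⟨a, ha, h⟩ := hw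
      exact FinQuiver.trace_prod_map_universalArrow_mem
        ⟨a, ha, h.imp_right (Q.dh_swap a).symm.trans⟩
  · rintro f ⟨p, -, rfl⟩
    exact FinQuiver.cycTr_mem_invRing l p

/-- for an extended Dynkin quiver with minimal positive imaginary
root `δ`, extending vertex `0` (i.e. `δ_0 = 1`) and `λ·δ = 0`, the invariant ring
`K[μ_δ^{-1}(λ)]^{G(δ)}` is generated as a `K`-algebra by the trace functions of
oriented cycles in `Q̄` which start and end at the extending vertex. -/
theorem stmt13 (Q : FinQuiver) (K : Type) [Field K] [CharZero K] [IsAlgClosed K]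
    (l : Q.I → K) (δ : Q.I → ℕ) (v0 : Q.I)
    (hQ : Q.IsExtDynkin) (hδ : Q.IsMinImag (Q.toZ δ)) (hext : δ v0 = 1)
    (hl : Q.pair K l (Q.toZ δ) = 0) :
    Q.InvRing K l δ = Algebra.adjoin K
      {f : ↥(Q.MomentFiber K l δ) → K |
        ∃ p : Q.Cyc, Q.dh (p.ar 0) = v0 ∧ f = fun x => Q.cycTr K δ p x.1} :=
  stmt13_general Q K l δ v0 hQ.1 hδ.2.2.1 hext

end
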